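/- Upper Gaussian bound (Theorem 1.1, upper part): For every real μ ≥ 1 there exists a constant C > 0 such that for every choice of continuous ν, a : ℝ → ℝ with 1/μ ≤ ν(x) ≤ μ and 1/μ ≤ a(x) ≤ μ for all x, every real W ≥ 0, every corrector T and every fundamental solution P of the canonical equation, one has P(t,x,y) ≤ (C/t^{1/2})·exp(−|T(x) − T(y) − W t|²/(C t)) for all t > 0 and all x, y ∈ ℝ. -/

import Mathlib

open MeasureTheory Filter

/-- Two-sided ellipticity bounds `1/μ ≤ f ≤ μ`. -/
def Elliptic (μ : ℝ) (f : ℝ → ℝ) : Prop := ∀ x : ℝ, 1 / μ ≤ f x ∧ f x ≤ μ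

/-- A classical solution of the canonical equation
`ν(x)∂ₜp − ∂ₓ(ν(x)a(x)∂ₓp) + W∂ₓp = 0` for every time `t ∈ s` and every `x ∈ ℝ`. -/
def IsCanonicalSolOn (ν a : ℝ → ℝ) (W : ℝ) (u : ℝ → ℝ → ℝ) (s : Set ℝ) : Prop :=
  ∃ ut ux q : ℝ → ℝ → ℝ, ∀ t ∈ s, ∀ x : ℝ,
    HasDerivAt (fun τ => u τ x) (ut t x) t ∧
    HasDerivAt (fun ξ => u t ξ) (ux t x) x ∧
    HasDerivAt (fun ξ => ν ξ * a ξ * ux t ξ) (q t x) x ∧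
    ν x * ut t x - q t x + W * ux t x = 0

/-- A corrector: `T(0) = 0`, `−(aνT')' + WT' = Wν` and `1/μ⁵ ≤ T' ≤ μ⁵`. -/
def IsCorrector (μ : ℝ) (ν a : ℝ → ℝ) (W : ℝ) (T : ℝ → ℝ) : Prop :=
  T 0 = 0 ∧ ∃ T' : ℝ → ℝ,
    (∀ x, HasDerivAt T (T' x) x) ∧
    (∀ x, HasDerivAt (fun y => a y * ν y * T' y) (W * T' x - W * ν x) x) ∧
    (∀ x, 1 / μ ^ 5 ≤ T' x ∧ T' x ≤ μ ^ 5)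

/-- An adjoint corrector: `T̃(0) = 0`, `(aνT̃')' + WT̃' = Wν` and `1/μ⁵ ≤ T̃' ≤ μ⁵`. -/
def IsAdjointCorrector (μ : ℝ) (ν a : ℝ → ℝ) (W : ℝ) (T : ℝ → ℝ) : Prop :=
  T 0 = 0 ∧ ∃ T' : ℝ → ℝ,
    (∀ x, HasDerivAt T (T' x) x) ∧
    (∀ x, HasDerivAt (fun y => a y * ν y * T' y) (W * ν x - W * T' x) x) ∧
    (∀ x, 1 / μ ^ 5 ≤ T' x ∧ T' x ≤ μ ^ 5)

/-- A fundamental solution of the canonical equation. -/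
def IsFundSol (ν a : ℝ → ℝ) (W : ℝ) (P : ℝ → ℝ → ℝ → ℝ) : Prop :=
  (∀ y : ℝ, IsCanonicalSolOn ν a W (fun t x => P t x y) (Set.Ioi 0)) ∧
  (∀ y : ℝ, ∀ t : ℝ, 0 < t → ∀ x : ℝ, 0 ≤ P t x y) ∧
  (∀ y : ℝ, ∀ t : ℝ, 0 < t → ∫ x : ℝ, ν x * P t x y = 1) ∧
  (∀ y : ℝ, ∀ φ : ℝ → ℝ, Continuous φ → (∃ B : ℝ, ∀ x, |φ x| ≤ B) →
    Tendsto (fun t => ∫ x : ℝ, ν x * P t x y * φ x)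
      (nhdsWithin 0 (Set.Ioi 0)) (nhds (φ y))) ∧
  (∀ s t : ℝ, 0 < s → 0 < t → ∀ x y : ℝ,
    P (t + s) x y = ∫ z : ℝ, ν z * P t x z * P s z y)

section helpers
open MeasureTheory Filter Set Topology


theorem deriv_nonneg_of_left_max {f : ℝ → ℝ} {f' t0 : ℝ} (h : HasDerivAt f f' t0)
    (hm : ∀ᶠ t in 𝓝[<] t0, f t ≤ f t0) : 0 ≤ f' := by
  have h1 := (hasDerivAt_iff_tendsto_slope.1 h).mono_left
    (show 𝓝[<] t0 ≤ 𝓝[≠] t0 from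
      nhdsWithin_mono t0 (fun x (hx : x < t0) => (ne_of_lt hx : x ≠ t0)))
  refine ge_of_tendsto h1 ?_
  filter_upwards [hm, self_mem_nhdsWithin] with t ht ht'
  rw [slope_def_field]
  exact div_nonneg_of_nonpos (by linarith) (by have : t < t0 := ht'; linarith)

theorem deriv_nonpos_of_right_max {f : ℝ → ℝ} {f' t0 : ℝ} (h : HasDerivAt f f' t0)
    (hm : ∀ᶠ t in 𝓝[>] t0, f t ≤ f t0) : f' ≤ 0 := by
  have h1 := (hasDerivAt_iff_tendsto_slope.1 h).mono_left
    (show 𝓝[>] t0 ≤ 𝓝[≠] t0 from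
      nhdsWithin_mono t0 (fun x (hx : t0 < x) => (ne_of_gt hx : x ≠ t0)))
  refine le_of_tendsto h1 ?_
  filter_upwards [hm, self_mem_nhdsWithin] with t ht ht'
  rw [slope_def_field]
  exact div_nonpos_of_nonpos_of_nonneg (by linarith) (by have : t0 < t := ht'; linarith)

/-- If `g' = r * k` near `x0` with `r > 0`, `k x0 = 0` and `g` has a right max at `x0`,
then `k' x0 ≤ 0`. -/
theorem second_test_right {g r k : ℝ → ℝ} {x0 k' : ℝ}
    (hd : ∀ᶠ x in 𝓝 x0, HasDerivAt g (r x * k x) x)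
    (hr : ∀ᶠ x in 𝓝 x0, 0 < r x) (hk0 : k x0 = 0) (hk : HasDerivAt k k' x0)
    (hm : ∀ᶠ x in 𝓝[>] x0, g x ≤ g x0) : k' ≤ 0 := by
  by_contra hneg
  push Not at hneg
  have h1 := (hasDerivAt_iff_tendsto_slope.1 hk).mono_left
    (show 𝓝[>] x0 ≤ 𝓝[≠] x0 from
      nhdsWithin_mono x0 (fun x (hx : x0 < x) => (ne_of_gt hx : x ≠ x0)))
  have h2 : ∀ᶠ x in 𝓝[>] x0, 0 < k x := by
    filter_upwards [h1.eventually (lt_mem_nhds hneg), self_mem_nhdsWithin] with x hx hx'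
    rw [slope_def_field, hk0, sub_zero] at hx
    have hx'' : x0 < x := hx'
    exact (div_pos_iff_of_pos_right (by linarith)).1 hx
  have h3 : ∀ᶠ x in 𝓝[>] x0, 0 < k x ∧ 0 < r x ∧ HasDerivAt g (r x * k x) x ∧ g x ≤ g x0 := by
    filter_upwards [h2, nhdsWithin_le_nhds hr, nhdsWithin_le_nhds hd, hm] with x a b c d
    exact ⟨a, b, c, d⟩
  obtain ⟨u, hu, hsub⟩ := (mem_nhdsGT_iff_exists_Ioo_subset).1 h3
  have hu' : x0 < u := hu
  set y := (x0 + u) / 2 with hy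
  have hy1 : x0 < y := by rw [hy]; linarith
  have hy2 : y < u := by rw [hy]; linarith
  have hmono : StrictMonoOn g (Icc x0 y) := by
    apply strictMonoOn_of_deriv_pos (convex_Icc _ _)
    · intro x hx
      rcases eq_or_lt_of_le hx.1 with h | h
      · exact (h ▸ hd.self_of_nhds.continuousAt).continuousWithinAt
      · exact (hsub ⟨h, lt_of_le_of_lt hx.2 hy2⟩).2.2.1.continuousAt.continuousWithinAt
    · intro x hx
      rw [interior_Icc] at hx
      have := hsub ⟨hx.1, lt_trans hx.2 hy2⟩
      rw [this.2.2.1.deriv]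
      exact mul_pos this.2.1 this.1
  have := hmono ⟨le_rfl, hy1.le⟩ ⟨hy1.le, le_rfl⟩ hy1
  have := (hsub ⟨hy1, hy2⟩).2.2.2
  linarith

theorem second_test {g g' : ℝ → ℝ} {x0 k' : ℝ}
    (hd : ∀ᶠ x in 𝓝 x0, HasDerivAt g (g' x) x) (hk : HasDerivAt g' k' x0)
    (hm : ∀ᶠ x in 𝓝 x0, g x ≤ g x0) : g' x0 = 0 ∧ k' ≤ 0 := by
  have h0 : g' x0 = 0 := by
    apply le_antisymm
    · exact deriv_nonpos_of_right_max hd.self_of_nhds (nhdsWithin_le_nhds hm)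
    · exact deriv_nonneg_of_left_max hd.self_of_nhds (nhdsWithin_le_nhds hm)
  refine ⟨h0, second_test_right (g := g) (r := fun _ => 1) (k := g') (x0 := x0) ?_ ?_ h0 hk
    (nhdsWithin_le_nhds hm)⟩
  · simpa using hd
  · simp

/-- Weak maximum principle for subsolutions on a box. -/
theorem wmp {z zt zx zxx : ℝ → ℝ → ℝ} {A : ℝ → ℝ} {W t0 t1 c d : ℝ}
    (hcont : ContinuousOn (fun p : ℝ × ℝ => z p.1 p.2) (Icc t0 t1 ×ˢ Icc c d))
    (hpde : ∀ t ∈ Ioc t0 t1, ∀ x ∈ Ioo c d, HasDerivAt (fun τ => z τ x) (zt t x) t ∧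
      HasDerivAt (z t) (zx t x) x ∧ HasDerivAt (zx t) (zxx t x) x ∧
      zt t x ≤ A x * zxx t x - W * zx t x ∧ 0 ≤ A x)
    (h0 : ∀ x ∈ Icc c d, z t0 x ≤ 0) (hc : ∀ t ∈ Icc t0 t1, z t c ≤ 0)
    (hd : ∀ t ∈ Icc t0 t1, z t d ≤ 0) :
    ∀ t ∈ Icc t0 t1, ∀ x ∈ Icc c d, z t x ≤ 0 := by
  intro t ht x hx
  have key : ∀ ε > 0, z t x - ε * (t - t0) ≤ 0 := by
    intro ε hε
    have hc2 : ContinuousOn (fun p : ℝ × ℝ => z p.1 p.2 - ε * (p.1 - t0))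
        (Icc t0 t1 ×ˢ Icc c d) := hcont.sub (by fun_prop)
    obtain ⟨⟨s, y⟩, hsy, hmax⟩ := (isCompact_Icc.prod isCompact_Icc).exists_isMaxOn
      ⟨(t, x), ⟨ht, hx⟩⟩ hc2
    obtain ⟨hs, hy⟩ := hsy
    simp only at hs hy
    have hle : z t x - ε * (t - t0) ≤ z s y - ε * (s - t0) := hmax (show (t,x) ∈ _ from ⟨ht, hx⟩)
    refine hle.trans ?_
    have hnn : 0 ≤ ε * (s - t0) := mul_nonneg hε.le (by linarith [hs.1])
    rcases eq_or_lt_of_le hs.1 with h | hs1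
    · have := h0 y hy; rw [h] at this; linarith
    rcases eq_or_lt_of_le hy.1 with h | hy1
    · have := hc s hs; rw [h] at this; linarith
    rcases eq_or_lt_of_le hy.2 with h | hy2
    · have := hd s hs; rw [← h] at this; linarith
    exfalso
    obtain ⟨e1, e2, e3, e4, e5⟩ := hpde s ⟨hs1, hs.2⟩ y ⟨hy1, hy2⟩
    have a1 : 0 ≤ zt s y - ε := by
      have hh : HasDerivAt (fun τ => z τ y - ε * (τ - t0)) (zt s y - ε * 1) s :=
        e1.sub (((hasDerivAt_id s).sub_const t0).const_mul ε)
      rw [mul_one] at hh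
      apply deriv_nonneg_of_left_max hh
      have : Ioo t0 s ∈ 𝓝[<] s := Ioo_mem_nhdsLT hs1
      filter_upwards [this] with τ hτ
      exact hmax (show (τ, y) ∈ _ from ⟨⟨hτ.1.le, hτ.2.le.trans hs.2⟩, hy⟩)
    have a2 : zx s y = 0 ∧ zxx s y ≤ 0 := by
      apply second_test (g := z s) (g' := zx s) _ e3
      · filter_upwards [Ioo_mem_nhds hy1 hy2] with w hw
        have := hmax (show (s, w) ∈ _ from ⟨hs, ⟨hw.1.le, hw.2.le⟩⟩)
        simp only [mem_ofPred_eq] at this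
        linarith
      · filter_upwards [Ioo_mem_nhds hy1 hy2] with w hw
        exact (hpde s ⟨hs1, hs.2⟩ w hw).2.1
    rw [a2.1] at e4
    have := mul_nonneg e5 (neg_nonneg.2 a2.2)
    linarith
  by_contra hpos
  push Not at hpos
  have h1 : 0 ≤ t - t0 := by linarith [ht.1]
  have h2 := key (z t x / (2 * (t - t0 + 1))) (by positivity)
  have h3 : z t x / (2 * (t - t0 + 1)) * (t - t0) ≤ z t x / 2 := by
    rw [div_mul_eq_mul_div, div_le_div_iff₀ (by positivity) (by norm_num)]
    nlinarith
  linarith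

set_option maxHeartbeats 1000000 in
/-- Kruzhkov's doubling-of-variables Lipschitz estimate. -/
theorem kruzhkov {f ft fx fxx : ℝ → ℝ → ℝ} {A : ℝ → ℝ} {W T δ R x0 M lam : ℝ}
    (hδ : 0 < δ) (hR : 0 < R) (hM : 0 ≤ M) (hlam : 0 < lam)
    (hcont : ContinuousOn (fun p : ℝ × ℝ => f p.1 p.2)
      {p | T - δ ≤ p.1 ∧ p.1 ≤ T ∧ |p.2 - (x0 + W * (p.1 - T))| ≤ R})
    (hpde : ∀ t x, T - δ < t → t ≤ T → |x - (x0 + W * (t - T))| < R →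
      HasDerivAt (fun τ => f τ x) (ft t x) t ∧ HasDerivAt (f t) (fx t x) x ∧
      HasDerivAt (fx t) (fxx t x) x ∧ ft t x = A x * fxx t x - W * fx t x ∧ lam ≤ A x)
    (hosc : ∀ t x y, T - δ ≤ t → t ≤ T → |x - (x0 + W * (t - T))| ≤ R →
      |y - (x0 + W * (t - T))| ≤ R → f t x - f t y ≤ M) :
    ∀ x y, y ≤ x → |x - x0| ≤ R → |y - x0| ≤ R →
      f T x - f T y ≤ (4 * R * (2 * (M / R ^ 2) + M / δ / (2 * lam))) * (x - y)
        + M / R ^ 2 * ((x - x0) ^ 2 + (y - x0) ^ 2) := by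
  intro x y hyx hx hy
  set K2 := M / R ^ 2 with hK2
  set K3 := M / δ with hK3
  have hK2' : 0 ≤ K2 := by positivity
  have hK3' : 0 ≤ K3 := by positivity
  have hK2R : K2 * R ^ 2 = M := by rw [hK2]; field_simp
  have hK3δ : K3 * δ = M := by rw [hK3]; field_simp
  have key : ∀ ε > 0, f T x - f T y ≤ (4 * R * (2 * K2 + K3 / (2 * lam) + ε)) * (x - y)
        + K2 * ((x - x0) ^ 2 + (y - x0) ^ 2) := by
    intro ε hε
    set K1 := 4 * R * (2 * K2 + K3 / (2 * lam) + ε) with hK1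
    have hK1' : 0 ≤ K1 := by positivity
    let c : ℝ → ℝ := fun t => x0 + W * (t - T)
    let φ : ℝ → ℝ := fun r => r - r ^ 2 / (8 * R)
    let B : ℝ → ℝ → ℝ → ℝ := fun t x y => K1 * φ (x - y) + K2 * ((x - c t) ^ 2 + (y - c t) ^ 2)
      + K3 * (T - t)
    let S : Set (ℝ × ℝ × ℝ) := {p | T - δ ≤ p.1 ∧ p.1 ≤ T ∧ |p.2.1 - c p.1| ≤ R ∧
      |p.2.2 - c p.1| ≤ R ∧ p.2.2 ≤ p.2.1}
    have hφ : ∀ r, 0 ≤ r → r ≤ 2 * R → 0 ≤ φ r := by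
      intro r h1 h2
      show 0 ≤ r - r ^ 2 / (8 * R)
      rw [sub_nonneg, div_le_iff₀ (by positivity)]
      nlinarith
    have hScl : IsClosed S := by
      have : S = {p | T - δ ≤ p.1} ∩ ({p | p.1 ≤ T} ∩ ({p | |p.2.1 - c p.1| ≤ R} ∩
        ({p | |p.2.2 - c p.1| ≤ R} ∩ {p | p.2.2 ≤ p.2.1}))) := by
        ext p; simp [S]
      rw [this]
      refine (isClosed_le (by fun_prop) (by fun_prop)).inter
        ((isClosed_le (by fun_prop) (by fun_prop)).inter
        ((isClosed_le (by fun_prop) (by fun_prop)).inter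
        ((isClosed_le (by fun_prop) (by fun_prop)).inter
        (isClosed_le (by fun_prop) (by fun_prop)))))
    have hSc : IsCompact S := by
      set L := |x0| + |W| * δ + R
      apply IsCompact.of_isClosed_subset
        (isCompact_Icc.prod (isCompact_Icc.prod isCompact_Icc) :
          IsCompact (Icc (T - δ) T ×ˢ (Icc (-L) L ×ˢ Icc (-L) L))) hScl
      rintro ⟨t, u, v⟩ ⟨h1, h2, h3, h4, h5⟩
      simp only at h1 h2 h3 h4 h5
      have hb : |c t| ≤ |x0| + |W| * δ := by
        refine (abs_add_le _ _).trans ?_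
        rw [abs_mul]
        have : |t - T| ≤ δ := by rw [abs_le]; constructor <;> linarith
        have := mul_le_mul_of_nonneg_left this (abs_nonneg W)
        linarith
      rw [abs_le] at hb h3 h4
      refine ⟨⟨h1, h2⟩, ⟨?_, ?_⟩, ⟨?_, ?_⟩⟩ <;> simp only [L] <;> linarith [hb.1, hb.2, h3.1, h3.2, h4.1, h4.2]
    have hwc : ContinuousOn (fun p : ℝ × ℝ × ℝ => f p.1 p.2.1 - f p.1 p.2.2 - B p.1 p.2.1 p.2.2) S := by
      refine ContinuousOn.sub (ContinuousOn.sub ?_ ?_) ?_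
      · exact hcont.comp (f := fun p : ℝ × ℝ × ℝ => (p.1, p.2.1)) (by fun_prop)
          (fun p hp => ⟨hp.1, hp.2.1, hp.2.2.1⟩)
      · exact hcont.comp (f := fun p : ℝ × ℝ × ℝ => (p.1, p.2.2)) (by fun_prop)
          (fun p hp => ⟨hp.1, hp.2.1, hp.2.2.2.1⟩)
      · apply Continuous.continuousOn
        simp only [B, φ, c]
        fun_prop
    have hmem : (T, x, y) ∈ S := by
      refine ⟨by simp only; linarith, le_rfl, ?_, ?_, hyx⟩ <;> simpa [c]
    obtain ⟨⟨t, u, v⟩, ⟨h1, h2, h3, h4, h5⟩, hmax⟩ := hSc.exists_isMaxOn ⟨_, hmem⟩ hwc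
    simp only at h1 h2 h3 h4 h5
    have hle : f T x - f T y - B T x y ≤ f t u - f t v - B t u v := hmax hmem
    have h3' := abs_le.1 h3
    have h4' := abs_le.1 h4
    have hφ1 : 0 ≤ K1 * φ (u - v) := mul_nonneg hK1' (hφ _ (by linarith) (by linarith))
    have hsq1 : 0 ≤ K2 * ((u - c t) ^ 2) := by positivity
    have hsq2 : 0 ≤ K2 * ((v - c t) ^ 2) := by positivity
    have ht3 : 0 ≤ K3 * (T - t) := mul_nonneg hK3' (by linarith)
    have hB : B t u v = K1 * φ (u - v) + (K2 * ((u - c t) ^ 2) + K2 * ((v - c t) ^ 2))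
      + K3 * (T - t) := by simp only [B]; ring
    have hfin : f t u - f t v - B t u v ≤ 0 := by
      have hosc' := hosc t u v h1 h2 h3 h4
      rcases eq_or_lt_of_le h1 with h | h1
      · have : K3 * (T - t) = M := by rw [← h]; rw [← hK3δ]; ring
        linarith
      rcases eq_or_lt_of_le h3 with h | h3
      · have : K2 * ((u - c t) ^ 2) = M := by rw [← sq_abs, h, hK2R]
        linarith
      rcases eq_or_lt_of_le h4 with h | h4
      · have : K2 * ((v - c t) ^ 2) = M := by rw [← sq_abs, h, hK2R]
        linarith
      rcases eq_or_lt_of_le h5 with h | h5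
      · subst h; linarith
      exfalso
      obtain ⟨p1, p2, p3, p4, p5⟩ := hpde t u h1 h2 h3
      obtain ⟨q1, q2, q3, q4, q5⟩ := hpde t v h1 h2 h4
      have hcd : HasDerivAt c W t := by
        have := ((((hasDerivAt_id t).sub_const T).const_mul W).const_add x0)
        simpa [c] using this
      have a1 : 0 ≤ ft t u - ft t v - (K2 * (2 * (u - c t) * (-W) + 2 * (v - c t) * (-W)) - K3) := by
        have hBt : HasDerivAt (fun τ => B τ u v)
            (K2 * (2 * (u - c t) * (-W) + 2 * (v - c t) * (-W)) - K3) t := by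
          have e1 : HasDerivAt (fun τ => (u - c τ) ^ 2) (2 * (u - c t) * (-W)) t := by
            refine ((hcd.const_sub u).pow 2).congr_deriv ?_
            simp
          have e2 : HasDerivAt (fun τ => (v - c τ) ^ 2) (2 * (v - c t) * (-W)) t := by
            refine ((hcd.const_sub v).pow 2).congr_deriv ?_
            simp
          have e3 : HasDerivAt (fun τ => K3 * (T - τ)) (-K3) t := by
            have := ((hasDerivAt_id t).const_sub T).const_mul K3
            simpa using this
          have := (((e1.add e2).const_mul K2).const_add (K1 * φ (u - v))).add e3
          rw [sub_eq_add_neg]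
          exact this
        apply deriv_nonneg_of_left_max ((p1.sub q1).sub hBt)
        have g1 : ∀ᶠ τ in 𝓝 t, |u - c τ| < R := by
          have : ContinuousAt (fun τ => |u - c τ|) t := (hcd.continuousAt.const_sub u).abs
          exact this.eventually (gt_mem_nhds h3)
        have g2 : ∀ᶠ τ in 𝓝 t, |v - c τ| < R := by
          have : ContinuousAt (fun τ => |v - c τ|) t := (hcd.continuousAt.const_sub v).abs
          exact this.eventually (gt_mem_nhds h4)
        filter_upwards [nhdsWithin_le_nhds g1, nhdsWithin_le_nhds g2, Ioo_mem_nhdsLT h1] with τ k1 k2 k3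
        exact hmax (show (τ, u, v) ∈ S from ⟨k3.1.le, k3.2.le.trans h2, k1.le, k2.le, h5.le⟩)
      have a2 : fx t u - (K1 * (1 - (u - v) / (4 * R)) + K2 * (2 * (u - c t))) = 0 ∧
          fxx t u - (K1 * (- 1 / (4 * R)) + K2 * 2) ≤ 0 := by
        apply second_test (g := fun w => f t w - f t v - B t w v)
          (g' := fun w => fx t w - (K1 * (1 - (w - v) / (4 * R)) + K2 * (2 * (w - c t))))
        · have : ∀ᶠ w in 𝓝 u, |w - c t| < R := by
            have : ContinuousAt (fun w => |w - c t|) u := by fun_prop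
            exact this.eventually (gt_mem_nhds h3)
          filter_upwards [this] with w hw
          have d1 := (hpde t w h1 h2 hw).2.1
          have d2 : HasDerivAt (fun w => φ (w - v)) (1 - (w - v) / (4 * R)) w := by
            have b := (hasDerivAt_id w).sub_const v
            have := b.sub ((b.pow 2).div_const (8 * R))
            refine this.congr_deriv ?_
            simp only [id]; field_simp; norm_num; ring
          have d3 : HasDerivAt (fun w => (w - c t) ^ 2 + (v - c t) ^ 2) (2 * (w - c t)) w := by
            have b := (((hasDerivAt_id w).sub_const (c t)).pow 2).add_const ((v - c t) ^ 2)
            simpa using b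
          have := (d1.sub_const (f t v)).sub (((d2.const_mul K1).add (d3.const_mul K2)).add_const (K3 * (T - t)))
          exact this
        · refine p3.sub ?_
          have b := ((hasDerivAt_id u).sub_const v).div_const (4 * R)
          have b2 := (b.const_sub 1).const_mul K1
          have b3 := (((hasDerivAt_id u).sub_const (c t)).const_mul 2).const_mul K2
          refine (b2.add b3).congr_deriv ?_
          ring
        · have : ∀ᶠ w in 𝓝 u, |w - c t| < R := by
            have : ContinuousAt (fun w => |w - c t|) u := by fun_prop
            exact this.eventually (gt_mem_nhds h3)
          filter_upwards [this, lt_mem_nhds h5] with w hw hw2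
          exact hmax (show (t, w, v) ∈ S from ⟨h1.le, h2, hw.le, h4.le, le_of_lt hw2⟩)
      have a3 : -fx t v - (-(K1 * (1 - (u - v) / (4 * R))) + K2 * (2 * (v - c t))) = 0 ∧
          -fxx t v - (K1 * (- 1 / (4 * R)) + K2 * 2) ≤ 0 := by
        apply second_test (g := fun w => f t u - f t w - B t u w)
          (g' := fun w => -fx t w - (-(K1 * (1 - (u - w) / (4 * R))) + K2 * (2 * (w - c t))))
        · have : ∀ᶠ w in 𝓝 v, |w - c t| < R := by
            have : ContinuousAt (fun w => |w - c t|) v := by fun_prop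
            exact this.eventually (gt_mem_nhds h4)
          filter_upwards [this] with w hw
          have d1 := (hpde t w h1 h2 hw).2.1
          have d2 : HasDerivAt (fun w => φ (u - w)) (-(1 - (u - w) / (4 * R))) w := by
            have b := (hasDerivAt_id w).const_sub u
            have := b.sub ((b.pow 2).div_const (8 * R))
            refine this.congr_deriv ?_
            simp only [id]; field_simp; norm_num; ring
          have d3 : HasDerivAt (fun w => (u - c t) ^ 2 + (w - c t) ^ 2) (2 * (w - c t)) w := by
            have b := (((hasDerivAt_id w).sub_const (c t)).pow 2).const_add ((u - c t) ^ 2)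
            simpa using b
          have := (d1.const_sub (f t u)).sub (((d2.const_mul K1).add (d3.const_mul K2)).add_const (K3 * (T - t)))
          refine this.congr_deriv ?_
          ring
        · refine q3.neg.sub ?_
          have b := ((hasDerivAt_id v).const_sub u).div_const (4 * R)
          have b2 := ((b.const_sub 1).const_mul K1).neg
          have b3 := (((hasDerivAt_id v).sub_const (c t)).const_mul 2).const_mul K2
          refine (b2.add b3).congr_deriv ?_
          ring
        · have : ∀ᶠ w in 𝓝 v, |w - c t| < R := by
            have : ContinuousAt (fun w => |w - c t|) v := by fun_prop
            exact this.eventually (gt_mem_nhds h4)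
          filter_upwards [this, gt_mem_nhds h5] with w hw hw2
          exact hmax (show (t, u, w) ∈ S from ⟨h1.le, h2, h3.le, hw.le, le_of_lt hw2⟩)
      have hK1R : K1 * (-1 / (4 * R)) = -(2 * K2 + K3 / (2 * lam) + ε) := by
        rw [hK1]; field_simp
      rw [hK1R] at a2 a3
      have hq : 0 ≤ K3 / (2 * lam) := by positivity
      have b1 : A u * fxx t u ≤ - (A u * (K3 / (2 * lam) + ε)) := by
        have hA : 0 ≤ A u := by linarith
        have h : fxx t u ≤ -(K3/(2*lam)+ε) := by linarith [a2.2]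
        have := mul_le_mul_of_nonneg_left h hA
        linarith
      have b2 : - (A v * fxx t v) ≤ - (A v * (K3 / (2 * lam) + ε)) := by
        have hA : 0 ≤ A v := by linarith
        have h : -fxx t v ≤ -(K3/(2*lam)+ε) := by linarith [a3.2]
        have := mul_le_mul_of_nonneg_left h hA
        linarith
      have b3 : lam * (K3 / (2 * lam) + ε) ≤ A u * (K3 / (2 * lam) + ε) :=
        mul_le_mul_of_nonneg_right p5 (by positivity)
      have b4 : lam * (K3 / (2 * lam) + ε) ≤ A v * (K3 / (2 * lam) + ε) :=
        mul_le_mul_of_nonneg_right q5 (by positivity)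
      have b5 : lam * (K3 / (2 * lam) + ε) = K3 / 2 + lam * ε := by field_simp
      have b6 : 0 < lam * ε := by positivity
      have b7 : fx t u - fx t v = K2 * (2 * (u - c t)) + K2 * (2 * (v - c t)) := by
        linarith [a2.1, a3.1]
      rw [p4, q4] at a1
      have b8 : W * fx t u - W * fx t v = W * (K2 * (2 * (u - c t)) + K2 * (2 * (v - c t))) := by
        rw [← b7]; ring
      have b9 : K2*(2*(u-c t)*(-W)+2*(v-c t)*(-W)) = -(W*(K2*(2*(u-c t))+K2*(2*(v-c t)))) := by ring
      linarith
    have hBT : B T x y ≤ K1 * (x - y) + K2 * ((x - x0) ^ 2 + (y - x0) ^ 2) := by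
      have e1 : φ (x - y) ≤ x - y := by
        show (x - y) - (x - y) ^ 2 / (8 * R) ≤ x - y
        have : 0 ≤ (x - y) ^ 2 / (8 * R) := by positivity
        linarith
      have e2 := mul_le_mul_of_nonneg_left e1 hK1'
      have e3 : B T x y = K1 * φ (x - y) + K2 * ((x - x0) ^ 2 + (y - x0) ^ 2) := by
        simp [B, c]
      linarith
    linarith
  have hlim : Tendsto (fun ε : ℝ => (4 * R * (2 * K2 + K3 / (2 * lam) + ε)) * (x - y)
        + K2 * ((x - x0) ^ 2 + (y - x0) ^ 2)) (𝓝[>] 0)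
      (𝓝 ((4 * R * (2 * K2 + K3 / (2 * lam) + 0)) * (x - y)
        + K2 * ((x - x0) ^ 2 + (y - x0) ^ 2))) := by
    apply Tendsto.mono_left _ nhdsWithin_le_nhds
    apply Continuous.tendsto
    fun_prop
  rw [add_zero] at hlim
  exact ge_of_tendsto hlim (by filter_upwards [self_mem_nhdsWithin] with ε hε using key ε hε)


/-- Green-type operator for `q'' = g` on `[c,d]`. -/
noncomputable def Kop (c d : ℝ) (g : ℝ → ℝ) (s : ℝ) : ℝ :=
  (∫ z in c..s, (s - z) * g z) - (s - c) / (d - c) * ∫ z in c..d, (d - z) * g z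

noncomputable def Kop' (c d : ℝ) (g : ℝ → ℝ) (s : ℝ) : ℝ :=
  (∫ z in c..s, g z) - 1 / (d - c) * ∫ z in c..d, (d - z) * g z

theorem Kop_hasDerivAt {c d : ℝ} {g : ℝ → ℝ} (hg : Continuous g) (s : ℝ) :
    HasDerivAt (Kop c d g) (Kop' c d g s) s := by
  have e : ∀ s, (∫ z in c..s, (s - z) * g z) = s * (∫ z in c..s, g z) - ∫ z in c..s, z * g z := by
    intro s
    rw [← intervalIntegral.integral_const_mul, ← intervalIntegral.integral_sub]
    · congr 1; ext z; ring
    · exact (by fun_prop : Continuous fun z => s * g z).intervalIntegrable _ _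
    · exact (by fun_prop : Continuous fun z => z * g z).intervalIntegrable _ _
  have h1 : HasDerivAt (fun s => ∫ z in c..s, g z) (g s) s := hg.integral_hasStrictDerivAt c s |>.hasDerivAt
  have h2 : HasDerivAt (fun s => ∫ z in c..s, z * g z) (s * g s) s :=
    (by fun_prop : Continuous fun z => z * g z).integral_hasStrictDerivAt c s |>.hasDerivAt
  have h3 := ((((hasDerivAt_id s).mul h1).sub h2).sub
    ((((hasDerivAt_id s).sub_const c).div_const (d - c)).mul_const (∫ z in c..d, (d - z) * g z)))
  have h4 : Kop c d g = fun s => s * (∫ z in c..s, g z) - (∫ z in c..s, z * g z)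
      - (s - c) / (d - c) * ∫ z in c..d, (d - z) * g z := by
    ext s; rw [Kop, e]
  rw [h4]
  refine h3.congr_deriv ?_
  simp only [id, Kop']; ring

theorem Kop'_hasDerivAt {c d : ℝ} {g : ℝ → ℝ} (hg : Continuous g) (s : ℝ) :
    HasDerivAt (Kop' c d g) (g s) s :=
  (hg.integral_hasStrictDerivAt c s |>.hasDerivAt).sub_const _

theorem Kop_left {c d : ℝ} {g : ℝ → ℝ} : Kop c d g c = 0 := by simp [Kop]

theorem Kop_right {c d : ℝ} (h : c < d) {g : ℝ → ℝ} : Kop c d g d = 0 := by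
  have : d - c ≠ 0 := by linarith [h]
  simp [Kop, this]

theorem Kop_add {c d : ℝ} {g k : ℝ → ℝ} (hg : Continuous g) (hk : Continuous k) (b : ℝ) (s : ℝ) :
    Kop c d (fun z => g z + b * k z) s = Kop c d g s + b * Kop c d k s := by
  have e : ∀ u v r : ℝ, (∫ z in u..v, (r - z) * (g z + b * k z))
      = (∫ z in u..v, (r - z) * g z) + b * ∫ z in u..v, (r - z) * k z := by
    intro u v r
    rw [← intervalIntegral.integral_const_mul, ← intervalIntegral.integral_add]
    · congr 1; ext z; ring
    · exact (by fun_prop : Continuous fun z => (r - z) * g z).intervalIntegrable _ _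
    · exact (by fun_prop : Continuous fun z => b * ((r - z) * k z)).intervalIntegrable _ _
  simp only [Kop, e]; ring

theorem Kop_bound {c d B : ℝ} (h : c < d) {g : ℝ → ℝ}
    (hB : ∀ z ∈ Icc c d, |g z| ≤ B) {s : ℝ} (hs : s ∈ Icc c d) :
    |Kop c d g s| ≤ 2 * ((d - c) * B * (d - c)) := by
  have hB0 : 0 ≤ B := (abs_nonneg _).trans (hB s hs)
  have e : ∀ r ∈ Icc c d, |∫ z in c..r, (r - z) * g z| ≤ (d - c) * B * (d - c) := by
    intro r hr
    have := intervalIntegral.norm_integral_le_of_norm_le_const (a := c) (b := r)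
      (f := fun z => (r - z) * g z) (C := (d - c) * B) ?_
    · rw [Real.norm_eq_abs] at this
      refine this.trans (mul_le_mul_of_nonneg_left ?_ (by nlinarith))
      rw [abs_of_nonneg (by linarith [hr.1])]; linarith [hr.2]
    · intro z hz
      rw [uIoc_of_le hr.1] at hz
      rw [Real.norm_eq_abs, abs_mul]
      refine mul_le_mul ?_ (hB z ⟨hz.1.le, hz.2.trans hr.2⟩) (abs_nonneg _) (by linarith)
      rw [abs_of_nonneg (by linarith [hz.2])]; linarith [hz.1, hr.2]
  have h1 := e s hs
  have h2 := e d ⟨h.le, le_rfl⟩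
  have h3 : |(s - c) / (d - c)| ≤ 1 := by
    rw [abs_of_nonneg (div_nonneg (by linarith [hs.1]) (by linarith)), div_le_one (by linarith)]
    linarith [hs.2]
  rw [Kop]
  refine (abs_sub _ _).trans ?_
  rw [abs_mul]
  have := mul_le_mul h3 h2 (abs_nonneg _) zero_le_one
  linarith

theorem Kop_continuous {c d : ℝ} {g : ℝ → ℝ → ℝ} (hg : Continuous (fun p : ℝ × ℝ => g p.1 p.2))
    (s : ℝ) : Continuous (fun t => Kop c d (g t) s) := by
  unfold Kop
  refine Continuous.sub ?_ (Continuous.mul continuous_const ?_)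
  · apply intervalIntegral.continuous_parametric_intervalIntegral_of_continuous'
    show Continuous (fun p : ℝ × ℝ => (s - p.2) * g p.1 p.2)
    fun_prop
  · apply intervalIntegral.continuous_parametric_intervalIntegral_of_continuous'
    show Continuous (fun p : ℝ × ℝ => (d - p.2) * g p.1 p.2)
    fun_prop

/-- If `q` is touched from below by functions with second derivative `≥ g`, then `q` lies below
its chord plus `Kop g`. -/
theorem touch_chord {c d : ℝ} (hcd : c < d) {q g : ℝ → ℝ} (hq : Continuous q) (hg : Continuous g)
    (ht : ∀ s0 ∈ Ioo c d, ∃ w w' : ℝ → ℝ, ∃ k, (∀ᶠ s in 𝓝 s0, HasDerivAt w (w' s) s) ∧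
      HasDerivAt w' k s0 ∧ w s0 = q s0 ∧ (∀ᶠ s in 𝓝 s0, w s ≤ q s) ∧ g s0 ≤ k) :
    ∀ s ∈ Icc c d, q s ≤ (1 - (s - c) / (d - c)) * q c + (s - c) / (d - c) * q d + Kop c d g s := by
  have hd0 : d - c ≠ 0 := by linarith
  intro s hs
  have key : ∀ ε > 0, q s - ((1 - (s - c) / (d - c)) * q c + (s - c) / (d - c) * q d + Kop c d g s)
      + ε * ((s - c) * (s - d)) ≤ 0 := by
    intro ε hε
    let ψ : ℝ → ℝ := fun s => ((1 - (s - c) / (d - c)) * q c + (s - c) / (d - c) * q d + Kop c d g s)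
      - ε * ((s - c) * (s - d))
    let ψ' : ℝ → ℝ := fun s => (1 / (d - c)) * (q d - q c) + Kop' c d g s - ε * (2 * s - c - d)
    have hψ : ∀ s, HasDerivAt ψ (ψ' s) s := by
      intro s
      have a := ((hasDerivAt_id s).sub_const c).div_const (d - c)
      have b := ((((a.const_sub 1).mul_const (q c)).add (a.mul_const (q d))).add
        (Kop_hasDerivAt (c := c) (d := d) hg s)).sub
        ((((hasDerivAt_id s).sub_const c).mul ((hasDerivAt_id s).sub_const d)).const_mul ε)
      refine b.congr_deriv ?_
      simp only [id, ψ']; ring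
    have hψ' : ∀ s, HasDerivAt ψ' (g s - ε * 2) s := by
      intro s
      have b := ((Kop'_hasDerivAt (c := c) (d := d) hg s).const_add ((1 / (d - c)) * (q d - q c))).sub
        (((((hasDerivAt_id s).const_mul 2).sub_const c).sub_const d).const_mul ε)
      refine b.congr_deriv ?_
      ring
    have hψc : Continuous ψ := continuous_iff_continuousAt.2 fun s => (hψ s).continuousAt
    obtain ⟨s0, hs0, hmax⟩ := isCompact_Icc.exists_isMaxOn ⟨s, hs⟩ (hq.sub hψc).continuousOn
    have h1 : q s - ψ s ≤ q s0 - ψ s0 := hmax hs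
    have h2 : q s0 - ψ s0 ≤ 0 := by
      rcases eq_or_lt_of_le hs0.1 with h | h3
      · rw [← h]; simp [ψ, Kop_left]
      rcases eq_or_lt_of_le hs0.2 with h | h4
      · rw [h]; simp [ψ, Kop_right hcd, div_self hd0]
      exfalso
      obtain ⟨w, w', k, a1, a2, a3, a4, a5⟩ := ht s0 ⟨h3, h4⟩
      have := (second_test (g := fun s => w s - ψ s) (g' := fun s => w' s - ψ' s) (x0 := s0)
        (k' := k - (g s0 - ε * 2)) ?_ (a2.sub (hψ' s0)) ?_).2
      · linarith
      · filter_upwards [a1] with s h using h.sub (hψ s)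
      · filter_upwards [a4, Ioo_mem_nhds h3 h4] with s h h'
        have h5 : q s - ψ s ≤ q s0 - ψ s0 := hmax ⟨h'.1.le, h'.2.le⟩
        rw [a3]; linarith
    have : ψ s = ((1 - (s - c) / (d - c)) * q c + (s - c) / (d - c) * q d + Kop c d g s)
      - ε * ((s - c) * (s - d)) := rfl
    linarith
  have hlim : Tendsto (fun ε : ℝ => q s - ((1 - (s - c) / (d - c)) * q c + (s - c) / (d - c) * q d
      + Kop c d g s) + ε * ((s - c) * (s - d))) (𝓝[>] 0) (𝓝 (q s - ((1 - (s - c) / (d - c)) * q c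
      + (s - c) / (d - c) * q d + Kop c d g s) + 0 * ((s - c) * (s - d)))) := by
    apply Tendsto.mono_left _ nhdsWithin_le_nhds
    apply Continuous.tendsto
    fun_prop
  have := le_of_tendsto hlim (by filter_upwards [self_mem_nhdsWithin] with ε hε using key ε hε)
  linarith

/-- Pointwise classical solution of `v_ss = ρ v_t`. -/
def SPde (ρ : ℝ → ℝ) (v vt vs : ℝ → ℝ → ℝ) (I J : Set ℝ) : Prop :=
  ∀ t ∈ I, ∀ s ∈ J, HasDerivAt (fun τ => v τ s) (vt t s) t ∧ HasDerivAt (v t) (vs t s) s ∧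
    HasDerivAt (vs t) (ρ s * vt t s) s

theorem SPde.neg {ρ : ℝ → ℝ} {v vt vs : ℝ → ℝ → ℝ} {I J : Set ℝ} (h : SPde ρ v vt vs I J) :
    SPde ρ (fun t s => - v t s) (fun t s => - vt t s) (fun t s => - vs t s) I J := by
  intro t ht s hs
  obtain ⟨a, b, c⟩ := h t ht s hs
  refine ⟨a.neg, b.neg, ?_⟩
  rw [mul_neg]; exact c.neg

theorem SPde.mono {ρ : ℝ → ℝ} {v vt vs : ℝ → ℝ → ℝ} {I J I' J' : Set ℝ} (h : SPde ρ v vt vs I J)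
    (hI : I' ⊆ I) (hJ : J' ⊆ J) : SPde ρ v vt vs I' J' :=
  fun t ht s hs => h t (hI ht) s (hJ hs)

/-- Sup-convolution in time. -/
noncomputable def supc (α β lam : ℝ) (V : ℝ → ℝ → ℝ) (t s : ℝ) : ℝ :=
  sSup ((fun τ => V τ s - lam * (t - τ) ^ 2) '' Icc α β)

theorem supc_continuous {α β lam : ℝ} {V : ℝ → ℝ → ℝ}
    (hV : Continuous (fun p : ℝ × ℝ => V p.1 p.2)) :
    Continuous (fun p : ℝ × ℝ => supc α β lam V p.1 p.2) := by
  apply IsCompact.continuous_sSup (f := fun (p : ℝ × ℝ) τ => V τ p.2 - lam * (p.1 - τ) ^ 2)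
    isCompact_Icc
  show Continuous (fun q : (ℝ × ℝ) × ℝ => V q.2 q.1.2 - lam * (q.1.1 - q.2) ^ 2)
  have : Continuous (fun q : (ℝ × ℝ) × ℝ => V q.2 q.1.2) :=
    hV.comp (by fun_prop : Continuous (fun q : (ℝ × ℝ) × ℝ => (q.2, q.1.2)))
  fun_prop

theorem supc_spec {α β lam : ℝ} (h : α ≤ β) {V : ℝ → ℝ → ℝ}
    (hV : Continuous (fun p : ℝ × ℝ => V p.1 p.2)) (t s : ℝ) :
    (∀ τ ∈ Icc α β, V τ s - lam * (t - τ) ^ 2 ≤ supc α β lam V t s) ∧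
    ∃ τ ∈ Icc α β, supc α β lam V t s = V τ s - lam * (t - τ) ^ 2 := by
  have hc : ContinuousOn (fun τ => V τ s - lam * (t - τ) ^ 2) (Icc α β) := by
    have : Continuous (fun τ => V τ s) := hV.comp (by fun_prop : Continuous (fun τ => (τ, s)))
    fun_prop
  obtain ⟨τ, hτ, he⟩ := isCompact_Icc.exists_sSup_image_eq ⟨α, ⟨le_rfl, h⟩⟩ hc
  have hb := (isCompact_Icc.image_of_continuousOn hc).bddAbove
  exact ⟨fun τ' h' => le_csSup hb ⟨τ', h', rfl⟩, τ, hτ, he⟩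

theorem weak_le_supc {ρ : ℝ → ℝ} {V vt vs : ℝ → ℝ → ℝ} {α β c d t1 t2 lam : ℝ} (hcd : c < d)
    (hαβ : α ≤ β) (ht12 : t1 ≤ t2)
    (hV : Continuous (fun p : ℝ × ℝ => V p.1 p.2)) (hρ : Continuous ρ) (hρ0 : ∀ s, 0 < ρ s)
    (hp : SPde ρ V vt vs (Ioo α β) (Ioo c d))
    (hIntg : ∀ t ∈ Icc t1 t2, ∀ s ∈ Ioo c d, ∀ τ ∈ Icc α β,
      supc α β lam V t s = V τ s - lam * (t - τ) ^ 2 → τ ∈ Ioo α β)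
    {s : ℝ} (hs : s ∈ Icc c d) :
    ∫ t in t1..t2, (supc α β lam V t s - ((1 - (s - c) / (d - c)) * supc α β lam V t c
      + (s - c) / (d - c) * supc α β lam V t d)) ≤
    Kop c d (fun z => ρ z * supc α β lam V t2 z) s - Kop c d (fun z => ρ z * supc α β lam V t1 z) s := by
  set p := supc α β lam V with hpdef
  have hpc : Continuous (fun q : ℝ × ℝ => p q.1 q.2) := supc_continuous hV
  have hps : ∀ t, Continuous (p t) := fun t => hpc.comp (by fun_prop : Continuous (fun s => (t, s)))
  have hpt : ∀ s, Continuous (fun t => p t s) :=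
    fun s => hpc.comp (by fun_prop : Continuous (fun t => (t, s)))
  set E : ℝ → ℝ := fun t => p t s - ((1 - (s - c) / (d - c)) * p t c + (s - c) / (d - c) * p t d) with hE
  have hEc : Continuous E := by
    have := hpt s; have := hpt c; have := hpt d
    fun_prop
  set H : ℝ → ℝ := fun t => Kop c d (fun z => ρ z * p t z) s with hH
  have hHc : Continuous H := by
    apply Kop_continuous (g := fun t z => ρ z * p t z)
    fun_prop
  set C := Kop c d ρ s with hC
  have main : ∀ t ∈ Icc t1 t2, ∀ h > 0, E t ≤ (H t - H (t - h)) / h - lam * h * C := by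
    intro t ht h hh
    have hG : Continuous (fun z => (1 / h) * ((ρ z * p t z + (-1) * (ρ z * p (t - h) z)) + (- (lam * h ^ 2)) * ρ z)) := by
      have := hps t; have := hps (t - h); fun_prop
    have hb := touch_chord hcd (hps t) hG ?_ s hs
    · have e1 : Kop c d (fun z => (1 / h) * ((ρ z * p t z + (-1) * (ρ z * p (t - h) z)) + (- (lam * h ^ 2)) * ρ z)) s
          = (1 / h) * ((H t + (-1) * H (t - h)) + (-(lam * h ^ 2)) * C) := by
        have c1 : Continuous fun z => ρ z * p t z := hρ.mul (hps t)
        have c2 : Continuous fun z => ρ z * p (t - h) z := hρ.mul (hps _)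
        have c3 : Continuous fun z => ρ z * p t z + (-1) * (ρ z * p (t - h) z) := by fun_prop
        have c4 : Continuous fun z => (ρ z * p t z + (-1) * (ρ z * p (t - h) z))
            + (- (lam * h ^ 2)) * ρ z := by fun_prop
        have := Kop_add (c := c) (d := d) (continuous_const (y := (0:ℝ)) : Continuous fun _ : ℝ => (0:ℝ))
          c4 (1 / h) s
        simp only [zero_add] at this
        rw [this, Kop_add c3 hρ, Kop_add c1 c2]
        simp [Kop, hH, hC]
      rw [e1] at hb
      have e2 : (1 / h) * ((H t + (-1) * H (t - h)) + (-(lam * h ^ 2)) * C) =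
        (H t - H (t - h)) / h - lam * h * C := by field_simp; ring
      rw [e2] at hb
      simp only [hE]; linarith
    · intro s0 hs0
      obtain ⟨τ, hτ, he⟩ := (supc_spec (lam := lam) hαβ hV t s0).2
      have hτ' := hIntg t ht s0 hs0 τ hτ he
      obtain ⟨b1, b2, b3⟩ := hp τ hτ' s0 hs0
      have hvt : vt τ s0 = 2 * lam * (τ - t) := by
        have hd : HasDerivAt (fun r => V r s0 - lam * (t - r) ^ 2) (vt τ s0 - lam * (2 * (t - τ) * (-1))) τ := by
          refine b1.sub ?_
          refine ((((hasDerivAt_id τ).const_sub t).pow 2).const_mul lam).congr_deriv ?_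
          simp
        have hm : IsLocalMax (fun r => V r s0 - lam * (t - r) ^ 2) τ := by
          filter_upwards [Ioo_mem_nhds hτ'.1 hτ'.2] with r hr
          rw [← he]
          exact (supc_spec (lam := lam) hαβ hV t s0).1 r ⟨hr.1.le, hr.2.le⟩
        have := hm.hasDerivAt_eq_zero hd
        linarith
      refine ⟨fun z => V τ z - lam * (t - τ) ^ 2, vs τ, ρ s0 * vt τ s0, ?_, b3, he.symm, ?_, ?_⟩
      · filter_upwards [Ioo_mem_nhds hs0.1 hs0.2] with z hz
        exact (hp τ hτ' z hz).2.1.sub_const _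
      · exact Eventually.of_forall fun z => (supc_spec (lam := lam) hαβ hV t z).1 τ hτ
      · have h1 : V τ s0 - lam * (t - h - τ) ^ 2 ≤ p (t - h) s0 :=
          (supc_spec (lam := lam) hαβ hV (t - h) s0).1 τ hτ
        have h2 : p t s0 - p (t - h) s0 - lam * h ^ 2 ≤ h * vt τ s0 := by
          rw [hvt, hpdef, he]; rw [hpdef] at h1; linarith
        have h3 : (1 / h) * (p t s0 - p (t - h) s0 - lam * h ^ 2) ≤ vt τ s0 := by
          rw [one_div, inv_mul_le_iff₀ hh]; exact h2
        have := mul_le_mul_of_nonneg_left h3 (hρ0 s0).le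
        refine le_trans (le_of_eq ?_) this
        ring
  have fin := image_le_of_liminf_slope_right_le_deriv_boundary (f := fun τ => H (t2 - τ)) (a := 0)
    (b := t2 - t1) (B := fun τ => H t2 + ∫ r in t2..(t2 - τ), E r) (B' := fun τ => - E (t2 - τ))
    (by fun_prop) (by simp) ?_ ?_ ?_ (x := t2 - t1) ⟨by linarith, le_rfl⟩
  · simp only [sub_sub_cancel] at fin
    rw [intervalIntegral.integral_symm] at fin
    show ∫ t in t1..t2, E t ≤ H t2 - H t1
    linarith
  · apply Continuous.continuousOn
    refine continuous_const.add ?_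
    exact (intervalIntegral.continuous_primitive (fun a b => hEc.intervalIntegrable a b) t2).comp
      (by fun_prop : Continuous fun τ => t2 - τ)
  · intro x hx
    have h1 : HasDerivAt (fun u => ∫ r in t2..u, E r) (E (t2 - x)) (t2 - x) :=
      hEc.integral_hasStrictDerivAt t2 (t2 - x) |>.hasDerivAt
    have h2 := (h1.comp x ((hasDerivAt_id x).const_sub t2)).const_add (H t2)
    refine (h2.congr_deriv ?_).hasDerivWithinAt
    ring
  · intro x hx r hr
    apply Eventually.frequently
    have hlim : Tendsto (fun z => - E (t2 - x) - lam * (z - x) * C) (𝓝[>] x)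
        (𝓝 (- E (t2 - x) - lam * (x - x) * C)) := by
      apply Tendsto.mono_left _ nhdsWithin_le_nhds
      apply Continuous.tendsto
      fun_prop
    rw [sub_self, mul_zero, zero_mul, sub_zero] at hlim
    filter_upwards [hlim.eventually (gt_mem_nhds hr), self_mem_nhdsWithin] with z hz hz'
    have hzx : 0 < z - x := by have : x < z := hz'; linarith
    have := main (t2 - x) ⟨by linarith [hx.2], by linarith [hx.1]⟩ (z - x) hzx
    refine lt_of_le_of_lt ?_ hz
    rw [slope_def_field]
    have e3 : t2 - x - (z - x) = t2 - z := by ring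
    rw [e3] at this
    have e4 : (H (t2 - z) - H (t2 - x)) / (z - x) = - ((H (t2 - x) - H (t2 - z)) / (z - x)) := by ring
    rw [e4]; linarith


theorem le_of_eps {X Y K : ℝ} (h : ∀ ε > 0, X ≤ Y + ε * K) : X ≤ Y := by
  have hlim : Tendsto (fun ε : ℝ => Y + ε * K) (𝓝[>] 0) (𝓝 (Y + 0 * K)) := by
    apply Tendsto.mono_left _ nhdsWithin_le_nhds
    apply Continuous.tendsto
    fun_prop
  rw [zero_mul, add_zero] at hlim
  exact ge_of_tendsto hlim (by filter_upwards [self_mem_nhdsWithin] with ε hε using h ε hε)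

theorem unif_time {V : ℝ → ℝ → ℝ} (hV : Continuous (fun p : ℝ × ℝ => V p.1 p.2))
    (α β c d : ℝ) {ε : ℝ} (hε : 0 < ε) : ∃ δ > 0, ∀ t ∈ Icc α β, ∀ τ ∈ Icc α β, ∀ s ∈ Icc c d,
      |t - τ| ≤ δ → |V t s - V τ s| ≤ ε := by
  have h := (isCompact_Icc.prod isCompact_Icc : IsCompact (Icc α β ×ˢ Icc c d)).uniformContinuousOn_of_continuous
    hV.continuousOn
  obtain ⟨δ, hδ, h⟩ := Metric.uniformContinuousOn_iff_le.1 h ε hε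
  refine ⟨δ, hδ, fun t ht τ hτ s hs hd => ?_⟩
  have := h (t, s) ⟨ht, hs⟩ (τ, s) ⟨hτ, hs⟩ (by rw [Prod.dist_eq]; simp [Real.dist_eq, hd])
  simpa [Real.dist_eq] using this

theorem bdd_box {V : ℝ → ℝ → ℝ} (hV : Continuous (fun p : ℝ × ℝ => V p.1 p.2))
    (α β c d : ℝ) : ∃ M > 0, ∀ t ∈ Icc α β, ∀ s ∈ Icc c d, |V t s| ≤ M := by
  obtain ⟨M, hM⟩ := (isCompact_Icc.prod isCompact_Icc : IsCompact (Icc α β ×ˢ Icc c d)).exists_bound_of_continuousOn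
    hV.continuousOn
  refine ⟨max M 1, by positivity, fun t ht s hs => (hM (t, s) ⟨ht, hs⟩).trans (le_max_left _ _)⟩

theorem weak_le {ρ : ℝ → ℝ} {V vt vs : ℝ → ℝ → ℝ} {α β c d t1 t2 : ℝ} (hcd : c < d)
    (h1 : α < t1) (ht12 : t1 ≤ t2) (h2 : t2 < β)
    (hV : Continuous (fun p : ℝ × ℝ => V p.1 p.2)) (hρ : Continuous ρ) (hρ0 : ∀ s, 0 < ρ s)
    (hp : SPde ρ V vt vs (Ioo α β) (Ioo c d)) {s : ℝ} (hs : s ∈ Icc c d) :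
    ∫ t in t1..t2, (V t s - ((1 - (s - c) / (d - c)) * V t c + (s - c) / (d - c) * V t d)) ≤
    Kop c d (fun z => ρ z * V t2 z) s - Kop c d (fun z => ρ z * V t1 z) s := by
  obtain ⟨M, hM0, hM⟩ := bdd_box hV α β c d
  obtain ⟨N, hN⟩ := (isCompact_Icc : IsCompact (Icc c d)).exists_bound_of_continuousOn hρ.continuousOn
  have hN0 : 0 ≤ N := (norm_nonneg _).trans (hN s hs)
  have hαβ : α ≤ β := by linarith
  have hVs : ∀ t, Continuous (V t) := fun t => hV.comp (by fun_prop : Continuous (fun s => (t, s)))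
  have hVt : ∀ s, Continuous (fun t => V t s) :=
    fun s => hV.comp (by fun_prop : Continuous (fun t => (t, s)))
  have hθ0 : 0 ≤ (s - c) / (d - c) := div_nonneg (by linarith [hs.1]) (by linarith)
  have hθ1 : (s - c) / (d - c) ≤ 1 := by rw [div_le_one (by linarith)]; linarith [hs.2]
  apply le_of_eps (K := (t2 - t1) + 2 * (2 * ((d - c) * N * (d - c))))
  intro ε hε
  obtain ⟨δ, hδ, hu⟩ := unif_time hV α β c d hε
  set m := min δ (min (t1 - α) (β - t2)) with hm
  have hm0 : 0 < m := by
    rw [hm]; refine lt_min hδ (lt_min (by linarith) (by linarith))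
  have hm1 : m ≤ δ := min_le_left _ _
  have hm2 : m ≤ t1 - α := (min_le_right _ _).trans (min_le_left _ _)
  have hm3 : m ≤ β - t2 := (min_le_right _ _).trans (min_le_right _ _)
  set lam := (2 * M + 1) / m ^ 2 with hlam
  have hlam0 : 0 < lam := by positivity
  have hlm : lam * m ^ 2 = 2 * M + 1 := by rw [hlam]; field_simp
  set p := supc α β lam V with hpd
  have hmx : ∀ t ∈ Icc t1 t2, ∀ s ∈ Icc c d, ∀ τ ∈ Icc α β, p t s = V τ s - lam * (t - τ) ^ 2 →
      |t - τ| < m := by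
    intro t ht s hs τ hτ he
    have ht' : t ∈ Icc α β := ⟨by linarith [ht.1], by linarith [ht.2]⟩
    have a := (supc_spec (lam := lam) hαβ hV t s).1 t ht'
    rw [sub_self] at a
    have b1 := abs_le.1 (hM t ht' s hs)
    have b2 := abs_le.1 (hM τ hτ s hs)
    have b3 : lam * (t - τ) ^ 2 < lam * m ^ 2 := by
      rw [hlm]; rw [← hpd] at a; nlinarith
    have b4 := lt_of_mul_lt_mul_left b3 hlam0.le
    exact abs_lt_of_sq_lt_sq b4 hm0.le
  have hpV : ∀ t ∈ Icc t1 t2, ∀ s ∈ Icc c d, V t s ≤ p t s ∧ p t s ≤ V t s + ε := by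
    intro t ht s hs
    have ht' : t ∈ Icc α β := ⟨by linarith [ht.1], by linarith [ht.2]⟩
    have a := (supc_spec (lam := lam) hαβ hV t s).1 t ht'
    rw [sub_self] at a
    refine ⟨by simpa using a, ?_⟩
    obtain ⟨τ, hτ, he⟩ := (supc_spec (lam := lam) hαβ hV t s).2
    have b := hmx t ht s hs τ hτ he
    have b2 := abs_le.1 (hu t ht' τ hτ s hs (b.le.trans hm1))
    rw [hpd, he]
    have : 0 ≤ lam * (t - τ) ^ 2 := by positivity
    linarith [b2.1]
  have main := weak_le_supc (lam := lam) hcd hαβ ht12 hV hρ hρ0 hp (fun t ht s hs τ hτ he => by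
    have b := abs_lt.1 (hmx t ht s ⟨hs.1.le, hs.2.le⟩ τ hτ he)
    exact ⟨by linarith [b.2, ht.1], by linarith [b.1, ht.2]⟩) hs
  rw [← hpd] at main
  have hpc : Continuous (fun q : ℝ × ℝ => p q.1 q.2) := supc_continuous hV
  have hps : ∀ t, Continuous (p t) := fun t => hpc.comp (by fun_prop : Continuous (fun s => (t, s)))
  have hpt : ∀ s, Continuous (fun t => p t s) :=
    fun s => hpc.comp (by fun_prop : Continuous (fun t => (t, s)))
  have g1 : (∫ t in t1..t2, (V t s - ((1 - (s - c) / (d - c)) * V t c + (s - c) / (d - c) * V t d)))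
      - (t2 - t1) * ε ≤ ∫ t in t1..t2, (p t s - ((1 - (s - c) / (d - c)) * p t c + (s - c) / (d - c) * p t d)) := by
    have hcst : ∫ _t in t1..t2, ε = (t2 - t1) * ε := by simp
    have i1 : Continuous (fun t => V t s - ((1 - (s - c) / (d - c)) * V t c + (s - c) / (d - c) * V t d)) := by
      have := hVt s; have := hVt c; have := hVt d; fun_prop
    have i2 : Continuous (fun t => p t s - ((1 - (s - c) / (d - c)) * p t c + (s - c) / (d - c) * p t d)) := by
      have := hpt s; have := hpt c; have := hpt d; fun_prop
    rw [← hcst, ← intervalIntegral.integral_sub (i1.intervalIntegrable _ _) (by simp)]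
    apply intervalIntegral.integral_mono_on ht12
      ((i1.sub continuous_const).intervalIntegrable _ _) (i2.intervalIntegrable _ _)
    intro t ht
    have a1 := hpV t ht s hs
    have a2 := hpV t ht c ⟨le_rfl, hcd.le⟩
    have a3 := hpV t ht d ⟨hcd.le, le_rfl⟩
    have a4 := mul_le_mul_of_nonneg_left a2.2 (by linarith : 0 ≤ 1 - (s - c) / (d - c))
    have a5 := mul_le_mul_of_nonneg_left a3.2 hθ0
    simp only [Pi.sub_apply]
    linarith [a1.1]
  have g2 : ∀ t ∈ Icc t1 t2, |Kop c d (fun z => ρ z * p t z) s - Kop c d (fun z => ρ z * V t z) s|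
      ≤ ε * (2 * ((d - c) * N * (d - c))) := by
    intro t ht
    have c1 : Continuous fun z => ρ z * p t z := hρ.mul (hps t)
    have c2 : Continuous fun z => ρ z * V t z := hρ.mul (hVs t)
    have e := Kop_add (c := c) (d := d) c1 c2 (-1) s
    have b := Kop_bound hcd (g := fun z => ρ z * p t z + (-1) * (ρ z * V t z)) (B := N * ε) ?_ hs
    · rw [e] at b
      have : Kop c d (fun z => ρ z * p t z) s - Kop c d (fun z => ρ z * V t z) s =
        Kop c d (fun z => ρ z * p t z) s + -1 * Kop c d (fun z => ρ z * V t z) s := by ring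
      rw [this]; refine b.trans (le_of_eq ?_); ring
    · intro z hz
      have : ρ z * p t z + (-1) * (ρ z * V t z) = ρ z * (p t z - V t z) := by ring
      rw [this, abs_mul]
      have a := hpV t ht z hz
      refine mul_le_mul (hN z hz) ?_ (abs_nonneg _) hN0
      rw [abs_of_nonneg (by linarith [a.1])]; linarith [a.2]
  have k1 := abs_le.1 (g2 t1 ⟨le_rfl, ht12⟩)
  have k2 := abs_le.1 (g2 t2 ⟨ht12, le_rfl⟩)
  linarith [k1.1, k2.2]

theorem weak_eq {ρ : ℝ → ℝ} {V vt vs : ℝ → ℝ → ℝ} {α β c d t1 t2 : ℝ} (hcd : c < d)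
    (h1 : α < t1) (ht12 : t1 ≤ t2) (h2 : t2 < β)
    (hV : Continuous (fun p : ℝ × ℝ => V p.1 p.2)) (hρ : Continuous ρ) (hρ0 : ∀ s, 0 < ρ s)
    (hp : SPde ρ V vt vs (Ioo α β) (Ioo c d)) {s : ℝ} (hs : s ∈ Icc c d) :
    ∫ t in t1..t2, (V t s - ((1 - (s - c) / (d - c)) * V t c + (s - c) / (d - c) * V t d)) =
    Kop c d (fun z => ρ z * V t2 z) s - Kop c d (fun z => ρ z * V t1 z) s := by
  apply le_antisymm (weak_le hcd h1 ht12 h2 hV hρ hρ0 hp hs)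
  have := weak_le hcd h1 ht12 h2 (V := fun t s => - V t s) hV.neg hρ hρ0 hp.neg hs
  have e : ∀ t, Kop c d (fun z => ρ z * - V t z) s = - Kop c d (fun z => ρ z * V t z) s := by
    intro t
    simp only [Kop, mul_neg, intervalIntegral.integral_neg]; ring
  have e2 : (∫ t in t1..t2, (- V t s - ((1 - (s - c) / (d - c)) * (- V t c) + (s - c) / (d - c) * (- V t d))))
    = - ∫ t in t1..t2, (V t s - ((1 - (s - c) / (d - c)) * V t c + (s - c) / (d - c) * V t d)) := by
    rw [← intervalIntegral.integral_neg]; congr 1; ext t; ring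
  rw [e, e, e2] at this
  linarith

theorem weak_V {ρ : ℝ → ℝ} {V vt vs : ℝ → ℝ → ℝ} {α β c d t1 t2 : ℝ} (hcd : c < d)
    (h1 : α < t1) (ht12 : t1 ≤ t2) (h2 : t2 < β)
    (hV : Continuous (fun p : ℝ × ℝ => V p.1 p.2)) (hρ : Continuous ρ) (hρ0 : ∀ s, 0 < ρ s)
    (hp : SPde ρ V vt vs (Ioo α β) (Ioo c d)) :
    ∃ U' : ℝ → ℝ, ∀ s ∈ Ioo c d, HasDerivAt (fun z => ∫ t in t1..t2, V t z) (U' s) s ∧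
      HasDerivAt U' (ρ s * (V t2 s - V t1 s)) s := by
  have hVs : ∀ t, Continuous (V t) := fun t => hV.comp (by fun_prop : Continuous (fun s => (t, s)))
  have hVt : ∀ s, Continuous (fun t => V t s) :=
    fun s => hV.comp (by fun_prop : Continuous (fun t => (t, s)))
  set U : ℝ → ℝ := fun z => ∫ t in t1..t2, V t z with hU
  have c1 : Continuous fun z => ρ z * V t2 z := hρ.mul (hVs t2)
  have c2 : Continuous fun z => ρ z * V t1 z := hρ.mul (hVs t1)
  have e : ∀ s ∈ Icc c d, U s = (1 - (s - c) / (d - c)) * U c + (s - c) / (d - c) * U d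
      + (Kop c d (fun z => ρ z * V t2 z) s - Kop c d (fun z => ρ z * V t1 z) s) := by
    intro s hs
    have := weak_eq hcd h1 ht12 h2 hV hρ hρ0 hp hs
    rw [← this, intervalIntegral.integral_sub, intervalIntegral.integral_add,
      intervalIntegral.integral_const_mul, intervalIntegral.integral_const_mul]
    · simp only [hU]; ring
    · exact ((hVt c).const_mul _).intervalIntegrable _ _
    · exact ((hVt d).const_mul _).intervalIntegrable _ _
    · exact (hVt s).intervalIntegrable _ _
    · exact (((hVt c).const_mul _).add ((hVt d).const_mul _)).intervalIntegrable _ _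
  refine ⟨fun s => 1 / (d - c) * (U d - U c) + (Kop' c d (fun z => ρ z * V t2 z) s
    - Kop' c d (fun z => ρ z * V t1 z) s), fun s hs => ⟨?_, ?_⟩⟩
  · have a := ((hasDerivAt_id s).sub_const c).div_const (d - c)
    have b := (((a.const_sub 1).mul_const (U c)).add (a.mul_const (U d))).add
      ((Kop_hasDerivAt (c := c) (d := d) c1 s).sub (Kop_hasDerivAt (c := c) (d := d) c2 s))
    refine (b.congr_deriv ?_).congr_of_eventuallyEq ?_
    · ring
    · filter_upwards [Ioo_mem_nhds hs.1 hs.2] with z hz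
      exact e z ⟨hz.1.le, hz.2.le⟩
  · have b := ((Kop'_hasDerivAt (c := c) (d := d) c1 s).sub
      (Kop'_hasDerivAt (c := c) (d := d) c2 s)).const_add (1 / (d - c) * (U d - U c))
    refine b.congr_deriv ?_
    ring

theorem clamp_ext {v : ℝ → ℝ → ℝ} {α β c d : ℝ} (h1 : α ≤ β) (h2 : c ≤ d)
    (hv : ContinuousOn (fun p : ℝ × ℝ => v p.1 p.2) (Icc α β ×ˢ Icc c d)) :
    ∃ V : ℝ → ℝ → ℝ, Continuous (fun p : ℝ × ℝ => V p.1 p.2) ∧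
      ∀ t ∈ Icc α β, ∀ s ∈ Icc c d, V t s = v t s := by
  refine ⟨fun t s => v (max α (min t β)) (max c (min s d)), ?_, ?_⟩
  · refine hv.comp_continuous (f := fun p : ℝ × ℝ => (max α (min p.1 β), max c (min p.2 d)))
      (by fun_prop) ?_
    intro p
    exact ⟨⟨le_max_left _ _, max_le h1 (min_le_right _ _)⟩, ⟨le_max_left _ _, max_le h2 (min_le_right _ _)⟩⟩
  · intro t ht s hs
    simp only [min_eq_left ht.2, min_eq_left hs.2, max_eq_right ht.1, max_eq_right hs.1]

theorem SPde.congr {ρ : ℝ → ℝ} {v V vt vs : ℝ → ℝ → ℝ} {α β c d : ℝ}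
    (h : SPde ρ v vt vs (Ioo α β) (Ioo c d))
    (he : ∀ t ∈ Icc α β, ∀ s ∈ Icc c d, V t s = v t s) : SPde ρ V vt vs (Ioo α β) (Ioo c d) := by
  intro t ht s hs
  obtain ⟨a, b, e⟩ := h t ht s hs
  refine ⟨a.congr_of_eventuallyEq ?_, b.congr_of_eventuallyEq ?_, e⟩
  · filter_upwards [Ioo_mem_nhds ht.1 ht.2] with τ hτ
    exact he τ ⟨hτ.1.le, hτ.2.le⟩ s ⟨hs.1.le, hs.2.le⟩
  · filter_upwards [Ioo_mem_nhds hs.1 hs.2] with z hz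
    exact he t ⟨ht.1.le, ht.2.le⟩ z ⟨hz.1.le, hz.2.le⟩

theorem weak_v {ρ : ℝ → ℝ} {v vt vs : ℝ → ℝ → ℝ} {α β c d t1 t2 : ℝ}
    (h1 : α < t1) (ht12 : t1 ≤ t2) (h2 : t2 < β)
    (hv : ContinuousOn (fun p : ℝ × ℝ => v p.1 p.2) (Ioo α β ×ˢ Ioo c d))
    (hρ : Continuous ρ) (hρ0 : ∀ s, 0 < ρ s)
    (hp : SPde ρ v vt vs (Ioo α β) (Ioo c d)) :
    ∃ U' : ℝ → ℝ, ∀ s ∈ Ioo c d, HasDerivAt (fun z => ∫ t in t1..t2, v t z) (U' s) s ∧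
      HasDerivAt U' (ρ s * (v t2 s - v t1 s)) s := by
  set U : ℝ → ℝ := fun z => ∫ t in t1..t2, v t z with hU
  have loc : ∀ s ∈ Ioo c d, ∃ U' : ℝ → ℝ, (∀ᶠ z in 𝓝 s, HasDerivAt U (U' z) z) ∧
      HasDerivAt U' (ρ s * (v t2 s - v t1 s)) s := by
    intro s hs
    obtain ⟨c', hc1, hc2⟩ := exists_between hs.1
    obtain ⟨d', hd1, hd2⟩ := exists_between hs.2
    obtain ⟨α', ha1, ha2⟩ := exists_between h1
    obtain ⟨β', hb1, hb2⟩ := exists_between h2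
    have sI : Icc α' β' ⊆ Ioo α β := fun x hx => ⟨by linarith [hx.1], by linarith [hx.2]⟩
    have sJ : Icc c' d' ⊆ Ioo c d := fun x hx => ⟨by linarith [hx.1], by linarith [hx.2]⟩
    obtain ⟨V, hV, hVe⟩ := clamp_ext (by linarith) (by linarith) (hv.mono (prod_mono sI sJ))
    have hp' := (hp.mono (Ioo_subset_Icc_self.trans sI) (Ioo_subset_Icc_self.trans sJ)).congr hVe
    obtain ⟨U', hU'⟩ := weak_V (by linarith) ha2 ht12 hb1 hV hρ hρ0 hp'
    have e : ∀ z ∈ Ioo c' d', (∫ t in t1..t2, V t z) = U z := by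
      intro z hz
      apply intervalIntegral.integral_congr
      intro t ht
      rw [uIcc_of_le ht12] at ht
      exact hVe t ⟨by linarith [ht.1], by linarith [ht.2]⟩ z ⟨hz.1.le, hz.2.le⟩
    refine ⟨U', ?_, ?_⟩
    · filter_upwards [Ioo_mem_nhds hc2 hd1] with z hz
      refine (hU' z hz).1.congr_of_eventuallyEq ?_
      filter_upwards [Ioo_mem_nhds hz.1 hz.2] with y hy using (e y hy).symm
    · have := (hU' s ⟨hc2, hd1⟩).2
      rwa [hVe t2 ⟨by linarith, by linarith⟩ s ⟨hc2.le, hd1.le⟩,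
        hVe t1 ⟨by linarith, by linarith⟩ s ⟨hc2.le, hd1.le⟩] at this
  refine ⟨deriv U, fun s hs => ?_⟩
  obtain ⟨U', a, b⟩ := loc s hs
  refine ⟨a.self_of_nhds.differentiableAt.hasDerivAt, b.congr_of_eventuallyEq ?_⟩
  filter_upwards [a] with z hz using hz.deriv


theorem param_deriv {G Gt : ℝ → ℝ → ℝ} (hG : ∀ t, Continuous (G t))
    (hGt : Continuous (fun p : ℝ × ℝ => Gt p.1 p.2))
    (hd : ∀ t z, HasDerivAt (fun τ => G τ z) (Gt t z) t) (a b t : ℝ) :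
    HasDerivAt (fun τ => ∫ z in a..b, G τ z) (∫ z in a..b, Gt t z) t := by
  obtain ⟨M, hM0, hM⟩ := bdd_box hGt (t - 1) (t + 1) (min a b) (max a b)
  have hc : Continuous (Gt t) := hGt.comp (by fun_prop : Continuous (fun s => (t, s)))
  refine (intervalIntegral.hasDerivAt_integral_of_dominated_loc_of_deriv_le
    (F := G) (F' := Gt) (bound := fun _ => M) (s := Icc (t - 1) (t + 1))
    (Icc_mem_nhds (by linarith) (by linarith)) ?_ ?_ ?_ ?_ ?_ ?_).2
  · exact Eventually.of_forall fun x => (hG x).aestronglyMeasurable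
  · exact (hG t).intervalIntegrable _ _
  · exact hc.aestronglyMeasurable
  · refine Eventually.of_forall fun z hz x hx => hM x hx z ?_
    exact ⟨hz.1.le, hz.2⟩
  · simp
  · exact Eventually.of_forall fun z _ x _ => hd x z

theorem gap0 {ρ : ℝ → ℝ} {V vt vs : ℝ → ℝ → ℝ} {α β c d c' d' r t1 k m0 : ℝ}
    (hV : Continuous (fun p : ℝ × ℝ => V p.1 p.2)) (hρ : Continuous ρ) (hρ0 : ∀ s, 0 < ρ s)
    (hp : SPde ρ V vt vs (Ioo α β) (Ioo c d)) (hc : c < c') (hcd : c' ≤ d') (hd : d' < d)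
    (hr : α < r) (hrt : r ≤ t1) (ht1 : t1 < β)
    (hl : ∀ t ∈ Icc r β, V t c' < k ∧ V t d' < k) (hm0 : 0 ≤ m0)
    (hini : ∀ s1 s2, c' ≤ s1 → s1 ≤ s2 → s2 ≤ d' → ∫ z in s1..s2, ρ z * (V r z - k) ≤ m0) :
    ∀ s1 s2, c' ≤ s1 → s1 ≤ s2 → s2 ≤ d' → ∫ z in s1..s2, ρ z * (V t1 z - k) ≤ m0 := by
  intro x1 x2 hx1 hx12 hx2
  have hVs : ∀ t, Continuous (V t) := fun t => hV.comp (by fun_prop : Continuous (fun s => (t, s)))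
  have hVt : ∀ s, Continuous (fun t => V t s) :=
    fun s => hV.comp (by fun_prop : Continuous (fun t => (t, s)))
  set D := ∫ z in c'..d', ρ z with hD
  have hDle : ∀ s1 s2, c' ≤ s1 → s1 ≤ s2 → s2 ≤ d' → ∫ z in s1..s2, ρ z ≤ D := by
    intro s1 s2 a b e
    exact intervalIntegral.integral_mono_interval a b e
      (Eventually.of_forall fun z => (hρ0 z).le) (hρ.intervalIntegrable _ _)
  have hD0 : ∀ s1 s2, s1 ≤ s2 → 0 ≤ ∫ z in s1..s2, ρ z := by
    intro s1 s2 a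
    exact intervalIntegral.integral_nonneg a fun z _ => (hρ0 z).le
  apply le_of_eps (K := 2 * D + (t1 - r))
  intro η hη
  obtain ⟨δ, hδ, hu⟩ := unif_time hV r β c' d' hη
  set h := min δ ((β - t1) / 2) with hh
  have hh0 : 0 < h := lt_min hδ (by linarith)
  have hh1 : h ≤ δ := min_le_left _ _
  have hh2 : t1 + h < β := by have := min_le_right δ ((β - t1) / 2); linarith
  set U : ℝ → ℝ → ℝ := fun t z => ∫ σ in (0:ℝ)..h, V (t + σ) z with hU
  have hUc : Continuous (fun p : ℝ × ℝ => U p.1 p.2) := by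
    apply intervalIntegral.continuous_parametric_intervalIntegral_of_continuous'
      (f := fun (p : ℝ × ℝ) σ => V (p.1 + σ) p.2)
    show Continuous (fun q : (ℝ × ℝ) × ℝ => V (q.1.1 + q.2) q.1.2)
    exact hV.comp (by fun_prop : Continuous (fun q : (ℝ × ℝ) × ℝ => (q.1.1 + q.2, q.1.2)))
  have hUs : ∀ t, Continuous (U t) := fun t => hUc.comp (by fun_prop : Continuous (fun s => (t, s)))
  have hUe : ∀ t z, U t z = ∫ τ in t..(t + h), V τ z := by
    intro t z
    simp only [hU]
    rw [intervalIntegral.integral_comp_add_left (fun τ => V τ z) t, add_zero]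
  have hUt : ∀ t z, HasDerivAt (fun τ => U τ z) (V (t + h) z - V t z) t := by
    intro t z
    have e : (fun τ => U τ z) = fun τ => (∫ x in (0:ℝ)..(τ + h), V x z) - ∫ x in (0:ℝ)..τ, V x z := by
      ext τ
      rw [hUe, intervalIntegral.integral_interval_sub_left] <;> exact (hVt z).intervalIntegrable _ _
    rw [e]
    refine HasDerivAt.sub ?_ ((hVt z).integral_hasStrictDerivAt 0 t).hasDerivAt
    have a := ((hVt z).integral_hasStrictDerivAt 0 (t + h)).hasDerivAt
    have b := a.comp t ((hasDerivAt_id t).add_const h)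
    exact b.congr_deriv (by simp)
  -- bounds of U against h * V
  have hUV : ∀ t ∈ Icc r t1, ∀ z ∈ Icc c' d', |U t z - h * V t z| ≤ h * η := by
    intro t ht z hz
    have e : U t z - h * V t z = ∫ σ in (0:ℝ)..h, (V (t + σ) z - V t z) := by
      rw [intervalIntegral.integral_sub]
      · simp [hU]
      · exact ((hVt z).comp (by fun_prop : Continuous fun σ => t + σ)).intervalIntegrable _ _
      · simp
    rw [e]
    have := intervalIntegral.norm_integral_le_of_norm_le_const (a := 0) (b := h)
      (f := fun σ => V (t + σ) z - V t z) (C := η) ?_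
    · rw [Real.norm_eq_abs, sub_zero, abs_of_pos hh0] at this; linarith
    · intro σ hσ
      rw [uIoc_of_le hh0.le] at hσ
      apply hu _ _ _ _ z hz
      · rw [add_sub_cancel_left, abs_of_pos hσ.1]; linarith [hσ.2]
      · exact ⟨by linarith [ht.1, hσ.1], by linarith [ht.2, hσ.2]⟩
      · exact ⟨ht.1, by linarith [ht.2]⟩
  let Ψ : ℝ → ℝ → ℝ := fun t s => ∫ z in c'..s, ρ z * (U t z - h * k)
  have hΨc : Continuous (fun p : ℝ × ℝ => Ψ p.1 p.2) := by
    apply intervalIntegral.continuous_parametric_intervalIntegral_of_continuous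
      (f := fun (p : ℝ × ℝ) z => ρ z * (U p.1 z - h * k)) (s := fun p : ℝ × ℝ => p.2) _ continuous_snd
    show Continuous (fun q : (ℝ × ℝ) × ℝ => ρ q.2 * (U q.1.1 q.2 - h * k))
    have := hUc.comp (by fun_prop : Continuous (fun q : (ℝ × ℝ) × ℝ => (q.1.1, q.2)))
    have h' : Continuous (fun q : (ℝ × ℝ) × ℝ => U q.1.1 q.2) := this
    fun_prop
  have hIntg : ∀ t, Continuous (fun z => ρ z * (U t z - h * k)) := by
    intro t; have := hUs t; fun_prop
  have hΨs : ∀ t s, HasDerivAt (Ψ t) (ρ s * (U t s - h * k)) s :=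
    fun t s => ((hIntg t).integral_hasStrictDerivAt c' s).hasDerivAt
  have hΨt : ∀ t s, HasDerivAt (fun τ => Ψ τ s) (∫ z in c'..s, ρ z * (V (t + h) z - V t z)) t := by
    intro t s
    apply param_deriv (G := fun t z => ρ z * (U t z - h * k)) (Gt := fun t z => ρ z * (V (t + h) z - V t z))
      hIntg
    · have := hV.comp (by fun_prop : Continuous (fun q : ℝ × ℝ => (q.1 + h, q.2)))
      have h' : Continuous (fun q : ℝ × ℝ => V (q.1 + h) q.2) := this
      fun_prop
    · intro t z
      exact ((hUt t z).sub_const _).const_mul _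
  have hΨd : ∀ t s1 s2, Ψ t s2 - Ψ t s1 = ∫ z in s1..s2, ρ z * (U t z - h * k) := by
    intro t s1 s2
    rw [intervalIntegral.integral_interval_sub_left] <;> exact (hIntg t).intervalIntegrable _ _
  have hcmp : ∀ t ∈ Icc r t1, ∀ s1 s2, c' ≤ s1 → s1 ≤ s2 → s2 ≤ d' →
      |(Ψ t s2 - Ψ t s1) - h * ∫ z in s1..s2, ρ z * (V t z - k)| ≤ h * η * D := by
    intro t ht s1 s2 a b e
    have ce : Continuous fun z => ρ z * (V t z - k) := by have := hVs t; fun_prop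
    rw [hΨd, ← intervalIntegral.integral_const_mul, ← intervalIntegral.integral_sub
      ((hIntg t).intervalIntegrable _ _) ((ce.const_mul h).intervalIntegrable _ _)]
    have e1 : |∫ z in s1..s2, (ρ z * (U t z - h * k) - h * (ρ z * (V t z - k)))| ≤
        ∫ z in s1..s2, (h * η) * ρ z := by
      rw [← Real.norm_eq_abs]
      apply intervalIntegral.norm_integral_le_of_norm_le b
      · refine Eventually.of_forall fun z hz => ?_
        have : ρ z * (U t z - h * k) - h * (ρ z * (V t z - k)) = ρ z * (U t z - h * V t z) := by ring
        rw [this, Real.norm_eq_abs, abs_mul, abs_of_pos (hρ0 z), mul_comm]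
        exact mul_le_mul_of_nonneg_right (hUV t ht z ⟨by linarith [hz.1], by linarith [hz.2]⟩) (hρ0 z).le
      · exact (hρ.const_mul _).intervalIntegrable _ _
    refine e1.trans ?_
    rw [intervalIntegral.integral_const_mul]
    exact mul_le_mul_of_nonneg_left (hDle s1 s2 a b e) (by positivity)
  have hDpos : 0 ≤ D := hD0 _ _ hcd
  let S : Set (ℝ × ℝ × ℝ) := {p | r ≤ p.1 ∧ p.1 ≤ t1 ∧ c' ≤ p.2.1 ∧ p.2.1 ≤ p.2.2 ∧ p.2.2 ≤ d'}
  have hScl : IsClosed S := by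
    have : S = {p | r ≤ p.1} ∩ ({p | p.1 ≤ t1} ∩ ({p | c' ≤ p.2.1} ∩
      ({p | p.2.1 ≤ p.2.2} ∩ {p | p.2.2 ≤ d'}))) := by
      ext p; simp [S]
    rw [this]
    refine (isClosed_le (by fun_prop) (by fun_prop)).inter
      ((isClosed_le (by fun_prop) (by fun_prop)).inter
      ((isClosed_le (by fun_prop) (by fun_prop)).inter
      ((isClosed_le (by fun_prop) (by fun_prop)).inter
      (isClosed_le (by fun_prop) (by fun_prop)))))
  have hSc : IsCompact S := by
    apply IsCompact.of_isClosed_subset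
      (isCompact_Icc.prod (isCompact_Icc.prod isCompact_Icc) :
        IsCompact (Icc r t1 ×ˢ (Icc c' d' ×ˢ Icc c' d'))) hScl
    rintro ⟨t, u, v⟩ ⟨h1, h2, h3, h4, h5⟩
    simp only at h1 h2 h3 h4 h5
    exact ⟨⟨h1, h2⟩, ⟨h3, h4.trans h5⟩, ⟨h3.trans h4, h5⟩⟩
  set ε := h * η with hε
  have hε0 : 0 < ε := by positivity
  have hwc : Continuous (fun p : ℝ × ℝ × ℝ => Ψ p.1 p.2.2 - Ψ p.1 p.2.1 - ε * (p.1 - r)) := by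
    have a := hΨc.comp (by fun_prop : Continuous (fun p : ℝ × ℝ × ℝ => (p.1, p.2.2)))
    have b := hΨc.comp (by fun_prop : Continuous (fun p : ℝ × ℝ × ℝ => (p.1, p.2.1)))
    have a' : Continuous (fun p : ℝ × ℝ × ℝ => Ψ p.1 p.2.2) := a
    have b' : Continuous (fun p : ℝ × ℝ × ℝ => Ψ p.1 p.2.1) := b
    exact (a'.sub b').sub (by fun_prop)
  have hmem : (t1, x1, x2) ∈ S := ⟨hrt, le_rfl, hx1, hx12, hx2⟩
  obtain ⟨⟨t, s1, s2⟩, ⟨h1, h2, h3, h4, h5⟩, hmax⟩ := hSc.exists_isMaxOn ⟨_, hmem⟩ hwc.continuousOn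
  simp only at h1 h2 h3 h4 h5
  have hle : Ψ t1 x2 - Ψ t1 x1 - ε * (t1 - r) ≤ Ψ t s2 - Ψ t s1 - ε * (t - r) := hmax hmem
  have hfin : Ψ t s2 - Ψ t s1 - ε * (t - r) ≤ h * m0 + h * η * D := by
    have hnn : 0 ≤ ε * (t - r) := mul_nonneg hε0.le (by linarith)
    have hpos : 0 ≤ h * m0 + h * η * D := by positivity
    rcases eq_or_lt_of_le h1 with e | h1
    · have a := (abs_le.1 (hcmp t ⟨by linarith, h2⟩ s1 s2 h3 h4 h5)).2
      have b := hini s1 s2 h3 h4 h5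
      rw [e] at b
      have := mul_le_mul_of_nonneg_left b hh0.le
      linarith
    rcases eq_or_lt_of_le h4 with e | h4
    · rw [e]; linarith
    exfalso
    have hUlat : U t c' < h * k ∧ U t d' < h * k := by
      have hk : ∫ _τ in t..(t + h), k = h * k := by simp
      constructor
      · rw [hUe, ← hk]
        apply intervalIntegral.integral_lt_integral_of_continuousOn_of_le_of_exists_lt (by linarith)
          (hVt _).continuousOn continuousOn_const
        · intro τ hτ
          exact (hl τ ⟨by linarith [hτ.1], by linarith [hτ.2]⟩).1.le
        · exact ⟨t, ⟨le_rfl, by linarith⟩, (hl t ⟨by linarith, by linarith⟩).1⟩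
      · rw [hUe, ← hk]
        apply intervalIntegral.integral_lt_integral_of_continuousOn_of_le_of_exists_lt (by linarith)
          (hVt _).continuousOn continuousOn_const
        · intro τ hτ
          exact (hl τ ⟨by linarith [hτ.1], by linarith [hτ.2]⟩).2.le
        · exact ⟨t, ⟨le_rfl, by linarith⟩, (hl t ⟨by linarith, by linarith⟩).2⟩
    obtain ⟨Us, hUsd⟩ := weak_V (t1 := t) (t2 := t + h) (by linarith) (by linarith) (by linarith)
      (by linarith) hV hρ hρ0 hp
    have hUsd1 : ∀ s ∈ Ioo c d, HasDerivAt (U t) (Us s) s := by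
      intro s hs
      have := (hUsd s hs).1
      refine this.congr_of_eventuallyEq (Eventually.of_forall fun z => hUe t z)
    -- the right end point
    have hs2 : s2 < d' := by
      rcases eq_or_lt_of_le h5 with e | h5
      · exfalso
        have a := deriv_nonneg_of_left_max (hΨs t s2) (by
          filter_upwards [Ioo_mem_nhdsLT h4] with z hz
          have : Ψ t z - Ψ t s1 - ε * (t - r) ≤ Ψ t s2 - Ψ t s1 - ε * (t - r) :=
            hmax (show (t, s1, z) ∈ S from ⟨h1.le, h2, h3, hz.1.le, by show z ≤ d'; linarith [hz.2]⟩)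
          linarith)
        have b : U t s2 - h * k < 0 := by rw [e]; linarith [hUlat.2]
        have := mul_neg_of_pos_of_neg (hρ0 s2) b
        linarith
      · exact h5
    have hs1 : c' < s1 := by
      rcases eq_or_lt_of_le h3 with e | h3
      · exfalso
        have a := deriv_nonpos_of_right_max (hΨs t s1).neg (by
          filter_upwards [Ioo_mem_nhdsGT h4] with z hz
          have : Ψ t s2 - Ψ t z - ε * (t - r) ≤ Ψ t s2 - Ψ t s1 - ε * (t - r) :=
            hmax (show (t, z, s2) ∈ S from ⟨h1.le, h2, by show c' ≤ z; linarith [hz.1], hz.2.le, h5⟩)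
          show - Ψ t z ≤ - Ψ t s1
          linarith)
        have b : U t s1 - h * k < 0 := by rw [← e]; linarith [hUlat.1]
        have := mul_neg_of_pos_of_neg (hρ0 s1) b
        linarith
      · exact h3
    have hmx2 : ∀ᶠ z in 𝓝 s2, Ψ t z ≤ Ψ t s2 := by
      filter_upwards [Ioo_mem_nhds h4 hs2] with z hz
      have : Ψ t z - Ψ t s1 - ε * (t - r) ≤ Ψ t s2 - Ψ t s1 - ε * (t - r) :=
        hmax (show (t, s1, z) ∈ S from ⟨h1.le, h2, h3, hz.1.le, hz.2.le⟩)
      linarith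
    have hmx1 : ∀ᶠ z in 𝓝 s1, - Ψ t z ≤ - Ψ t s1 := by
      filter_upwards [Ioo_mem_nhds hs1 h4] with z hz
      have : Ψ t s2 - Ψ t z - ε * (t - r) ≤ Ψ t s2 - Ψ t s1 - ε * (t - r) :=
        hmax (show (t, z, s2) ∈ S from ⟨h1.le, h2, hz.1.le, hz.2.le, h5⟩)
      linarith
    have z2 : U t s2 - h * k = 0 := by
      have a := IsLocalMax.hasDerivAt_eq_zero hmx2 (hΨs t s2)
      exact (mul_eq_zero.1 a).resolve_left (hρ0 s2).ne'
    have z1 : U t s1 - h * k = 0 := by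
      have a := IsLocalMax.hasDerivAt_eq_zero (f := fun z => - Ψ t z) hmx1 (hΨs t s1).neg
      exact (mul_eq_zero.1 (neg_eq_zero.1 a)).resolve_left (hρ0 s1).ne'
    have q2 : Us s2 ≤ 0 := second_test_right (g := Ψ t) (r := ρ) (k := fun s => U t s - h * k)
      (Eventually.of_forall fun z => hΨs t z) (Eventually.of_forall hρ0) z2
      ((hUsd1 s2 ⟨by linarith, by linarith⟩).sub_const _) (nhdsWithin_le_nhds hmx2)
    have q1 : - Us s1 ≤ 0 := second_test_right (g := fun z => - Ψ t z) (r := ρ)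
      (k := fun s => - (U t s - h * k))
      (Eventually.of_forall fun z => by rw [mul_neg]; exact (hΨs t z).neg)
      (Eventually.of_forall hρ0) (by rw [z1, neg_zero])
      ((hUsd1 s1 ⟨by linarith, by linarith⟩).sub_const _).neg (nhdsWithin_le_nhds hmx1)
    have q3 := deriv_nonneg_of_left_max (((hΨt t s2).sub (hΨt t s1)).sub
      (((hasDerivAt_id t).sub_const r).const_mul ε)) (by
        filter_upwards [Ioo_mem_nhdsLT h1] with τ hτ
        exact hmax (show (τ, s1, s2) ∈ S from ⟨hτ.1.le, by show τ ≤ t1; linarith [hτ.2], h3, h4.le, h5⟩))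
    have ce : Continuous fun z => ρ z * (V (t + h) z - V t z) := by
      have := hVs t; have := hVs (t + h); fun_prop
    rw [intervalIntegral.integral_interval_sub_left (ce.intervalIntegrable _ _) (ce.intervalIntegrable _ _),
      intervalIntegral.integral_eq_sub_of_hasDerivAt (f := Us) _ (ce.intervalIntegrable _ _)] at q3
    · linarith
    · intro z hz
      rw [uIcc_of_le h4.le] at hz
      exact (hUsd z ⟨by linarith [hz.1], by linarith [hz.2]⟩).2
  have a := (abs_le.1 (hcmp t1 ⟨hrt, le_rfl⟩ x1 x2 hx1 hx12 hx2)).1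
  have b : h * (∫ z in x1..x2, ρ z * (V t1 z - k)) ≤ h * (m0 + η * (2 * D + (t1 - r))) := by
    have : h * (m0 + η * (2 * D + (t1 - r))) = h * m0 + 2 * (h * η * D) + h * η * (t1 - r) := by ring
    rw [this]
    linarith
  exact le_of_mul_le_mul_left b hh0

/-- The gap lemma: bounds propagate across an interval of times of continuity. -/
theorem gap {ρ : ℝ → ℝ} {v vt vs : ℝ → ℝ → ℝ} {τ β c d c' d' k : ℝ}
    (hv : ContinuousOn (fun p : ℝ × ℝ => v p.1 p.2) (Ioo τ β ×ˢ Ioo c d))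
    (hρ : Continuous ρ) (hρ0 : ∀ s, 0 < ρ s)
    (hp : SPde ρ v vt vs (Ioo τ β) (Ioo c d)) (hc : c < c') (hcd : c' < d') (hd : d' < d)
    (hl : ∀ t ∈ Ioo τ β, v t c' < k ∧ v t d' < k)
    (hini : ∀ η > 0, ∃ᶠ r in 𝓝[>] τ, ∀ s1 s2, c' ≤ s1 → s1 ≤ s2 → s2 ≤ d' →
      ∫ z in s1..s2, ρ z * (v r z - k) ≤ η) :
    ∀ t ∈ Ioo τ β, ∀ s ∈ Icc c' d', v t s ≤ k := by
  intro t ht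
  have main : ∀ s1 s2, c' ≤ s1 → s1 ≤ s2 → s2 ≤ d' → ∫ z in s1..s2, ρ z * (v t z - k) ≤ 0 := by
    intro s1 s2 a b e
    apply le_of_eps (K := 1)
    intro η hη
    obtain ⟨r, hr, hr'⟩ := ((hini η hη).and_eventually (Ioo_mem_nhdsGT ht.1)).exists
    obtain ⟨α', ha1, ha2⟩ := exists_between hr'.1
    obtain ⟨β', hb1, hb2⟩ := exists_between ht.2
    obtain ⟨c'', hc1, hc2⟩ := exists_between hc
    obtain ⟨d'', hd1, hd2⟩ := exists_between hd
    have sI : Icc α' β' ⊆ Ioo τ β := fun x hx => ⟨by linarith [hx.1], by linarith [hx.2]⟩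
    have sJ : Icc c'' d'' ⊆ Ioo c d := fun x hx => ⟨by linarith [hx.1], by linarith [hx.2]⟩
    have hrt := hr'.2
    obtain ⟨V, hV, hVe⟩ := clamp_ext (by linarith) (by linarith) (hv.mono (prod_mono sI sJ))
    have hp' := (hp.mono (Ioo_subset_Icc_self.trans sI) (Ioo_subset_Icc_self.trans sJ)).congr hVe
    have hVi : ∀ θ ∈ Icc α' β', ∀ s1 s2, c' ≤ s1 → s1 ≤ s2 → s2 ≤ d' →
        ∫ z in s1..s2, ρ z * (V θ z - k) = ∫ z in s1..s2, ρ z * (v θ z - k) := by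
      intro θ hθ s1 s2 a b e
      apply intervalIntegral.integral_congr
      intro z hz
      rw [uIcc_of_le b] at hz
      simp only [hVe θ hθ z ⟨by linarith [hz.1], by linarith [hz.2]⟩]
    have := gap0 (r := r) (t1 := t) (k := k) (m0 := η) hV hρ hρ0 hp' hc2 hcd.le hd1 ha2 hrt.le hb1 (by
      intro θ hθ
      have hθ' : θ ∈ Icc α' β' := ⟨by linarith [hθ.1], hθ.2⟩
      rw [hVe θ hθ' c' ⟨by linarith, by linarith⟩, hVe θ hθ' d' ⟨by linarith, by linarith⟩]
      exact hl θ (sI hθ')) hη.le (by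
      intro s1 s2 a b e
      rw [hVi r ⟨by linarith, by linarith⟩ s1 s2 a b e]
      exact hr s1 s2 a b e) s1 s2 a b e
    rw [hVi t ⟨by linarith, by linarith⟩ s1 s2 a b e] at this
    linarith
  have hvc : ContinuousOn (v t) (Icc c' d') := fun z hz =>
    (hp t ht z ⟨by linarith [hz.1], by linarith [hz.2]⟩).2.1.continuousAt.continuousWithinAt
  have int : ∀ s ∈ Ioo c' d', v t s ≤ k := by
    intro s hs
    by_contra hlt
    push Not at hlt
    have hca : ContinuousAt (v t) s := (hp t ht s ⟨by linarith [hs.1], by linarith [hs.2]⟩).2.1.continuousAt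
    have hev : ∀ᶠ z in 𝓝[>] s, k < v t z ∧ z < d' := by
      have a : ∀ᶠ z in 𝓝 s, k < v t z := hca.eventually (lt_mem_nhds hlt)
      exact nhdsWithin_le_nhds (a.and (gt_mem_nhds hs.2))
    obtain ⟨u, hu, hsub⟩ := (mem_nhdsGT_iff_exists_Ioo_subset).1 hev
    have hu' : s < u := hu
    set y := (s + u) / 2 with hy
    have hy1 : s < y := by rw [hy]; linarith
    have hy2 : y < u := by rw [hy]; linarith
    have hyd := (hsub ⟨hy1, hy2⟩).2
    have := main s y hs.1.le hy1.le hyd.le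
    have hpos : 0 < ∫ z in s..y, ρ z * (v t z - k) := by
      apply intervalIntegral.intervalIntegral_pos_of_pos_on _ _ hy1
      · apply ContinuousOn.intervalIntegrable
        rw [uIcc_of_le hy1.le]
        exact hρ.continuousOn.mul ((hvc.mono (Icc_subset_Icc hs.1.le hyd.le)).sub continuousOn_const)
      · intro z hz
        exact mul_pos (hρ0 z) (by linarith [(hsub ⟨hz.1, hz.2.trans hy2⟩).1])
    linarith
  intro s hs
  rcases eq_or_lt_of_le hs.1 with e | h1
  · rw [← e]; exact (hl t ht).1.le
  rcases eq_or_lt_of_le hs.2 with e | h2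
  · rw [e]; exact (hl t ht).2.le
  exact int s ⟨h1, h2⟩


def L1c (ρ : ℝ → ℝ) (v : ℝ → ℝ → ℝ) (c d : ℝ) : Prop :=
  ∀ t0 > 0, ∀ η > 0, ∀ᶠ t in 𝓝 t0, ∫ z in c..d, ρ z * |v t z - v t0 z| ≤ η

theorem L1c.neg {ρ : ℝ → ℝ} {v : ℝ → ℝ → ℝ} {c d : ℝ} (h : L1c ρ v c d) :
    L1c ρ (fun t s => - v t s) c d := by
  intro t0 ht0 η hη
  filter_upwards [h t0 ht0 η hη] with t ht
  refine le_trans (le_of_eq ?_) ht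
  congr 1; ext z
  rw [← abs_neg]; congr 2; ring

theorem gap_up {ρ : ℝ → ℝ} {v vt vs : ℝ → ℝ → ℝ} {τ β c d c' d' k : ℝ}
    (hρ : Continuous ρ) (hρ0 : ∀ s, 0 < ρ s)
    (hp : SPde ρ v vt vs (Ioi 0) (Icc c d)) (hL : L1c ρ v c d) (hτ : 0 < τ)
    (hv : ContinuousOn (fun p : ℝ × ℝ => v p.1 p.2) (Ioo τ β ×ˢ Ioo c d))
    (hc : c < c') (hcd : c' < d') (hd : d' < d)
    (hl : ∀ t ∈ Ioo τ β, v t c' < k ∧ v t d' < k) (hini : ∀ s ∈ Icc c' d', v τ s ≤ k) :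
    ∀ t ∈ Ioo τ β, ∀ s ∈ Icc c' d', v t s ≤ k := by
  have hvc : ∀ t > 0, ContinuousOn (v t) (Icc c d) := fun t ht z hz =>
    (hp t ht z hz).2.1.continuousAt.continuousWithinAt
  refine gap hv hρ hρ0 (hp.mono (fun t ht => lt_trans hτ ht.1) Ioo_subset_Icc_self) hc hcd hd hl ?_
  intro η hη
  apply Eventually.frequently
  filter_upwards [nhdsWithin_le_nhds (hL τ hτ η hη), self_mem_nhdsWithin] with r hr hr' s1 s2 a b e
  have hr0 : 0 < r := lt_trans hτ hr'
  have c1 : ContinuousOn (fun z => ρ z * (v r z - k)) (Icc c d) :=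
    hρ.continuousOn.mul ((hvc r hr0).sub continuousOn_const)
  have c2 : ContinuousOn (fun z => ρ z * |v r z - v τ z|) (Icc c d) :=
    hρ.continuousOn.mul ((hvc r hr0).sub (hvc τ hτ)).abs
  have h1 : ∫ z in s1..s2, ρ z * (v r z - k) ≤ ∫ z in s1..s2, ρ z * |v r z - v τ z| := by
    apply intervalIntegral.integral_mono_on b
    · apply ContinuousOn.intervalIntegrable
      rw [uIcc_of_le b]; exact c1.mono (Icc_subset_Icc (by linarith) (by linarith))
    · apply ContinuousOn.intervalIntegrable
      rw [uIcc_of_le b]; exact c2.mono (Icc_subset_Icc (by linarith) (by linarith))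
    · intro z hz
      apply mul_le_mul_of_nonneg_left _ (hρ0 z).le
      have := hini z ⟨by linarith [hz.1], by linarith [hz.2]⟩
      have := le_abs_self (v r z - v τ z)
      linarith
  refine h1.trans (le_trans ?_ hr)
  apply intervalIntegral.integral_mono_interval (by linarith) b (by linarith)
  · exact Eventually.of_forall fun z => mul_nonneg (hρ0 z).le (abs_nonneg _)
  · apply ContinuousOn.intervalIntegrable
    rw [uIcc_of_le (by linarith)]; exact c2

theorem gap_abs {ρ : ℝ → ℝ} {v vt vs : ℝ → ℝ → ℝ} {τ β c d c' d' A k : ℝ}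
    (hρ : Continuous ρ) (hρ0 : ∀ s, 0 < ρ s)
    (hp : SPde ρ v vt vs (Ioi 0) (Icc c d)) (hL : L1c ρ v c d) (hτ : 0 < τ)
    (hv : ContinuousOn (fun p : ℝ × ℝ => v p.1 p.2) (Ioo τ β ×ˢ Ioo c d))
    (hc : c < c') (hcd : c' < d') (hd : d' < d)
    (hl : ∀ t ∈ Ioo τ β, |v t c' - A| < k ∧ |v t d' - A| < k)
    (hini : ∀ s ∈ Icc c' d', |v τ s - A| ≤ k) :
    ∀ t ∈ Ioo τ β, ∀ s ∈ Icc c' d', |v t s - A| ≤ k := by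
  have h1 := gap_up (k := A + k) hρ hρ0 hp hL hτ hv hc hcd hd
    (fun t ht => ⟨by linarith [(abs_lt.1 (hl t ht).1).2], by linarith [(abs_lt.1 (hl t ht).2).2]⟩)
    (fun s hs => by linarith [(abs_le.1 (hini s hs)).2])
  have h2 := gap_up (k := -A + k) hρ hρ0 hp.neg hL.neg hτ hv.neg hc hcd hd
    (fun t ht => ⟨by linarith [(abs_lt.1 (hl t ht).1).1], by linarith [(abs_lt.1 (hl t ht).2).1]⟩)
    (fun s hs => by linarith [(abs_le.1 (hini s hs)).1])
  intro t ht s hs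
  rw [abs_le]
  exact ⟨by linarith [h2 t ht s hs], by linarith [h1 t ht s hs]⟩

/-- Uniform-in-time modulus at `s0` just before a left-isolated bad time. -/
theorem left_equi {ρ : ℝ → ℝ} {v vt vs : ℝ → ℝ → ℝ} {τ0 t0 c d s0 w k : ℝ}
    (hρ : Continuous ρ) (hρ0 : ∀ s, 0 < ρ s) (hk : 0 ≤ k) (hw : 0 < w) (hτt : τ0 < t0)
    (hp : SPde ρ v vt vs (Ioo τ0 t0) (Ioo c d))
    (hv : ContinuousOn (fun p : ℝ × ℝ => v p.1 p.2) (Ioo τ0 t0 ×ˢ Ioo c d))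
    (hc : c < s0 - w) (hd : s0 + w < d)
    (hb : ∀ t ∈ Ioo τ0 t0, ∀ s ∈ Icc (s0 - w) (s0 + w), |v t s| ≤ k) :
    ∃ K K' : ℝ, ∀ t ∈ Ioo ((τ0 + t0) / 2) t0, ∀ x ∈ Icc (s0 - w) (s0 + w),
      |v t x - v t s0| ≤ K * |x - s0| + K' * (x - s0) ^ 2 := by
  obtain ⟨N, hN⟩ := (isCompact_Icc : IsCompact (Icc (s0 - w) (s0 + w))).exists_bound_of_continuousOn
    hρ.continuousOn
  have hN' : ∀ x ∈ Icc (s0 - w) (s0 + w), ρ x ≤ N := fun x hx => (le_abs_self _).trans (hN x hx)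
  have hN0 : 0 < N := (hρ0 s0).trans_le (hN' s0 ⟨by linarith, by linarith⟩)
  set δ := (t0 - τ0) / 4 with hδ
  have hδ0 : 0 < δ := by rw [hδ]; linarith
  refine ⟨(4 * w * (2 * (2 * k / w ^ 2) + 2 * k / δ / (2 * (1 / N)))), 2 * k / w ^ 2, ?_⟩
  intro t ht x hx
  have one : ∀ f ft fx : ℝ → ℝ → ℝ, SPde ρ f ft fx (Ioo τ0 t0) (Ioo c d) →
      ContinuousOn (fun p : ℝ × ℝ => f p.1 p.2) (Ioo τ0 t0 ×ˢ Ioo c d) →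
      (∀ t ∈ Ioo τ0 t0, ∀ s ∈ Icc (s0 - w) (s0 + w), |f t s| ≤ k) →
      ∀ x y, y ≤ x → |x - s0| ≤ w → |y - s0| ≤ w → f t x - f t y ≤
        (4 * w * (2 * (2 * k / w ^ 2) + 2 * k / δ / (2 * (1 / N)))) * (x - y)
        + 2 * k / w ^ 2 * ((x - s0) ^ 2 + (y - s0) ^ 2) := by
    intro f ft fx hpf hf hbf
    have e1 : ∀ θ, t - δ ≤ θ → θ ≤ t → θ ∈ Ioo τ0 t0 := by
      intro θ h1 h2
      have := ht.1; have := ht.2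
      constructor <;> linarith
    have e2 : ∀ z, |z - s0| ≤ w → z ∈ Icc (s0 - w) (s0 + w) := by
      intro z hz; have := abs_le.1 hz; exact ⟨by linarith [this.1], by linarith [this.2]⟩
    have e3 : ∀ z, |z - s0| ≤ w → z ∈ Ioo c d := by
      intro z hz; have := abs_le.1 hz; exact ⟨by linarith [this.1], by linarith [this.2]⟩
    refine kruzhkov (f := f) (ft := ft) (fx := fx) (fxx := fun t s => ρ s * ft t s)
      (A := fun s => 1 / ρ s) (W := 0) (T := t) hδ0 hw (by linarith) (by positivity) ?_ ?_ ?_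
    · apply hf.mono
      rintro ⟨θ, z⟩ ⟨h1, h2, h3⟩
      simp only [zero_mul, add_zero] at h1 h2 h3
      exact ⟨e1 θ h1 h2, e3 z h3⟩
    · intro θ z h1 h2 h3
      simp only [zero_mul, add_zero] at h3
      obtain ⟨a, b, e⟩ := hpf θ (e1 θ h1.le h2) z (e3 z h3.le)
      refine ⟨a, b, e, ?_, ?_⟩
      · have := (hρ0 z).ne'
        field_simp; ring
      · exact one_div_le_one_div_of_le (hρ0 z) (hN' z (e2 z h3.le))
    · intro θ y z h1 h2 h3 h4
      simp only [zero_mul, add_zero] at h3 h4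
      have a := abs_le.1 (hbf θ (e1 θ h1 h2) y (e2 y h3))
      have b := abs_le.1 (hbf θ (e1 θ h1 h2) z (e2 z h4))
      linarith [a.2, b.1]
  have p1 := one v vt vs hp hv hb
  have p2 := one _ _ _ hp.neg hv.neg (fun t ht s hs => by rw [abs_neg]; exact hb t ht s hs)
  have hx' : |x - s0| ≤ w := by rw [abs_le]; exact ⟨by linarith [hx.1], by linarith [hx.2]⟩
  have h0' : |s0 - s0| ≤ w := by simp [hw.le]
  rcases le_total s0 x with h | h
  · have q1 := p1 x s0 h hx' h0'
    have q2 := p2 x s0 h hx' h0'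
    rw [sub_self, zero_pow two_ne_zero, add_zero] at q1 q2
    rw [abs_of_nonneg (by linarith : 0 ≤ x - s0), abs_le]
    exact ⟨by linarith, by linarith⟩
  · have q1 := p1 s0 x h h0' hx'
    have q2 := p2 s0 x h h0' hx'
    rw [sub_self, zero_pow two_ne_zero, zero_add] at q1 q2
    rw [abs_of_nonpos (by linarith : x - s0 ≤ 0), abs_le]
    rw [neg_sub]
    exact ⟨by linarith, by linarith⟩

theorem portion_cont {ρ : ℝ → ℝ} {v vt vs : ℝ → ℝ → ℝ} {a b c d n : ℝ}
    (hρ : Continuous ρ) (hρ0 : ∀ s, 0 < ρ s)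
    (hp : SPde ρ v vt vs (Ioi 0) (Icc c d)) (hL : L1c ρ v c d) (ha : 0 < a) (hn : 0 ≤ n) {Z : Set ℝ}
    (hZ : ∀ t ∈ Ioo a b, t ∉ Z → ∀ᶠ t' in 𝓝 t, t' ∉ Z)
    (hP : ∀ t ∈ Ioo a b, t ∉ Z → ∀ s ∈ Ioo c d, ContinuousAt (fun p : ℝ × ℝ => v p.1 p.2) (t, s))
    (hLip : ∀ t ∈ Ioo a b, t ∈ Z → ∀ s ∈ Icc c d, ∀ s' ∈ Icc c d, |v t s - v t s'| ≤ n * |s - s'|)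
    {t0 s0 : ℝ} (ht0 : t0 ∈ Ioo a b) (ht0Z : t0 ∈ Z) (hs0 : s0 ∈ Ioo c d) :
    ContinuousAt (fun p : ℝ × ℝ => v p.1 p.2) (t0, s0) := by
  set A := v t0 s0 with hA
  have hvt : ∀ s ∈ Icc c d, ContinuousAt (fun t => v t s) t0 := fun s hs =>
    (hp t0 (ha.trans ht0.1) s hs).1.continuousAt
  suffices H : ∀ η > 0, ∀ᶠ p in 𝓝 (t0, s0), |v p.1 p.2 - A| ≤ 2 * η by
    rw [ContinuousAt, Metric.tendsto_nhds]
    intro ε hε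
    filter_upwards [H (ε / 4) (by linarith)] with p hp
    rw [Real.dist_eq]; linarith
  intro η hη
  set w := min (min ((s0 - c) / 2) ((d - s0) / 2)) (η / (n + 1)) with hw
  have hw0 : 0 < w := by
    have := hs0.1; have := hs0.2
    rw [hw]
    refine lt_min (lt_min ?_ ?_) (by positivity) <;> linarith
  have hw1 : w ≤ (s0 - c) / 2 := (min_le_left _ _).trans (min_le_left _ _)
  have hw2 : w ≤ (d - s0) / 2 := (min_le_left _ _).trans (min_le_right _ _)
  have hw3 : n * w ≤ η := by
    have h1 : w ≤ η / (n + 1) := min_le_right _ _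
    rw [le_div_iff₀ (by positivity)] at h1
    nlinarith
  have hc' : c < s0 - w := by linarith [hs0.1]
  have hd' : s0 + w < d := by linarith [hs0.2]
  have hsub : Icc (s0 - w) (s0 + w) ⊆ Ioo c d := fun x hx => ⟨by linarith [hx.1], by linarith [hx.2]⟩
  have hsub' : Icc (s0 - w) (s0 + w) ⊆ Icc c d := hsub.trans Ioo_subset_Icc_self
  have m0 : s0 ∈ Icc (s0 - w) (s0 + w) := ⟨by linarith, by linarith⟩
  have m1 : s0 - w ∈ Icc (s0 - w) (s0 + w) := ⟨by linarith, by linarith⟩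
  have m2 : s0 + w ∈ Icc (s0 - w) (s0 + w) := ⟨by linarith, by linarith⟩
  have ev : ∀ s ∈ Icc (s0 - w) (s0 + w), ∀ᶠ t in 𝓝 t0, |v t s - v t0 s| < η := by
    intro s hs
    have := (Metric.tendsto_nhds.1 (hvt s (hsub' hs))) η hη
    simpa [Real.dist_eq] using this
  have ev4 := (ev _ m0).and ((ev _ m1).and ((ev _ m2).and (Ioo_mem_nhds ht0.1 ht0.2)))
  obtain ⟨l, u, hlu, hgood⟩ := mem_nhds_iff_exists_Ioo_subset.1 ev4
  have hab : ∀ t ∈ Ioo l u, t ∈ Ioo a b := fun t ht => (hgood ht).2.2.2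
  have lip0 : ∀ t ∈ Ioo a b, t ∈ Z → ∀ s ∈ Icc (s0 - w) (s0 + w), |v t s - v t s0| ≤ η := by
    intro t ht hz s hs
    refine (hLip t ht hz s (hsub' hs) s0 (hsub' m0)).trans (le_trans ?_ hw3)
    apply mul_le_mul_of_nonneg_left _ hn
    rw [abs_le]; exact ⟨by linarith [hs.1], by linarith [hs.2]⟩
  have F1 : ∀ t ∈ Ioo l u, t ∈ Z → ∀ s ∈ Icc (s0 - w) (s0 + w), |v t s - A| ≤ 2 * η := by
    intro t ht hz s hs
    have h1 := lip0 t (hab t ht) hz s hs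
    have h2 := (hgood ht).1
    have : v t s - A = (v t s - v t s0) + (v t s0 - v t0 s0) := by rw [hA]; ring
    rw [this]
    refine (abs_add_le _ _).trans ?_
    linarith
  have F2 : ∀ t ∈ Ioo l u, |v t (s0 - w) - A| < 2 * η ∧ |v t (s0 + w) - A| < 2 * η := by
    intro t ht
    have g := hgood ht
    have k1 := lip0 t0 ht0 ht0Z _ m1
    have k2 := lip0 t0 ht0 ht0Z _ m2
    constructor
    · have : v t (s0 - w) - A = (v t (s0 - w) - v t0 (s0 - w)) + (v t0 (s0 - w) - v t0 s0) := by rw [hA]; ring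
      rw [this]
      have := g.2.1
      exact lt_of_le_of_lt (abs_add_le _ _) (by linarith)
    · have : v t (s0 + w) - A = (v t (s0 + w) - v t0 (s0 + w)) + (v t0 (s0 + w) - v t0 s0) := by rw [hA]; ring
      rw [this]
      have := g.2.2.1
      exact lt_of_le_of_lt (abs_add_le _ _) (by linarith)
  have contOn : ∀ x y, Ioo x y ⊆ Ioo a b → (∀ t ∈ Ioo x y, t ∉ Z) →
      ContinuousOn (fun p : ℝ × ℝ => v p.1 p.2) (Ioo x y ×ˢ Ioo c d) := by
    rintro x y hxy hz ⟨t, s⟩ ⟨ht, hs⟩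
    exact (hP t (hxy ht) (hz t ht) s hs).continuousWithinAt
  have F3 : ∀ z ∈ Ioo l u, z ∈ Z → ∀ t ∈ Ioo l u, z < t → t ∉ Z → ∀ s ∈ Icc (s0 - w) (s0 + w),
      |v t s - A| ≤ 2 * η := by
    intro z hz hzZ t ht hzt htZ
    have hcl : IsClosed (Z ∩ Icc z t) := by
      rw [← isOpen_compl_iff, isOpen_iff_eventually]
      intro x hx
      by_cases hxI : x ∈ Icc z t
      · have hxZ : x ∉ Z := fun h => hx ⟨h, hxI⟩
        have hxab : x ∈ Ioo a b := hab x ⟨lt_of_lt_of_le hz.1 hxI.1, lt_of_le_of_lt hxI.2 ht.2⟩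
        filter_upwards [hZ x hxab hxZ] with y hy hy2 using hy hy2.1
      · have : ∀ᶠ y in 𝓝 x, y ∈ (Icc z t)ᶜ := isClosed_Icc.isOpen_compl.mem_nhds hxI
        filter_upwards [this] with y hy hy2 using hy hy2.2
    have hne : (Z ∩ Icc z t).Nonempty := ⟨z, hzZ, le_rfl, hzt.le⟩
    have hcmp : IsCompact (Z ∩ Icc z t) := isCompact_Icc.of_isClosed_subset hcl inter_subset_right
    have hsm := hcmp.sSup_mem hne
    set τ := sSup (Z ∩ Icc z t) with hτ
    have hτt : τ < t := lt_of_le_of_ne hsm.2.2 (fun h => htZ (h ▸ hsm.1))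
    obtain ⟨l', u', htl, hno⟩ := mem_nhds_iff_exists_Ioo_subset.1 (hZ t (hab t ht) htZ)
    set β := min u' u with hβ
    have hβt : t < β := lt_min htl.2 ht.2
    have hnoZ : ∀ y ∈ Ioo τ β, y ∉ Z := by
      intro y hy hyZ
      rcases le_or_gt y t with h | h
      · have : y ≤ τ := le_csSup hcmp.bddAbove ⟨hyZ, by linarith [hsm.2.1, hy.1], h⟩
        linarith [hy.1]
      · exact hno ⟨by linarith [htl.1], lt_of_lt_of_le hy.2 (min_le_left _ _)⟩ hyZ
    have hτlu : τ ∈ Ioo l u := ⟨lt_of_lt_of_le hz.1 hsm.2.1, hτt.trans ht.2⟩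
    have hin : Ioo τ β ⊆ Ioo l u := fun y hy =>
      ⟨hτlu.1.trans hy.1, lt_of_lt_of_le hy.2 (min_le_right _ _)⟩
    exact gap_abs hρ hρ0 hp hL (ha.trans (hab τ hτlu).1) (contOn τ β (fun y hy => hab y (hin hy)) hnoZ)
      hc' (by linarith) hd' (fun y hy => F2 y (hin hy)) (F1 τ hτlu hsm.1) t ⟨hτt, hβt⟩
  by_cases hcase : ∃ z ∈ Ioo l t0, z ∈ Z
  · obtain ⟨z, hz, hzZ⟩ := hcase
    have hnb : Ioo z u ×ˢ Icc (s0 - w) (s0 + w) ∈ 𝓝 (t0, s0) :=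
      prod_mem_nhds (Ioo_mem_nhds hz.2 hlu.2) (Icc_mem_nhds (by linarith) (by linarith))
    filter_upwards [hnb] with p hp
    have hpl : p.1 ∈ Ioo l u := ⟨hz.1.trans hp.1.1, hp.1.2⟩
    by_cases h : p.1 ∈ Z
    · exact F1 p.1 hpl h p.2 hp.2
    · exact F3 z ⟨hz.1, hz.2.trans hlu.2⟩ hzZ p.1 hpl hp.1.1 h p.2 hp.2
  · push Not at hcase
    have right : ∀ t ∈ Ioo l u, t0 ≤ t → ∀ s ∈ Icc (s0 - w) (s0 + w), |v t s - A| ≤ 2 * η := by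
      intro t ht h0
      by_cases h : t ∈ Z
      · exact F1 t ht h
      · have : t0 < t := lt_of_le_of_ne h0 (fun e => h (e ▸ ht0Z))
        exact F3 t0 hlu ht0Z t ht this h
    set τ0 := (l + t0) / 2 with hτ0
    have hl0 := hlu.1
    have hτ1 : l < τ0 := by rw [hτ0]; linarith
    have hτ2 : τ0 < t0 := by rw [hτ0]; linarith
    have hτlu : τ0 ∈ Ioo l u := ⟨hτ1, hτ2.trans hlu.2⟩
    have hτpos : 0 < τ0 := ha.trans (hab _ hτlu).1
    have hin : Ioo τ0 t0 ⊆ Ioo l u := fun y hy => ⟨hτ1.trans hy.1, hy.2.trans hlu.2⟩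
    have hco := contOn τ0 t0 (fun y hy => hab y (hin hy)) (fun y hy => hcase y ⟨hτ1.trans hy.1, hy.2⟩)
    obtain ⟨k0, hk0⟩ := (isCompact_Icc : IsCompact (Icc (s0 - w) (s0 + w))).exists_bound_of_continuousOn
      (f := v τ0) (fun z hz => (hp τ0 hτpos z (hsub' hz)).2.1.continuousAt.continuousWithinAt)
    have hk00 : 0 ≤ k0 := (norm_nonneg _).trans (hk0 s0 m0)
    have hbd := gap_abs (A := 0) (k := k0 + |A| + 2 * η) hρ hρ0 hp hL hτpos hco hc' (by linarith) hd' (by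
        intro y hy
        have := F2 y (hin hy)
        have e : ∀ r, |r - A| < 2 * η → |r - 0| < k0 + |A| + 2 * η := by
          intro r hr
          rw [sub_zero]
          have : |r| ≤ |r - A| + |A| := by
            have := abs_add_le (r - A) A; rwa [sub_add_cancel] at this
          linarith
        exact ⟨e _ this.1, e _ this.2⟩) (by
        intro s hs
        rw [sub_zero]
        have := hk0 s hs
        rw [Real.norm_eq_abs] at this
        have := abs_nonneg A
        linarith)
    obtain ⟨K, K', hKK⟩ := left_equi (k := k0 + |A| + 2 * η) hρ hρ0 (by positivity) hw0 hτ2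
      (hp.mono (fun y hy => hτpos.trans hy.1) Ioo_subset_Icc_self) hco hc' hd'
      (fun t ht s hs => by have := hbd t ht s hs; rwa [sub_zero] at this)
    have hx : ∀ᶠ x in 𝓝 s0, K * |x - s0| + K' * (x - s0) ^ 2 < η := by
      have : ContinuousAt (fun x => K * |x - s0| + K' * (x - s0) ^ 2) s0 := by fun_prop
      have h0 := this.tendsto.eventually_lt_const (u := η) (by simpa using hη)
      exact h0
    have hmid : (τ0 + t0) / 2 < t0 := by linarith
    have hnb : Ioo ((τ0 + t0) / 2) u ×ˢ (Icc (s0 - w) (s0 + w) ∩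
        {x | K * |x - s0| + K' * (x - s0) ^ 2 < η}) ∈ 𝓝 (t0, s0) :=
      prod_mem_nhds (Ioo_mem_nhds hmid hlu.2)
        (inter_mem (Icc_mem_nhds (by linarith) (by linarith)) hx)
    filter_upwards [hnb] with p hp
    have hpl : p.1 ∈ Ioo l u := ⟨by linarith [hp.1.1], hp.1.2⟩
    rcases le_or_gt t0 p.1 with h | h
    · exact right p.1 hpl h p.2 hp.2.1
    · have h1 := hKK p.1 ⟨hp.1.1, h⟩ p.2 hp.2.1
      have h2 := (hgood hpl).1
      have h3 : K * |p.2 - s0| + K' * (p.2 - s0) ^ 2 < η := hp.2.2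
      have : v p.1 p.2 - A = (v p.1 p.2 - v p.1 s0) + (v p.1 s0 - v t0 s0) := by rw [hA]; ring
      rw [this]
      refine (abs_add_le _ _).trans ?_
      linarith

theorem joint_cont {ρ : ℝ → ℝ} {v vt vs : ℝ → ℝ → ℝ} {c d : ℝ}
    (hρ : Continuous ρ) (hρ0 : ∀ s, 0 < ρ s)
    (hp : SPde ρ v vt vs (Ioi 0) (Icc c d)) (hL : L1c ρ v c d) :
    ∀ t > 0, ∀ s ∈ Ioo c d, ContinuousAt (fun p : ℝ × ℝ => v p.1 p.2) (t, s) := by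
  set f : ℝ × ℝ → ℝ := fun p => v p.1 p.2 with hf
  let P : ℝ → Prop := fun t => ∀ s ∈ Ioo c d, ContinuousAt f (t, s)
  let G : Set ℝ := {t | ∀ᶠ t' in 𝓝 t, P t'}
  have hG : IsOpen G := isOpen_iff_eventually.2 fun t ht => eventually_eventually_nhds.2 ht
  let Z : Set ℝ := Ioi 0 ∩ Gᶜ
  have hGP : ∀ t ∈ G, P t := fun t ht => Eventually.self_of_nhds ht
  by_contra hcon
  push Not at hcon
  obtain ⟨t, ht, s, hs, hts⟩ := hcon
  have hZt : t ∈ Z := ⟨ht, fun h => hts (hGP t h s hs)⟩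
  have hZl : IsLocallyClosed Z := isOpen_Ioi.isLocallyClosed.inter hG.isClosed_compl.isLocallyClosed
  haveI : LocallyCompactSpace Z := hZl.locallyCompactSpace
  haveI : Nonempty Z := ⟨⟨t, hZt⟩⟩
  let C : ℕ → Set Z := fun n => {t | ∀ s ∈ Icc c d, ∀ s' ∈ Icc c d,
    |v t s - v t s'| ≤ (n : ℝ) * |s - s'|}
  have hvc : ∀ s ∈ Icc c d, Continuous (fun t : Z => v t s) := by
    intro s hs
    rw [continuous_iff_continuousAt]
    intro t
    exact (hp t t.2.1 s hs).1.continuousAt.comp (f := fun t : Z => (t : ℝ)) continuous_subtype_val.continuousAt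
  have hCc : ∀ n, IsClosed (C n) := by
    intro n
    have : C n = ⋂ s ∈ Icc c d, ⋂ s' ∈ Icc c d, {t : Z | |v t s - v t s'| ≤ (n : ℝ) * |s - s'|} := by
      ext t; simp only [C, mem_iInter, mem_ofPred_eq]
    rw [this]
    refine isClosed_biInter fun s hs => isClosed_biInter fun s' hs' => ?_
    exact isClosed_le ((hvc s hs).sub (hvc s' hs')).abs continuous_const
  have hCu : ⋃ n, C n = univ := by
    rw [eq_univ_iff_forall]
    intro t
    obtain ⟨M, hM⟩ := (isCompact_Icc : IsCompact (Icc c d)).exists_bound_of_continuousOn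
      (f := vs t) (fun z hz => (hp t t.2.1 z hz).2.2.continuousAt.continuousWithinAt)
    obtain ⟨n, hn⟩ := exists_nat_ge M
    refine mem_iUnion.2 ⟨n, fun s hs s' hs' => ?_⟩
    have := (convex_Icc c d).norm_image_sub_le_of_norm_hasDerivWithin_le (f := v t) (f' := vs t)
      (C := M) (fun x hx => (hp t t.2.1 x hx).2.1.hasDerivWithinAt) hM hs' hs
    simp only [Real.norm_eq_abs] at this
    exact this.trans (mul_le_mul_of_nonneg_right hn (abs_nonneg _))
  obtain ⟨n, ⟨z0, hz0⟩⟩ := nonempty_interior_of_iUnion_of_closed hCc hCu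
  rw [mem_interior_iff_mem_nhds, nhds_subtype, mem_comap] at hz0
  obtain ⟨S, hS, hSC⟩ := hz0
  have hz0pos : (0 : ℝ) < z0 := z0.2.1
  obtain ⟨a, b, hab, hsub⟩ := mem_nhds_iff_exists_Ioo_subset.1
    (inter_mem hS (Ioi_mem_nhds (half_lt_self hz0pos)))
  have ha : 0 < max a (z0 / 2 : ℝ) := lt_max_of_lt_right (by linarith)
  have hsub2 : Ioo (max a (z0 / 2 : ℝ)) b ⊆ S ∩ Ioi 0 := fun x hx =>
    ⟨(hsub ⟨lt_of_le_of_lt (le_max_left _ _) hx.1, hx.2⟩).1, ha.trans hx.1⟩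
  have hnotZ : ∀ t ∈ Ioo (max a (z0 / 2 : ℝ)) b, t ∉ Z → t ∈ G := by
    intro t ht hZ
    by_contra h
    exact hZ ⟨(hsub2 ht).2, h⟩
  have key : ∀ {t0 s0 : ℝ}, t0 ∈ Ioo (max a (z0 / 2 : ℝ)) b → t0 ∈ Z → s0 ∈ Ioo c d →
      ContinuousAt (fun p : ℝ × ℝ => v p.1 p.2) (t0, s0) := fun h1 h2 h3 =>
    portion_cont (a := max a (z0 / 2 : ℝ)) (b := b) (n := n) hρ hρ0 hp hL ha (Nat.cast_nonneg n)
    (Z := Z)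
    (fun t ht hZ => by
      filter_upwards [hG.mem_nhds (hnotZ t ht hZ)] with t' ht' h using h.2 ht')
    (fun t ht hZ => hGP t (hnotZ t ht hZ))
    (fun t ht hZ => hSC (show (⟨t, hZ⟩ : Z) ∈ _ from (hsub2 ht).1)) h1 h2 h3
  have hz0m : (z0 : ℝ) ∈ Ioo (max a (z0 / 2 : ℝ)) b := ⟨max_lt hab.1 (by linarith), hab.2⟩
  apply z0.2.2
  show ∀ᶠ t' in 𝓝 (z0 : ℝ), P t'
  filter_upwards [Ioo_mem_nhds hz0m.1 hz0m.2] with t' ht'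
  by_cases h : t' ∈ Z
  · intro s hs
    exact key ht' h hs
  · exact hGP t' (hnotZ t' ht' h)


theorem coord {g : ℝ → ℝ} {c0 : ℝ} (hg : Continuous g) (hc0 : 0 < c0) (hgc : ∀ x, c0 ≤ g x) :
    ∃ S X : ℝ → ℝ, (∀ x, HasDerivAt S (g x) x) ∧ (∀ s, HasDerivAt X (1 / g (X s)) s) ∧
      (∀ x, X (S x) = x) ∧ (∀ s, S (X s) = s) ∧ StrictMono S ∧ StrictMono X := by
  set S : ℝ → ℝ := fun x => ∫ t in (0 : ℝ)..x, g t with hS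
  have hd : ∀ x, HasDerivAt S (g x) x := fun x =>
    intervalIntegral.integral_hasDerivAt_right (hg.intervalIntegrable _ _)
      (hg.stronglyMeasurableAtFilter _ _) hg.continuousAt
  have hmono : StrictMono S := strictMono_of_hasDerivAt_pos hd (fun x => hc0.trans_le (hgc x))
  have hSc : Continuous S := continuous_iff_continuousAt.2 fun x => (hd x).continuousAt
  have hmono2 : Monotone (fun x => S x - c0 * x) := by
    apply monotone_of_hasDerivAt_nonneg (f' := fun x => g x - c0 * 1)
    · intro x
      exact (hd x).sub ((hasDerivAt_id x).const_mul c0)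
    · intro x
      have := hgc x
      simp only [Pi.zero_apply]
      linarith
  have hS0 : S 0 = 0 := by simp [hS]
  have htop : Tendsto S atTop atTop := by
    apply tendsto_atTop_mono' (f₁ := fun x => c0 * x)
    · filter_upwards [eventually_ge_atTop 0] with x hx
      have := hmono2 hx
      simp only [hS0] at this
      linarith
    · exact Tendsto.const_mul_atTop hc0 tendsto_id
  have hbot : Tendsto S atBot atBot := by
    refine tendsto_atBot_mono' (l := atBot) (f₁ := fun x => c0 * x) ?_ ?_
    · filter_upwards [eventually_le_atBot 0] with x hx
      have := hmono2 hx
      simp only [hS0] at this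
      linarith
    · exact Tendsto.const_mul_atBot hc0 tendsto_id
  have hsurj : Function.Surjective S := hSc.surjective htop hbot
  set e := StrictMono.orderIsoOfSurjective S hmono hsurj
  have he : ∀ x, e x = S x := fun x => rfl
  refine ⟨S, e.symm, hd, ?_, fun x => ?_, fun s => ?_, hmono, e.symm.strictMono⟩
  · intro s
    have := HasDerivAt.of_local_left_inverse (f := S) (g := e.symm) (f' := g (e.symm s)) (a := s)
      e.symm.continuous.continuousAt (hd _) (hc0.trans_le (hgc _)).ne'
      (Eventually.of_forall fun y => e.apply_symm_apply y)
    simpa using this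
  · exact e.symm_apply_apply x
  · exact e.apply_symm_apply s

section core
variable {ν a : ℝ → ℝ} {W : ℝ} {u ut ux q : ℝ → ℝ → ℝ}

theorem scheffe (hν0 : ∀ x, 0 < ν x)
    (hut : ∀ t > 0, ∀ x, ContinuousAt (fun τ => u τ x) t)
    (hu0 : ∀ t > 0, ∀ x, 0 ≤ u t x) (h1 : ∀ t > 0, ∫ x, ν x * u t x = 1) {t0 : ℝ} (ht0 : 0 < t0) :
    Tendsto (fun t => ∫ x, ν x * |u t x - u t0 x|) (𝓝 t0) (𝓝 0) := by
  have hi : ∀ t > 0, Integrable (fun x => ν x * u t x) := fun t ht =>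
    integrable_of_integral_eq_one (h1 t ht)
  have hpos : ∀ᶠ t in 𝓝 t0, 0 < t := lt_mem_nhds ht0
  have key : Tendsto (fun t => ∫ x, 2 * max (ν x * u t0 x - ν x * u t x) 0) (𝓝 t0)
      (𝓝 (∫ x : ℝ, (0 : ℝ))) := by
    apply tendsto_integral_filter_of_dominated_convergence (fun x => 2 * (ν x * u t0 x))
    · filter_upwards [hpos] with t ht
      exact ((((hi t0 ht0).sub (hi t ht)).sup (integrable_zero _ _ _)).const_mul 2).aestronglyMeasurable
    · filter_upwards [hpos] with t ht
      refine Eventually.of_forall fun x => ?_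
      have h2 : 0 ≤ ν x * u t x := mul_nonneg (hν0 x).le (hu0 t ht x)
      have h3 : 0 ≤ ν x * u t0 x := mul_nonneg (hν0 x).le (hu0 t0 ht0 x)
      rw [Real.norm_eq_abs, abs_of_nonneg (by positivity)]
      have : max (ν x * u t0 x - ν x * u t x) 0 ≤ ν x * u t0 x := max_le (by linarith) h3
      linarith
    · exact (hi t0 ht0).const_mul 2
    · refine Eventually.of_forall fun x => ?_
      have : ContinuousAt (fun t => 2 * max (ν x * u t0 x - ν x * u t x) 0) t0 := by
        have := hut t0 ht0 x
        fun_prop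
      have h := this.tendsto
      simpa using h
  rw [integral_zero] at key
  refine key.congr' ?_
  filter_upwards [hpos] with t ht
  have e : (fun x => ν x * |u t x - u t0 x|) = fun x =>
      (ν x * u t x - ν x * u t0 x) + 2 * max (ν x * u t0 x - ν x * u t x) 0 := by
    funext x
    have h0 := hν0 x
    rcases le_total (u t x) (u t0 x) with h | h
    · rw [abs_of_nonpos (by linarith), max_eq_left (by nlinarith)]; ring
    · rw [abs_of_nonneg (by linarith), max_eq_right (by nlinarith)]; ring
  have i1 : Integrable (fun x => ν x * u t x - ν x * u t0 x) := (hi t ht).sub (hi t0 ht0)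
  have i2 : Integrable (fun x => 2 * max (ν x * u t0 x - ν x * u t x) 0) :=
    (((hi t0 ht0).sub (hi t ht)).sup (integrable_zero _ _ _)).const_mul 2
  rw [e, integral_add i1 i2,
    integral_sub (hi t ht) (hi t0 ht0), h1 t ht, h1 t0 ht0]
  simp

theorem core_local (hν : Continuous ν) (ha : Continuous a) (hν0 : ∀ x, 0 < ν x) (ha0 : ∀ x, 0 < a x)
    (hsol : ∀ t > 0, ∀ x : ℝ, HasDerivAt (fun τ => u τ x) (ut t x) t ∧
      HasDerivAt (fun ξ => u t ξ) (ux t x) x ∧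
      HasDerivAt (fun ξ => ν ξ * a ξ * ux t ξ) (q t x) x ∧
      ν x * ut t x - q t x + W * ux t x = 0)
    (hu0 : ∀ t > 0, ∀ x, 0 ≤ u t x) (h1 : ∀ t > 0, ∫ x, ν x * u t x = 1) {R : ℝ} (hR : 0 < R) :
    (∀ t > 0, ∀ x ∈ Ioo (-R) R, ContinuousAt (fun p : ℝ × ℝ => u p.1 p.2) (t, x)) ∧
    ∀ t1 t2, 0 < t1 → t1 ≤ t2 → ∃ Ux : ℝ → ℝ, ∀ x ∈ Ioo (-R) R,
      HasDerivAt (fun ξ => ∫ t in t1..t2, u t ξ) (Ux x) x ∧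
      HasDerivAt (fun ξ => ν ξ * a ξ * Ux ξ) (W * Ux x + ν x * (u t2 x - u t1 x)) x := by
  have hb : Continuous (fun x => W / (ν x * a x)) :=
    continuous_const.div (hν.mul ha) (fun x => (mul_pos (hν0 x) (ha0 x)).ne')
  set B : ℝ → ℝ := fun x => ∫ t in (0 : ℝ)..x, W / (ν t * a t) with hB
  have hBd : ∀ x, HasDerivAt B (W / (ν x * a x)) x := fun x =>
    intervalIntegral.integral_hasDerivAt_right (hb.intervalIntegrable _ _)
      (hb.stronglyMeasurableAtFilter _ _) hb.continuousAt
  have hBc : Continuous B := continuous_iff_continuousAt.2 fun x => (hBd x).continuousAt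
  clear_value B
  set G : ℝ → ℝ := fun x => Real.exp (B x) / (ν x * a x) with hG
  have hGc : Continuous G :=
    (Real.continuous_exp.comp hBc).div (hν.mul ha) (fun x => (mul_pos (hν0 x) (ha0 x)).ne')
  have hGpos : ∀ x, 0 < G x := fun x => div_pos (Real.exp_pos _) (mul_pos (hν0 x) (ha0 x))
  set cl : ℝ → ℝ := fun x => max (-R) (min R x) with hcl
  have hclc : Continuous cl := by fun_prop
  have hclm : ∀ x, cl x ∈ Icc (-R) R := fun x =>
    ⟨le_max_left _ _, max_le (by linarith) (min_le_left _ _)⟩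
  have hcle : ∀ x ∈ Icc (-R) R, cl x = x := by
    intro x hx
    simp only [hcl]
    rw [min_eq_right hx.2, max_eq_right hx.1]
  obtain ⟨x0, -, hx0⟩ := isCompact_Icc.exists_isMinOn (s := Icc (-R) R) ⟨0, by constructor <;> linarith⟩
    hGc.continuousOn
  obtain ⟨S, X, hS, hX, hXS, hSX, hSm, hXm⟩ := coord (g := fun x => G (cl x)) (c0 := G x0)
    (hGc.comp hclc) (hGpos x0) (fun x => hx0 (hclm x))
  have hSc : Continuous S := continuous_iff_continuousAt.2 fun x => (hS x).continuousAt
  have hXc : Continuous X := continuous_iff_continuousAt.2 fun x => (hX x).continuousAt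
  set ρ : ℝ → ℝ := fun s => ν (X s) ^ 2 * a (X s) * Real.exp (-(2 * B (X s))) with hρdef
  have hρ : Continuous ρ := by fun_prop
  have hρ0 : ∀ s, 0 < ρ s := fun s => by
    have := hν0 (X s); have := ha0 (X s); positivity
  have hXI : ∀ s ∈ Icc (S (-R)) (S R), X s ∈ Icc (-R) R := by
    intro s hs
    have h2 := hXm.monotone hs.1
    have h3 := hXm.monotone hs.2
    rw [hXS] at h2 h3
    exact ⟨h2, h3⟩
  set v : ℝ → ℝ → ℝ := fun t s => u t (X s) with hv
  set vs : ℝ → ℝ → ℝ := fun t s => Real.exp (-B (X s)) * (ν (X s) * a (X s) * ux t (X s)) with hvs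
  have hp : SPde ρ v (fun t s => ut t (X s)) vs (Ioi 0) (Icc (S (-R)) (S R)) := by
    intro t ht s hs
    obtain ⟨e1, e2, e3, e4⟩ := hsol t ht (X s)
    have hx := hX s
    simp only [hcle _ (hXI s hs), hG] at hx
    have p1 := hν0 (X s)
    have p2 := ha0 (X s)
    refine ⟨e1, ?_, ?_⟩
    · have := e2.comp s hx
      refine this.congr_deriv ?_
      simp only [hvs]
      rw [Real.exp_neg]
      field_simp
    · have hE : HasDerivAt (fun ξ => Real.exp (-B ξ)) _ (X s) := ((hBd (X s)).neg).exp
      have := (hE.mul e3).comp s hx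
      refine this.congr_deriv ?_
      have hq : q t (X s) = ν (X s) * ut t (X s) + W * ux t (X s) := by linarith
      simp only [hρdef, hq]
      have hee : Real.exp (-(2 * B (X s))) = Real.exp (-B (X s)) * Real.exp (-B (X s)) := by
        rw [← Real.exp_add]; ring_nf
      have hie : Real.exp (B (X s)) = (Real.exp (-B (X s)))⁻¹ := by rw [Real.exp_neg, inv_inv]
      rw [hee, hie]
      have hne := Real.exp_pos (-B (X s))
      simp only [Pi.neg_apply]
      field_simp
      ring
  have hutc : ∀ t > 0, ∀ x, ContinuousAt (fun τ => u τ x) t := fun t ht x => (hsol t ht x).1.continuousAt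
  have huc : ∀ t > 0, Continuous (u t) := fun t ht =>
    continuous_iff_continuousAt.2 fun x => (hsol t ht x).2.1.continuousAt
  have hi : ∀ t > 0, Integrable (fun x => ν x * u t x) := fun t ht =>
    integrable_of_integral_eq_one (h1 t ht)
  have hL : L1c ρ v (S (-R)) (S R) := by
    obtain ⟨K, hK⟩ := isCompact_Icc.exists_bound_of_continuousOn (s := Icc (-R) R)
      (f := fun x => Real.exp (-B x)) (by fun_prop)
    have hK0 : 0 ≤ K := (norm_nonneg _).trans (hK 0 (by constructor <;> linarith))
    intro t0 ht0 η hη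
    have hs := scheffe hν0 hutc hu0 h1 ht0
    have hs2 := hs.const_mul K
    rw [mul_zero] at hs2
    filter_upwards [hs2.eventually_lt_const hη, lt_mem_nhds ht0] with t h ht
    refine le_trans ?_ h.le
    have hc : Continuous (fun z => ρ z * |v t z - v t0 z|) := by
      have h2 := huc t ht
      have h3 := huc t0 ht0
      fun_prop
    have hcv := intervalIntegral.integral_comp_mul_deriv (a := -R) (b := R) (f := S)
      (f' := fun x => G (cl x)) (g := fun z => ρ z * |v t z - v t0 z|) (fun x _ => hS x)
      (hGc.comp hclc).continuousOn hc
    rw [← hcv, ← integral_const_mul, intervalIntegral.integral_of_le (by linarith)]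
    have hd : Integrable (fun x => ν x * |u t x - u t0 x|) := by
      have := ((hi t ht).sub (hi t0 ht0)).abs
      refine this.congr (Eventually.of_forall fun x => ?_)
      simp only [Pi.sub_apply]
      rw [← mul_sub, abs_mul, abs_of_pos (hν0 x)]
    calc _ ≤ ∫ x in Ioc (-R) R, K * (ν x * |u t x - u t0 x|) := by
          apply setIntegral_mono_on
          · have : Continuous (fun x => ((fun z => ρ z * |v t z - v t0 z|) ∘ S) x * G (cl x)) :=
              (hc.comp hSc).mul (hGc.comp hclc)
            exact (this.integrableOn_Icc).mono_set Ioc_subset_Icc_self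
          · exact (hd.const_mul K).integrableOn
          · exact measurableSet_Ioc
          · intro x hx
            have hx' := Ioc_subset_Icc_self hx
            have := hK x hx'
            rw [Real.norm_eq_abs, abs_of_pos (Real.exp_pos _)] at this
            simp only [Function.comp, hρdef, hv, hXS, hcle x hx', hG]
            have p1 := hν0 x
            have p2 := ha0 x
            have hee : Real.exp (-(2 * B x)) = Real.exp (-B x) * Real.exp (-B x) := by
              rw [← Real.exp_add]; ring_nf
            have hie : Real.exp (B x) = (Real.exp (-B x))⁻¹ := by rw [Real.exp_neg, inv_inv]
            rw [hee, hie]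
            have hne := Real.exp_pos (-B x)
            have : ν x ^ 2 * a x * (Real.exp (-B x) * Real.exp (-B x)) * |u t x - u t0 x| *
                ((Real.exp (-B x))⁻¹ / (ν x * a x)) = Real.exp (-B x) * (ν x * |u t x - u t0 x|) := by
              field_simp
            rw [this]
            gcongr
      _ ≤ _ := by
          apply setIntegral_le_integral (hd.const_mul K)
          refine Eventually.of_forall fun x => ?_
          have := hν0 x
          simp only [Pi.zero_apply]
          positivity
  have hjc := joint_cont hρ hρ0 hp hL
  have hSI : ∀ x ∈ Ioo (-R) R, S x ∈ Ioo (S (-R)) (S R) := fun x hx => ⟨hSm hx.1, hSm hx.2⟩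
  refine ⟨?_, ?_⟩
  · intro t ht x hx
    have h := hjc t ht (S x) (hSI x hx)
    have hm : ContinuousAt (fun p : ℝ × ℝ => (p.1, S p.2)) (t, x) := by fun_prop
    have := ContinuousAt.comp (f := fun p : ℝ × ℝ => (p.1, S p.2)) (g := fun p : ℝ × ℝ => v p.1 p.2)
      (x := (t, x)) h hm
    refine this.congr (Eventually.of_forall fun p => ?_)
    simp [hv, hXS]
  · intro t1 t2 ht1 ht12
    obtain ⟨U', hU⟩ := weak_v (α := t1 / 2) (β := t2 + 1) (c := S (-R)) (d := S R) (t1 := t1) (t2 := t2)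
      (ρ := ρ) (v := v) (vt := fun t s => ut t (X s)) (vs := vs) (by linarith) ht12 (by linarith)
      (fun p hp' => (hjc p.1 (by have := hp'.1.1; show 0 < p.1; linarith) p.2 hp'.2).continuousWithinAt)
      hρ hρ0 (hp.mono (fun y hy => by have := hy.1; show 0 < y; linarith) Ioo_subset_Icc_self)
    refine ⟨fun x => U' (S x) * G (cl x), fun x hx => ?_⟩
    obtain ⟨d1, d2⟩ := hU (S x) (hSI x hx)
    have hSx := hS x
    have p1 := hν0 x
    have p2 := ha0 x
    constructor
    · have := d1.comp x hSx
      refine this.congr_of_eventuallyEq (Eventually.of_forall fun ξ => ?_)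
      simp [hv, hXS]
    · have h2 := (hBd x).exp.mul (d2.comp x hSx)
      have h3 := h2.congr_of_eventuallyEq (f₁ := fun ξ => ν ξ * a ξ * (U' (S ξ) * G (cl ξ))) (by
        filter_upwards [Ioo_mem_nhds hx.1 hx.2] with ξ hξ
        have p1 := hν0 ξ
        have p2 := ha0 ξ
        simp only [hcle ξ (Ioo_subset_Icc_self hξ), hG, Pi.mul_apply, Function.comp]
        field_simp)
      refine h3.congr_deriv ?_
      simp only [hcle x (Ioo_subset_Icc_self hx), hG, hρdef, hXS, hv, Function.comp]
      have hee : Real.exp (-(2 * B x)) = Real.exp (-B x) * Real.exp (-B x) := by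
        rw [← Real.exp_add]; ring_nf
      rw [hee, Real.exp_neg]
      have := Real.exp_pos (B x)
      field_simp

theorem core_x (hν : Continuous ν) (ha : Continuous a) (hν0 : ∀ x, 0 < ν x) (ha0 : ∀ x, 0 < a x)
    (hsol : ∀ t > 0, ∀ x : ℝ, HasDerivAt (fun τ => u τ x) (ut t x) t ∧
      HasDerivAt (fun ξ => u t ξ) (ux t x) x ∧
      HasDerivAt (fun ξ => ν ξ * a ξ * ux t ξ) (q t x) x ∧
      ν x * ut t x - q t x + W * ux t x = 0)
    (hu0 : ∀ t > 0, ∀ x, 0 ≤ u t x) (h1 : ∀ t > 0, ∫ x, ν x * u t x = 1) :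
    (∀ t > 0, ∀ x, ContinuousAt (fun p : ℝ × ℝ => u p.1 p.2) (t, x)) ∧
    ∀ t1 t2, 0 < t1 → t1 ≤ t2 → ∃ Ux : ℝ → ℝ, ∀ x,
      HasDerivAt (fun ξ => ∫ t in t1..t2, u t ξ) (Ux x) x ∧
      HasDerivAt (fun ξ => ν ξ * a ξ * Ux ξ) (W * Ux x + ν x * (u t2 x - u t1 x)) x := by
  have hin : ∀ x : ℝ, x ∈ Ioo (-(|x| + 1)) (|x| + 1) := fun x =>
    ⟨by linarith [neg_abs_le x], by linarith [le_abs_self x]⟩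
  have hl := fun x : ℝ => core_local hν ha hν0 ha0 hsol hu0 h1 (R := |x| + 1) (by positivity)
  refine ⟨fun t ht x => (hl x).1 t ht x (hin x), fun t1 t2 h1' h2' => ?_⟩
  refine ⟨fun x => deriv (fun ξ => ∫ t in t1..t2, u t ξ) x, fun x => ?_⟩
  obtain ⟨Ux, hU⟩ := (hl x).2 t1 t2 h1' h2'
  have he : ∀ ξ ∈ Ioo (-(|x| + 1)) (|x| + 1), deriv (fun ξ => ∫ t in t1..t2, u t ξ) ξ = Ux ξ :=
    fun ξ hξ => (hU ξ hξ).1.deriv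
  obtain ⟨d1, d2⟩ := hU x (hin x)
  simp only [he x (hin x)]
  refine ⟨d1, d2.congr_of_eventuallyEq ?_⟩
  filter_upwards [Ioo_mem_nhds (hin x).1 (hin x).2] with ξ hξ
  rw [he ξ hξ]

end core


/-- Steklov average in time. -/
noncomputable def avg (h : ℝ) (G : ℝ → ℝ → ℝ) (t n : ℝ) : ℝ := h⁻¹ * ∫ τ in t..t + h, G τ n

/-- Functions with values in `[0,1]` whose Steklov averages solve `g_t = A g_nn - W g_n`. -/
structure Adm (A : ℝ → ℝ) (W : ℝ) (G : ℝ → ℝ → ℝ) : Prop where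
  cont : ∀ t > 0, ∀ n, ContinuousAt (fun p : ℝ × ℝ => G p.1 p.2) (t, n)
  nn : ∀ t > 0, ∀ n, 0 ≤ G t n
  le1 : ∀ t > 0, ∀ n, G t n ≤ 1
  pde : ∀ h > 0, ∃ gn gnn : ℝ → ℝ → ℝ, ∀ t > 0, ∀ n,
    HasDerivAt (fun τ => avg h G τ n) (A n * gnn t n - W * gn t n) t ∧
    HasDerivAt (avg h G t) (gn t n) n ∧ HasDerivAt (gn t) (gnn t n) n

theorem Adm.contOn {A : ℝ → ℝ} {W : ℝ} {G : ℝ → ℝ → ℝ} (H : Adm A W G) (n : ℝ) :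
    ContinuousOn (fun τ => G τ n) (Ioi 0) := by
  intro t ht
  have h := H.cont t ht n
  have h2 : ContinuousAt (fun τ : ℝ => (τ, n)) t := by fun_prop
  exact (ContinuousAt.comp (f := fun τ : ℝ => (τ, n)) (g := fun p : ℝ × ℝ => G p.1 p.2) h h2).continuousWithinAt

theorem Adm.ii {A : ℝ → ℝ} {W : ℝ} {G : ℝ → ℝ → ℝ} (H : Adm A W G) (n : ℝ) {a b : ℝ} (ha : 0 < a)
    (hab : a ≤ b) : IntervalIntegrable (fun τ => G τ n) volume a b := by
  apply ContinuousOn.intervalIntegrable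
  rw [uIcc_of_le hab]
  exact (H.contOn n).mono fun x hx => ha.trans_le hx.1

theorem avg_le {A : ℝ → ℝ} {W : ℝ} {G : ℝ → ℝ → ℝ} (H : Adm A W G) {h t n k : ℝ} (hh : 0 < h)
    (ht : 0 < t) (hk : ∀ τ ∈ Icc t (t + h), G τ n ≤ k) : avg h G t n ≤ k := by
  unfold avg
  have : ∫ τ in t..t + h, G τ n ≤ ∫ τ in t..t + h, k := by
    apply intervalIntegral.integral_mono_on (by linarith) (H.ii n ht (by linarith)) (by simp) hk
  rw [intervalIntegral.integral_const, add_sub_cancel_left, smul_eq_mul] at this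
  rw [inv_mul_le_iff₀ hh]
  exact this

theorem le_avg {A : ℝ → ℝ} {W : ℝ} {G : ℝ → ℝ → ℝ} (H : Adm A W G) {h t n k : ℝ} (hh : 0 < h)
    (ht : 0 < t) (hk : ∀ τ ∈ Icc t (t + h), k ≤ G τ n) : k ≤ avg h G t n := by
  unfold avg
  have : ∫ τ in t..t + h, k ≤ ∫ τ in t..t + h, G τ n := by
    apply intervalIntegral.integral_mono_on (by linarith) (by simp) (H.ii n ht (by linarith)) hk
  rw [intervalIntegral.integral_const, add_sub_cancel_left, smul_eq_mul] at this
  rw [le_inv_mul_iff₀ hh]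
  exact this

theorem avg_cont {G : ℝ → ℝ → ℝ}
    (hc : ∀ t > 0, ∀ n, ContinuousAt (fun p : ℝ × ℝ => G p.1 p.2) (t, n))
    {h t0 n0 : ℝ} (hh : 0 < h) (ht0 : 0 < t0) :
    ContinuousAt (fun p : ℝ × ℝ => avg h G p.1 p.2) (t0, n0) := by
  have hc2 : Continuous (fun p : (ℝ × ℝ) × ℝ => G (max (p.1.1 + p.2) (t0 / 2)) p.1.2) := by
    rw [continuous_iff_continuousAt]
    intro p
    have h1 := hc (max (p.1.1 + p.2) (t0 / 2)) (lt_max_of_lt_right (by linarith)) p.1.2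
    exact ContinuousAt.comp (f := fun p : (ℝ × ℝ) × ℝ => (max (p.1.1 + p.2) (t0 / 2), p.1.2))
      (g := fun p : ℝ × ℝ => G p.1 p.2) h1 (by fun_prop)
  have h3 : Continuous (fun p : ℝ × ℝ => ∫ τ in (0 : ℝ)..h, G (max (p.1 + τ) (t0 / 2)) p.2) :=
    intervalIntegral.continuous_parametric_intervalIntegral_of_continuous' (f := fun (p : ℝ × ℝ) τ => G (max (p.1 + τ) (t0 / 2)) p.2) hc2 0 h
  have h4 : ContinuousAt (fun p : ℝ × ℝ => h⁻¹ * ∫ τ in (0 : ℝ)..h, G (max (p.1 + τ) (t0 / 2)) p.2) (t0, n0) :=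
    (continuous_const.mul h3).continuousAt
  refine h4.congr ?_
  have : ∀ᶠ p : ℝ × ℝ in 𝓝 (t0, n0), t0 / 2 < p.1 :=
    continuousAt_fst.eventually (lt_mem_nhds (by simp; linarith))
  filter_upwards [this] with p hp
  unfold avg
  congr 1
  have e : ∫ τ in p.1..p.1 + h, G τ p.2 = ∫ τ in (0 : ℝ)..h, G (p.1 + τ) p.2 := by
    rw [intervalIntegral.integral_comp_add_left (fun τ => G τ p.2)]
    simp
  rw [e]
  apply intervalIntegral.integral_congr
  intro τ hτ
  rw [uIcc_of_le hh.le] at hτ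
  simp only
  rw [max_eq_left (by linarith [hτ.1])]

theorem avg_tendsto {A : ℝ → ℝ} {W : ℝ} {G : ℝ → ℝ → ℝ} (H : Adm A W G) {t n : ℝ} (ht : 0 < t) :
    Tendsto (fun h => avg h G t n) (𝓝[>] 0) (𝓝 (G t n)) := by
  rw [Metric.tendsto_nhds]
  intro ε hε
  have hc : ContinuousAt (fun τ => G τ n) t := (H.contOn n).continuousAt (Ioi_mem_nhds ht)
  obtain ⟨δ, hδ, hδ'⟩ := Metric.continuousAt_iff.1 hc (ε / 2) (by linarith)
  filter_upwards [Ioo_mem_nhdsGT hδ] with h hh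
  have hb : ∀ τ ∈ Icc t (t + h), |G τ n - G t n| < ε / 2 := by
    intro τ hτ
    have := @hδ' τ (by rw [Real.dist_eq, abs_of_nonneg (by linarith [hτ.1])]; linarith [hτ.2, hh.2])
    rwa [Real.dist_eq] at this
  have h1 := avg_le H hh.1 ht (n := n) (k := G t n + ε / 2) (fun τ hτ => by linarith [abs_lt.1 (hb τ hτ)])
  have h2 := le_avg H hh.1 ht (n := n) (k := G t n - ε / 2) (fun τ hτ => by linarith [abs_lt.1 (hb τ hτ)])
  rw [Real.dist_eq, abs_lt]
  constructor <;> linarith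

theorem tail {z zn znn : ℝ → ℝ → ℝ} {A : ℝ → ℝ} {W Λ β t1 t2 m0 ε n : ℝ} (ht : t1 ≤ t2)
    (hcont : ∀ t ∈ Icc t1 t2, ∀ n, ContinuousAt (fun p : ℝ × ℝ => z p.1 p.2) (t, n))
    (hpde : ∀ t ∈ Icc t1 t2, ∀ n, HasDerivAt (fun τ => z τ n) (A n * znn t n - W * zn t n) t ∧
      HasDerivAt (z t) (zn t n) n ∧ HasDerivAt (zn t) (znn t n) n)
    (hA0 : ∀ n, 0 ≤ A n) (hA : ∀ n, A n ≤ Λ) (hβ : 0 ≤ β) (hε : 0 ≤ ε)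
    (hz1 : ∀ t ∈ Icc t1 t2, ∀ n, z t n ≤ 1) (hz0 : ∀ n, m0 ≤ n → z t1 n ≤ ε) :
    z t2 n ≤ ε + Real.exp (-β * (n - m0 - W * (t2 - t1)) + Λ * β ^ 2 * (t2 - t1)) := by
  have hΛ : 0 ≤ Λ := (hA0 0).trans (hA 0)
  apply le_of_eps (K := (n - m0 - W * (t2 - t1)) ^ 2 + 2 * Λ * (t2 - t1))
  intro κ hκ
  set L := |W| * (t2 - t1) + (1 / κ + 1) + |n - m0| with hL
  have hWt : 0 ≤ |W| * (t2 - t1) := mul_nonneg (abs_nonneg _) (by linarith)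
  have hk1 : 0 < 1 / κ := by positivity
  set ξ : ℝ → ℝ → ℝ := fun t n => n - m0 - W * (t - t1) with hξ
  set E : ℝ → ℝ → ℝ := fun t n => Real.exp (-β * ξ t n + Λ * β ^ 2 * (t - t1)) with hE
  set y : ℝ → ℝ → ℝ := fun t n => z t n - (ε + E t n + κ * (ξ t n ^ 2 + 2 * Λ * (t - t1))) with hy
  have hξt : ∀ t n, HasDerivAt (fun τ => ξ τ n) (-W) t := by
    intro t n
    have := (((hasDerivAt_id t).sub_const t1).const_mul W).const_sub (n - m0)
    simpa using this
  have hξn : ∀ t n, HasDerivAt (ξ t) 1 n := by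
    intro t n
    exact ((hasDerivAt_id n).sub_const m0).sub_const (W * (t - t1))
  have hside : ∀ t ∈ Icc t1 t2, ∀ x, |x - m0| = L → y t x ≤ 0 := by
    intro t ht' x hx
    have h1 : |W * (t - t1)| ≤ |W| * (t2 - t1) := by
      rw [abs_mul, abs_of_nonneg (by linarith [ht'.1] : (0 : ℝ) ≤ t - t1)]
      exact mul_le_mul_of_nonneg_left (by linarith [ht'.2]) (abs_nonneg _)
    have h2 : 1 / κ + 1 ≤ |ξ t x| := by
      have := abs_sub_abs_le_abs_sub (x - m0) (W * (t - t1))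
      simp only [hξ]
      have := abs_nonneg (n - m0)
      linarith
    have h3 : (1 / κ + 1) ^ 2 ≤ ξ t x ^ 2 := by
      rw [← sq_abs (ξ t x)]
      gcongr
    have h4 : 1 ≤ κ * ξ t x ^ 2 := by
      calc 1 ≤ κ * (1 / κ + 1) ^ 2 := by
            have : κ * (1 / κ + 1) ^ 2 = 1 / κ + 2 + κ := by field_simp; ring
            linarith
        _ ≤ _ := by gcongr
    have h5 : 0 ≤ κ * (2 * Λ * (t - t1)) := by
      have : 0 ≤ t - t1 := by linarith [ht'.1]
      positivity
    have h6 := hz1 t ht' x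
    have h7 : 0 < E t x := Real.exp_pos _
    simp only [hy]
    rw [mul_add]
    linarith
  have hw := wmp (z := y) (A := A) (W := W) (t0 := t1) (t1 := t2) (c := m0 - L) (d := m0 + L)
    (zt := fun t n => (A n * znn t n - W * zn t n) - ((β * W + Λ * β ^ 2) * E t n + κ * (-2 * W * ξ t n + 2 * Λ)))
    (zx := fun t n => zn t n - (-β * E t n + 2 * κ * ξ t n))
    (zxx := fun t n => znn t n - (β ^ 2 * E t n + 2 * κ)) ?_ ?_ ?_ ?_ ?_ t2 ⟨ht, le_rfl⟩ n ?_
  · simp only [hy, hE, hξ] at hw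
    linarith
  · intro p hp
    refine ContinuousAt.continuousWithinAt ?_
    refine (hcont p.1 hp.1 p.2).sub ?_
    simp only [hE, hξ]
    fun_prop
  · intro t ht' x hx
    obtain ⟨d1, d2, d3⟩ := hpde t (Ioc_subset_Icc_self ht') x
    have e1 := hξt t x
    have e2 := hξn t x
    have hid : HasDerivAt (fun τ : ℝ => τ - t1) 1 t := (hasDerivAt_id t).sub_const t1
    have hEt : HasDerivAt (fun τ => E τ x) ((β * W + Λ * β ^ 2) * E t x) t := by
      refine ((e1.const_mul (-β)).add (hid.const_mul (Λ * β ^ 2))).exp.congr_deriv ?_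
      simp only [hE, Pi.add_apply]; ring
    have hEn : HasDerivAt (E t) (-β * E t x) x := by
      refine ((e2.const_mul (-β)).add_const (Λ * β ^ 2 * (t - t1))).exp.congr_deriv ?_
      simp only [hE]; ring
    refine ⟨?_, ?_, ?_, ?_, hA0 x⟩
    · refine (d1.sub ((hEt.const_add ε).add (((e1.pow 2).add (hid.const_mul (2 * Λ))).const_mul κ))).congr_deriv ?_
      simp
      left
      ring
    · refine (d2.sub ((hEn.const_add ε).add (((e2.pow 2).add_const (2 * Λ * (t - t1))).const_mul κ))).congr_deriv ?_
      simp; ring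
    · refine (d3.sub ((hEn.const_mul (-β)).add (e2.const_mul (2 * κ)))).congr_deriv ?_
      ring
    · have h7 : 0 < E t x := Real.exp_pos _
      have h8 := hA x
      have h9 : 0 ≤ (Λ - A x) * (β ^ 2 * E t x) := mul_nonneg (by linarith) (by positivity)
      have h10 : 0 ≤ (Λ - A x) * (2 * κ) := mul_nonneg (by linarith) (by positivity)
      nlinarith
  · intro x hx
    simp only [hy, hE, hξ, sub_self, mul_zero, sub_zero, add_zero]
    have hsq : 0 ≤ κ * (x - m0) ^ 2 := by positivity
    rcases le_total m0 x with h | h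
    · have := hz0 x h
      have := Real.exp_pos (-β * (x - m0))
      linarith
    · have := hz1 t1 ⟨le_rfl, ht⟩ x
      have h2 : 1 ≤ Real.exp (-β * (x - m0)) := Real.one_le_exp (by nlinarith)
      linarith
  · intro t ht'
    exact hside t ht' _ (by
      have : 0 ≤ L := by positivity
      rw [sub_sub_cancel_left, abs_neg, abs_of_nonneg this])
  · intro t ht'
    exact hside t ht' _ (by
      have : 0 ≤ L := by positivity
      rw [add_sub_cancel_left, abs_of_nonneg this])
  · have h1 := neg_abs_le (n - m0)
    have h2 := le_abs_self (n - m0)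
    constructor <;> linarith

theorem gauss_tail {G : ℝ → ℝ → ℝ} {A : ℝ → ℝ} {W Λ m : ℝ} (H : Adm A W G)
    (hA0 : ∀ n, 0 ≤ A n) (hA : ∀ n, A n ≤ Λ)
    (hmono : ∀ t > 0, Antitone (G t))
    (hinit : ∀ κ > 0, Tendsto (fun t => G t (m + κ)) (𝓝[>] 0) (𝓝 0))
    {β t n : ℝ} (hβ : 0 ≤ β) (ht : 0 < t) :
    G t n ≤ Real.exp (-β * (n - m - W * t) + Λ * β ^ 2 * t) := by
  have key : ∀ κ > 0, ∀ ε > 0,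
      G t n ≤ ε + Real.exp (-β * (n - (m + κ) - W * t) + Λ * β ^ 2 * t) := by
    intro κ hκ ε hε
    have h1 := (hinit κ hκ).eventually_le_const hε
    obtain ⟨ts, hts, hts'⟩ := mem_nhdsGT_iff_exists_Ioo_subset.1 h1
    have hts0 : 0 < ts := hts
    have step1 : ∀ t1 > 0, t1 < ts / 2 → t1 < t → ∀ h > 0, h < ts / 2 →
        avg h G t n ≤ ε + Real.exp (-β * (n - (m + κ) - W * (t - t1)) + Λ * β ^ 2 * (t - t1)) := by
      intro t1 ht1 ht1s ht1t h hh hhs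
      obtain ⟨gn, gnn, hg⟩ := H.pde h hh
      refine tail (z := avg h G) (zn := gn) (znn := gnn) (A := A) ht1t.le ?_ ?_ hA0 hA hβ hε.le ?_ ?_
      · intro s hs x
        exact avg_cont H.cont hh (ht1.trans_le hs.1)
      · intro s hs x
        exact hg s (ht1.trans_le hs.1) x
      · intro s hs x
        exact avg_le H hh (ht1.trans_le hs.1) fun τ hτ =>
          H.le1 τ ((ht1.trans_le hs.1).trans_le hτ.1) x
      · intro x hx
        apply avg_le H hh ht1
        intro τ hτ
        have hτ0 : 0 < τ := ht1.trans_le hτ.1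
        exact (hmono τ hτ0 hx).trans (hts' ⟨hτ0, by linarith [hτ.2]⟩)
    have step2 : ∀ t1 > 0, t1 < ts / 2 → t1 < t →
        G t n ≤ ε + Real.exp (-β * (n - (m + κ) - W * (t - t1)) + Λ * β ^ 2 * (t - t1)) := by
      intro t1 h1 h2 h3
      refine le_of_tendsto (avg_tendsto H ht (n := n)) ?_
      filter_upwards [Ioo_mem_nhdsGT (half_pos hts0)] with h hh
      exact step1 t1 h1 h2 h3 h hh.1 hh.2
    have hlim : Tendsto (fun t1 => ε + Real.exp (-β * (n - (m + κ) - W * (t - t1)) + Λ * β ^ 2 * (t - t1)))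
        (𝓝[>] 0) (𝓝 (ε + Real.exp (-β * (n - (m + κ) - W * (t - 0)) + Λ * β ^ 2 * (t - 0)))) := by
      apply Tendsto.mono_left _ nhdsWithin_le_nhds
      apply Continuous.tendsto (f := fun t1 : ℝ => ε + Real.exp (-β * (n - (m + κ) - W * (t - t1)) + Λ * β ^ 2 * (t - t1)))
      fun_prop
    rw [sub_zero] at hlim
    refine ge_of_tendsto hlim ?_
    filter_upwards [Ioo_mem_nhdsGT (half_pos hts0), Ioo_mem_nhdsGT ht] with t1 h1 h2
    exact step2 t1 h1.1 h1.2 h2.2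
  have hlim : Tendsto (fun κ => κ + Real.exp (-β * (n - (m + κ) - W * t) + Λ * β ^ 2 * t))
      (𝓝[>] 0) (𝓝 (0 + Real.exp (-β * (n - (m + 0) - W * t) + Λ * β ^ 2 * t))) := by
    apply Tendsto.mono_left _ nhdsWithin_le_nhds
    apply Continuous.tendsto (f := fun κ : ℝ => κ + Real.exp (-β * (n - (m + κ) - W * t) + Λ * β ^ 2 * t))
    fun_prop
  rw [zero_add, add_zero] at hlim
  refine ge_of_tendsto hlim ?_
  filter_upwards [self_mem_nhdsWithin] with κ hκ
  exact key κ hκ κ hκ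


theorem Adm.one_sub {A : ℝ → ℝ} {W : ℝ} {G : ℝ → ℝ → ℝ} (H : Adm A W G) :
    Adm A W (fun t n => 1 - G t n) where
  cont t ht n := continuousAt_const.sub (H.cont t ht n)
  nn t ht n := by linarith [H.le1 t ht n]
  le1 t ht n := by linarith [H.nn t ht n]
  pde h hh := by
    obtain ⟨gn, gnn, hg⟩ := H.pde h hh
    have e : ∀ t > 0, ∀ n, avg h (fun t n => 1 - G t n) t n = 1 - avg h G t n := by
      intro t ht n
      unfold avg
      rw [intervalIntegral.integral_sub (by simp) (H.ii n ht (by linarith))]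
      simp only [intervalIntegral.integral_const, add_sub_cancel_left, smul_eq_mul, mul_one]
      rw [mul_sub, inv_mul_cancel₀ hh.ne']
    refine ⟨fun t n => -gn t n, fun t n => -gnn t n, fun t ht n => ?_⟩
    obtain ⟨d1, d2, d3⟩ := hg t ht n
    refine ⟨?_, ?_, d3.neg⟩
    · have := (d1.const_sub 1).congr_of_eventuallyEq (f₁ := fun τ => avg h (fun t n => 1 - G t n) τ n) (by
        filter_upwards [Ioi_mem_nhds ht] with τ hτ
        exact e τ hτ n)
      exact this.congr_deriv (by ring)
    · exact (d2.const_sub 1).congr_of_eventuallyEq (Eventually.of_forall fun x => e t ht x)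

theorem Adm.reflect {A : ℝ → ℝ} {W : ℝ} {G : ℝ → ℝ → ℝ} (H : Adm A W G) :
    Adm (fun n => A (-n)) (-W) (fun t n => G t (-n)) where
  cont t ht n := ContinuousAt.comp (f := fun p : ℝ × ℝ => (p.1, -p.2))
      (g := fun p : ℝ × ℝ => G p.1 p.2) (x := (t, n)) (H.cont t ht (-n)) (by fun_prop)
  nn t ht n := H.nn t ht (-n)
  le1 t ht n := H.le1 t ht (-n)
  pde h hh := by
    obtain ⟨gn, gnn, hg⟩ := H.pde h hh
    refine ⟨fun t n => -gn t (-n), fun t n => gnn t (-n), fun t ht n => ?_⟩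
    obtain ⟨d1, d2, d3⟩ := hg t ht (-n)
    have hneg : HasDerivAt (fun x : ℝ => -x) (-1) n := (hasDerivAt_id n).neg
    refine ⟨d1.congr_deriv (by ring), ?_, ?_⟩
    · exact (d2.comp n hneg).congr_deriv (by ring)
    · exact (d3.comp n hneg).neg.congr_deriv (by ring)

theorem pb {F : ℝ → ℝ → ℝ} {A : ℝ → ℝ} {W lam M0 t n0 uh : ℝ} (H : Adm A W F) (hlam : 0 < lam)
    (hA : ∀ n, lam ≤ A n) (ht : 0 < t) (M k : ℝ → ℝ) (hM : Tendsto M (𝓝[>] 0) (𝓝 M0))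
    (hM0 : ∀ h, 0 ≤ M h)
    (hb : ∀ h > 0, ∀ τ ∈ Icc (t / 2) (t + h), ∀ x, |x - (n0 + W * (τ - t))| ≤ Real.sqrt t + |W| * h →
      k h ≤ F τ x ∧ F τ x ≤ k h + M h)
    (hd : HasDerivAt (F t) uh n0) : uh ≤ 4 * (2 + 1 / lam) / Real.sqrt t * M0 := by
  set R := Real.sqrt t with hR
  have hR0 : 0 < R := Real.sqrt_pos.2 ht
  have hR2 : R ^ 2 = t := Real.sq_sqrt ht.le
  have step1 : ∀ h > 0, ∀ x, n0 ≤ x → x ≤ n0 + R → avg h F t x - avg h F t n0 ≤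
      4 * (2 + 1 / lam) / R * M h * (x - n0) + M h / t * (x - n0) ^ 2 := by
    intro h hh x hx hxR
    obtain ⟨gn, gnn, hg⟩ := H.pde h hh
    have hrng : ∀ s y, t - t / 2 ≤ s → s ≤ t → |y - (n0 + W * (s - t))| ≤ R →
        k h ≤ avg h F s y ∧ avg h F s y ≤ k h + M h := by
      intro s y hs hst hy
      have hs0 : 0 < s := by linarith
      have hin : ∀ τ ∈ Icc s (s + h), k h ≤ F τ y ∧ F τ y ≤ k h + M h := by
        intro τ hτ
        apply hb h hh τ ⟨by linarith [hτ.1], by linarith [hτ.2]⟩ y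
        have e : y - (n0 + W * (τ - t)) = (y - (n0 + W * (s - t))) + - (W * (τ - s)) := by ring
        rw [e]
        refine (abs_add_le _ _).trans (add_le_add hy ?_)
        rw [abs_neg, abs_mul, abs_of_nonneg (by linarith [hτ.1] : (0 : ℝ) ≤ τ - s)]
        exact mul_le_mul_of_nonneg_left (by linarith [hτ.2]) (abs_nonneg _)
      exact ⟨le_avg H hh hs0 fun τ hτ => (hin τ hτ).1, avg_le H hh hs0 fun τ hτ => (hin τ hτ).2⟩
    have hk := kruzhkov (f := avg h F) (ft := fun t n => A n * gnn t n - W * gn t n) (fx := gn)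
      (fxx := gnn) (A := A) (W := W) (T := t) (δ := t / 2) (R := R) (x0 := n0) (M := M h) (lam := lam)
      (by linarith) hR0 (hM0 h) hlam
      (fun p hp => (avg_cont H.cont hh (by have := hp.1; linarith)).continuousWithinAt)
      (fun s y hs1 hs2 _ => by
        obtain ⟨d1, d2, d3⟩ := hg s (by linarith) y
        exact ⟨d1, d2, d3, rfl, hA y⟩)
      (fun s x y hs1 hs2 hx hy => by
        have h1 := (hrng s x hs1 hs2 hx).2
        have h2 := (hrng s y hs1 hs2 hy).1
        linarith)
      x n0 hx (by rw [abs_of_nonneg (by linarith)]; linarith) (by simp [hR0.le])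
    refine hk.trans (le_of_eq ?_)
    rw [sub_self, hR2]
    have : 4 * R * (2 * (M h / t) + M h / (t / 2) / (2 * lam)) = 4 * (2 + 1 / lam) / R * M h := by
      rw [← hR2]
      field_simp
    rw [this]
    ring
  have step2 : ∀ x, n0 ≤ x → x ≤ n0 + R → F t x - F t n0 ≤
      4 * (2 + 1 / lam) / R * M0 * (x - n0) + M0 / t * (x - n0) ^ 2 := by
    intro x hx hxR
    refine le_of_tendsto_of_tendsto ((avg_tendsto H ht (n := x)).sub (avg_tendsto H ht (n := n0)))
      (((hM.const_mul (4 * (2 + 1 / lam) / R)).mul_const (x - n0)).add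
        ((hM.div_const t).mul_const ((x - n0) ^ 2))) ?_
    filter_upwards [self_mem_nhdsWithin] with h hh
    exact step1 h hh x hx hxR
  have h3 := hd.hasDerivWithinAt (s := Ioi n0) 
  rw [hasDerivWithinAt_iff_tendsto_slope' (by simp)] at h3
  have h4 : Tendsto (fun x => 4 * (2 + 1 / lam) / R * M0 + M0 / t * (x - n0)) (𝓝[>] n0)
      (𝓝 (4 * (2 + 1 / lam) / R * M0 + M0 / t * (n0 - n0))) := by
    apply Tendsto.mono_left _ nhdsWithin_le_nhds
    apply Continuous.tendsto (f := fun x => 4 * (2 + 1 / lam) / R * M0 + M0 / t * (x - n0))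
    fun_prop
  rw [sub_self, mul_zero, add_zero] at h4
  refine le_of_tendsto_of_tendsto h3 h4 ?_
  filter_upwards [Ioo_mem_nhdsGT (show n0 < n0 + R by linarith)] with x hx
  have hx1 : 0 < x - n0 := by linarith [hx.1]
  rw [slope_def_field, div_le_iff₀ hx1]
  refine (step2 x hx.1.le hx.2.le).trans (le_of_eq ?_)
  ring

theorem point_bound {F : ℝ → ℝ → ℝ} {A : ℝ → ℝ} {W lam Λ m t n0 uh : ℝ} (H : Adm A W F)
    (hlam : 0 < lam) (hA : ∀ n, lam ≤ A n) (hA2 : ∀ n, A n ≤ Λ) (ht : 0 < t)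
    (hmono : ∀ t > 0, Monotone (F t))
    (hr : ∀ κ > 0, Tendsto (fun t => F t (m + κ)) (𝓝[>] 0) (𝓝 1))
    (hl : ∀ κ > 0, Tendsto (fun t => F t (m - κ)) (𝓝[>] 0) (𝓝 0))
    (hd : HasDerivAt (F t) uh n0) :
    uh ≤ 4 * (2 + 1 / lam) / Real.sqrt t *
      (Real.exp (1 / (2 * Λ)) * Real.exp (-(n0 - m - W * t) ^ 2 / (8 * Λ * t))) := by
  have hΛ : 0 < Λ := hlam.trans_le ((hA 0).trans (hA2 0))
  have hA0 : ∀ n, 0 ≤ A n := fun n => hlam.le.trans (hA n)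
  set D := n0 - m - W * t with hD
  set R := Real.sqrt t with hR
  have hR0 : 0 < R := Real.sqrt_pos.2 ht
  have hR2 : R ^ 2 = t := Real.sq_sqrt ht.le
  set β := |D| / (2 * Λ * t) with hβ
  have hβ0 : 0 ≤ β := by positivity
  set M : ℝ → ℝ := fun h => Real.exp (-β * (|D| - R - |W| * h) + Λ * β ^ 2 * (t + h)) with hM
  have hMt : Tendsto M (𝓝[>] 0) (𝓝 (M 0)) := by
    apply Tendsto.mono_left _ nhdsWithin_le_nhds
    apply Continuous.tendsto
    fun_prop
  have hM0 : M 0 ≤ Real.exp (1 / (2 * Λ)) * Real.exp (-D ^ 2 / (8 * Λ * t)) := by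
    rw [← Real.exp_add]
    apply Real.exp_le_exp.2
    rw [hβ, ← sq_abs D, mul_zero, sub_zero, add_zero, ← sub_nonneg]
    have : 1 / (2 * Λ) + -|D| ^ 2 / (8 * Λ * t) - (-(|D| / (2 * Λ * t)) * (|D| - R) +
        Λ * (|D| / (2 * Λ * t)) ^ 2 * t) = (|D| - 2 * R) ^ 2 / (8 * Λ * t) := by
      rw [← hR2]
      field_simp
      ring
    rw [this]
    positivity
  have hMle : ∀ h > 0, ∀ τ ∈ Icc (t / 2) (t + h), ∀ r, |D| - R - |W| * h ≤ r →
      Real.exp (-β * r + Λ * β ^ 2 * τ) ≤ M h := by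
    intro h hh τ hτ r hr
    apply Real.exp_le_exp.2
    have h1 := mul_le_mul_of_nonneg_left hr hβ0
    have h2 := mul_le_mul_of_nonneg_left hτ.2 (show 0 ≤ Λ * β ^ 2 by positivity)
    linarith
  have hfin : uh ≤ 4 * (2 + 1 / lam) / R * M 0 := by
    rcases le_total 0 D with h | h
    · refine pb H hlam hA ht M (fun h => 1 - M h) hMt (fun h => (Real.exp_pos _).le) ?_ hd
      intro h' hh τ hτ x hx
      have hτ0 : 0 < τ := by linarith [hτ.1]
      have h1 := gauss_tail (m := m) (n := x) H.one_sub hA0 hA2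
        (fun t ht x y hxy => by have := hmono t ht hxy; simp only; linarith)
        (fun κ hκ => by simpa using (hr κ hκ).const_sub 1) hβ0 hτ0
      have h2 := hMle h' hh τ hτ (x - m - W * τ) (by
        rw [abs_of_nonneg h]
        have := (abs_le.1 hx).1
        simp only [hD]
        linarith)
      exact ⟨by linarith, by linarith [H.le1 τ hτ0 x]⟩
    · refine pb H hlam hA ht M (fun h => 0) hMt (fun h => (Real.exp_pos _).le) ?_ hd
      intro h' hh τ hτ x hx
      have hτ0 : 0 < τ := by linarith [hτ.1]
      have h1 := gauss_tail (m := -m) (n := -x) H.reflect (fun n => hA0 _) (fun n => hA2 _)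
        (fun t ht x y hxy => hmono t ht (neg_le_neg hxy))
        (fun κ hκ => by
          have := hl κ hκ
          refine this.congr fun t => ?_
          congr 1; ring) hβ0 hτ0
      have h2 := hMle h' hh τ hτ (-x - -m - -W * τ) (by
        rw [abs_of_nonpos h]
        have := (abs_le.1 hx).2
        simp only [hD]
        linarith)
      simp only [neg_neg] at h1
      exact ⟨H.nn τ hτ0 x, by linarith⟩
  refine hfin.trans (mul_le_mul_of_nonneg_left hM0 (by positivity))


theorem avg_time_deriv {f : ℝ → ℝ} (hf : ContinuousOn f (Ioi 0)) {t h : ℝ} (ht : 0 < t) (hh : 0 < h) :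
    HasDerivAt (fun s => ∫ τ in s..s + h, f τ) (f (t + h) - f t) t := by
  have hii : ∀ a b, 0 < a → 0 < b → IntervalIntegrable f volume a b := by
    intro a b ha hb
    apply ContinuousOn.intervalIntegrable
    exact hf.mono fun x hx => lt_of_lt_of_le (lt_min ha hb) hx.1
  have hd : ∀ s, 0 < s → HasDerivAt (fun r => ∫ τ in t..r, f τ) (f s) s := by
    intro s hs
    exact intervalIntegral.integral_hasDerivAt_right (hii t s ht hs)
      (hf.stronglyMeasurableAtFilter isOpen_Ioi s hs) (hf.continuousAt (Ioi_mem_nhds hs))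
  have h1 := ((hd (t + h) (by linarith)).comp_add_const t h).sub (hd t ht)
  refine h1.congr_of_eventuallyEq ?_
  filter_upwards [Ioi_mem_nhds ht] with s hs
  have hs' : 0 < s := hs
  have := intervalIntegral.integral_interval_sub_left (hii t (s + h) ht (by linarith)) (hii t s ht hs')
  simp only [Pi.sub_apply]
  rw [this]

section
variable {ν a : ℝ → ℝ} {W : ℝ} {u ut ux q : ℝ → ℝ → ℝ}

/-- The distribution function. -/
noncomputable def cdfF (ν : ℝ → ℝ) (u : ℝ → ℝ → ℝ) (t x : ℝ) : ℝ := ∫ z in Iic x, ν z * u t z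

theorem cdf_deriv (hν : Continuous ν) (huc : ∀ t > 0, Continuous (u t))
    (h1 : ∀ t > 0, ∫ x, ν x * u t x = 1) {t : ℝ} (ht : 0 < t) (x : ℝ) :
    HasDerivAt (cdfF ν u t) (ν x * u t x) x := by
  have hi : Integrable (fun x => ν x * u t x) := integrable_of_integral_eq_one (h1 t ht)
  have hc : Continuous (fun x => ν x * u t x) := hν.mul (huc t ht)
  have e : cdfF ν u t = fun x => cdfF ν u t 0 + ∫ z in (0 : ℝ)..x, ν z * u t z := by
    funext x
    unfold cdfF
    rw [← intervalIntegral.integral_Iic_sub_Iic hi.integrableOn hi.integrableOn]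
    ring
  rw [e]
  exact (intervalIntegral.integral_hasDerivAt_right (hc.intervalIntegrable _ _)
      (hc.stronglyMeasurableAtFilter _ _) hc.continuousAt).const_add _

theorem cdf_nn (hν0 : ∀ x, 0 < ν x) (hu0 : ∀ t > 0, ∀ x, 0 ≤ u t x) {t : ℝ} (ht : 0 < t) (x : ℝ) :
    0 ≤ cdfF ν u t x :=
  setIntegral_nonneg measurableSet_Iic fun z _ => mul_nonneg (hν0 z).le (hu0 t ht z)

theorem cdf_mono (hν0 : ∀ x, 0 < ν x) (hu0 : ∀ t > 0, ∀ x, 0 ≤ u t x)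
    (h1 : ∀ t > 0, ∫ x, ν x * u t x = 1) {t : ℝ} (ht : 0 < t) : Monotone (cdfF ν u t) := by
  intro x y hxy
  have hi : Integrable (fun x => ν x * u t x) := integrable_of_integral_eq_one (h1 t ht)
  exact setIntegral_mono_set hi.integrableOn
    (Eventually.of_forall fun z => mul_nonneg (hν0 z).le (hu0 t ht z))
    (Iic_subset_Iic.2 hxy).eventuallyLE

theorem cdf_le1 (hν0 : ∀ x, 0 < ν x) (hu0 : ∀ t > 0, ∀ x, 0 ≤ u t x)
    (h1 : ∀ t > 0, ∫ x, ν x * u t x = 1) {t : ℝ} (ht : 0 < t) (x : ℝ) : cdfF ν u t x ≤ 1 := by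
  have hi : Integrable (fun x => ν x * u t x) := integrable_of_integral_eq_one (h1 t ht)
  rw [← h1 t ht]
  exact setIntegral_le_integral hi
    (Eventually.of_forall fun z => mul_nonneg (hν0 z).le (hu0 t ht z))

theorem cdf_top (h1 : ∀ t > 0, ∫ x, ν x * u t x = 1) {t : ℝ} (ht : 0 < t) :
    Tendsto (cdfF ν u t) atTop (𝓝 1) := by
  have hi : Integrable (fun x => ν x * u t x) := integrable_of_integral_eq_one (h1 t ht)
  rw [← h1 t ht]
  exact (aecover_Iic tendsto_id).integral_tendsto_of_countably_generated hi

theorem cdf_cont (hν : Continuous ν) (hν0 : ∀ x, 0 < ν x) (huc : ∀ t > 0, Continuous (u t))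
    (hut : ∀ t > 0, ∀ x, ContinuousAt (fun τ => u τ x) t)
    (hu0 : ∀ t > 0, ∀ x, 0 ≤ u t x) (h1 : ∀ t > 0, ∫ x, ν x * u t x = 1) {t0 : ℝ} (ht0 : 0 < t0)
    (x0 : ℝ) : ContinuousAt (fun p : ℝ × ℝ => cdfF ν u p.1 p.2) (t0, x0) := by
  have hi : ∀ t > 0, Integrable (fun x => ν x * u t x) := fun t ht =>
    integrable_of_integral_eq_one (h1 t ht)
  have hdiff : ∀ t > 0, ∀ x, |cdfF ν u t x - cdfF ν u t0 x| ≤ ∫ x, ν x * |u t x - u t0 x| := by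
    intro t ht x
    unfold cdfF
    rw [← integral_sub (hi t ht).integrableOn (hi t0 ht0).integrableOn]
    have hd : Integrable (fun x => |ν x * u t x - ν x * u t0 x|) := ((hi t ht).sub (hi t0 ht0)).abs
    calc _ ≤ ∫ z in Iic x, |ν z * u t z - ν z * u t0 z| := abs_integral_le_integral_abs
      _ ≤ ∫ z, |ν z * u t z - ν z * u t0 z| :=
        setIntegral_le_integral hd (Eventually.of_forall fun z => abs_nonneg _)
      _ = _ := by
        congr 1
        funext z
        rw [← mul_sub, abs_mul, abs_of_pos (hν0 z)]
  have hs := scheffe hν0 hut hu0 h1 ht0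
  have hc := (cdf_deriv hν huc h1 ht0 x0).continuousAt
  rw [ContinuousAt, Metric.tendsto_nhds]
  intro ε hε
  have e1 : ∀ᶠ p : ℝ × ℝ in 𝓝 (t0, x0), ∫ x, ν x * |u p.1 x - u t0 x| < ε / 2 :=
    (continuousAt_fst (p := (t0, x0))).eventually (hs.eventually_lt_const (by linarith))
  have e2 : ∀ᶠ p : ℝ × ℝ in 𝓝 (t0, x0), 0 < p.1 :=
    (continuousAt_fst (p := (t0, x0))).eventually (lt_mem_nhds ht0)
  have e3 : ∀ᶠ p : ℝ × ℝ in 𝓝 (t0, x0), dist (cdfF ν u t0 p.2) (cdfF ν u t0 x0) < ε / 2 :=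
    (continuousAt_snd (p := (t0, x0))).eventually (Metric.tendsto_nhds.1 hc.tendsto _ (by linarith))
  filter_upwards [e1, e2, e3] with p h1 h2 h3
  have h4 := hdiff p.1 h2 p.2
  rw [← Real.dist_eq] at h4
  have := dist_triangle (cdfF ν u p.1 p.2) (cdfF ν u t0 p.2) (cdfF ν u t0 x0)
  linarith

theorem cdf_tcont (hν : Continuous ν) (hν0 : ∀ x, 0 < ν x) (huc : ∀ t > 0, Continuous (u t))
    (hut : ∀ t > 0, ∀ x, ContinuousAt (fun τ => u τ x) t)
    (hu0 : ∀ t > 0, ∀ x, 0 ≤ u t x) (h1 : ∀ t > 0, ∫ x, ν x * u t x = 1)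
    (x : ℝ) : ContinuousOn (fun t => cdfF ν u t x) (Ioi 0) := by
  intro t ht
  exact (ContinuousAt.comp (f := fun τ : ℝ => (τ, x)) (g := fun p : ℝ × ℝ => cdfF ν u p.1 p.2)
    (cdf_cont hν hν0 huc hut hu0 h1 ht x) (by fun_prop)).continuousWithinAt

theorem cdf_avg_deriv (hν : Continuous ν) (hν0 : ∀ x, 0 < ν x) (huc : ∀ t > 0, Continuous (u t))
    (hut : ∀ t > 0, ∀ x, ContinuousAt (fun τ => u τ x) t)
    (hu0 : ∀ t > 0, ∀ x, 0 ≤ u t x) (h1 : ∀ t > 0, ∫ x, ν x * u t x = 1)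
    (hj : ∀ t > 0, ∀ x, ContinuousAt (fun p : ℝ × ℝ => u p.1 p.2) (t, x))
    {t h : ℝ} (ht : 0 < t) (hh : 0 < h) (x : ℝ) :
    HasDerivAt (fun ξ => ∫ τ in t..t + h, cdfF ν u τ ξ) (ν x * ∫ τ in t..t + h, u τ x) x := by
  have hpos : ∀ τ : ℝ, 0 < max τ t := fun τ => lt_max_of_lt_right ht
  have := param_deriv (G := fun ξ τ => cdfF ν u (max τ t) ξ) (Gt := fun ξ τ => ν ξ * u (max τ t) ξ)
    (fun ξ => by
      rw [continuous_iff_continuousAt]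
      intro τ
      exact ContinuousAt.comp (f := fun τ : ℝ => (max τ t, ξ)) (g := fun p : ℝ × ℝ => cdfF ν u p.1 p.2)
        (cdf_cont hν hν0 huc hut hu0 h1 (hpos τ) ξ) (by fun_prop))
    (by
      rw [continuous_iff_continuousAt]
      intro p
      refine ContinuousAt.mul (by fun_prop) ?_
      exact ContinuousAt.comp (f := fun p : ℝ × ℝ => (max p.2 t, p.1)) (g := fun p : ℝ × ℝ => u p.1 p.2)
        (hj _ (hpos p.2) p.1) (by fun_prop))
    (fun ξ τ => cdf_deriv hν huc h1 (hpos τ) ξ) t (t + h) x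
  have hcg : ∀ f : ℝ → ℝ, ∫ τ in t..t + h, f (max τ t) = ∫ τ in t..t + h, f τ := by
    intro f
    apply intervalIntegral.integral_congr
    intro τ hτ
    rw [uIcc_of_le (by linarith)] at hτ
    simp only
    rw [max_eq_left hτ.1]
  have e1 : (fun ξ => ∫ τ in t..t + h, cdfF ν u τ ξ) = fun ξ => ∫ τ in t..t + h, cdfF ν u (max τ t) ξ := by
    funext ξ
    exact (hcg (fun τ => cdfF ν u τ ξ)).symm
  rw [e1, ← intervalIntegral.integral_const_mul]
  refine this.congr_deriv ?_
  exact hcg (fun τ => ν x * u τ x)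

/-- The flux constant vanishes. -/
theorem flux_zero {μ k W h : ℝ} {U Ux Ψ r : ℝ → ℝ} (hμ : 1 ≤ μ) (hW : 0 ≤ W)
    (hν1 : ∀ x, 1 / μ ≤ ν x) (hν2 : ∀ x, ν x ≤ μ) (ha1 : ∀ x, 1 / μ ≤ a x) (ha2 : ∀ x, a x ≤ μ)
    (hU : ∀ x, HasDerivAt U (Ux x) x) (hU0 : ∀ x, 0 ≤ U x)
    (hΨ : ∀ x, HasDerivAt Ψ (ν x * U x) x) (hΨ0 : ∀ x, 0 ≤ Ψ x) (hΨ1 : ∀ x, Ψ x ≤ h)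
    (hr : Tendsto r atTop (𝓝 0)) (hk : ∀ x, ν x * a x * Ux x - W * U x = r x + k) : k = 0 := by
  have hμ0 : 0 < μ := by linarith
  have hi : 0 < 1 / μ := by positivity
  have hνp : ∀ x, 0 < ν x := fun x => hi.trans_le (hν1 x)
  have hap : ∀ x, 0 < a x := fun x => hi.trans_le (ha1 x)
  have hprod : ∀ x, ν x * a x ≤ μ ^ 2 := fun x => by
    rw [pow_two]; exact mul_le_mul (hν2 x) (ha2 x) (hap x).le hμ0.le
  have hprod2 : ∀ x, 1 ≤ μ ^ 2 * (ν x * a x) := fun x => by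
    have h2 := mul_le_mul (hν1 x) (ha1 x) hi.le (hνp x).le
    calc 1 = μ ^ 2 * (1 / μ * (1 / μ)) := by field_simp
      _ ≤ _ := by gcongr
  have hΨm : ∀ x, 1 ≤ μ * ν x := fun x => by
    calc 1 = μ * (1 / μ) := by field_simp
      _ ≤ _ := by gcongr; exact hν1 x
  rcases lt_trichotomy k 0 with hk0 | hk0 | hk0
  · exfalso
    obtain ⟨x0, hx0⟩ := eventually_atTop.1 (hr.eventually_lt_const (show 0 < -k / 2 by linarith))
    set δ := -k / (2 * μ ^ 2) with hδ
    have hδ0 : 0 < δ := by have : 0 < -k := by linarith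
                           positivity
    have hanti : AntitoneOn (fun x => U x - W * μ ^ 3 * Ψ x + δ * x) (Ici x0) := by
      have hd : ∀ x, HasDerivAt (fun x => U x - W * μ ^ 3 * Ψ x + δ * x)
          (Ux x - W * μ ^ 3 * (ν x * U x) + δ * 1) x := fun x =>
        ((hU x).sub ((hΨ x).const_mul _)).add ((hasDerivAt_id x).const_mul δ)
      apply antitoneOn_of_deriv_nonpos (convex_Ici x0)
      · exact fun x _ => (hd x).continuousAt.continuousWithinAt
      · exact fun x _ => (hd x).differentiableAt.differentiableWithinAt
      · intro x hx
        rw [interior_Ici] at hx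
        rw [(hd x).deriv]
        have h1 := hx0 x (le_of_lt hx)
        have h2 := hk x
        have p := mul_pos (hνp x) (hap x)
        have h3 : ν x * a x * (Ux x - W * μ ^ 3 * (ν x * U x) + δ * 1) ≤ 0 := by
          have e : ν x * a x * Ux x = W * U x + r x + k := by linarith
          have e2 : ν x * a x * δ ≤ -k / 2 := by
            calc ν x * a x * δ ≤ μ ^ 2 * δ := by gcongr; exact hprod x
              _ = -k / 2 := by rw [hδ]; field_simp
          have e3 : W * U x ≤ ν x * a x * (W * μ ^ 3 * (ν x * U x)) := by
            have q1 := hprod2 x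
            have q2 := hΨm x
            have : 1 * 1 ≤ (μ ^ 2 * (ν x * a x)) * (μ * ν x) :=
              mul_le_mul q1 q2 (by norm_num) (by positivity)
            have := mul_le_mul_of_nonneg_left this (mul_nonneg hW (hU0 x))
            nlinarith
          nlinarith
        by_contra hcon
        push Not at hcon
        have := mul_pos p hcon
        linarith
    set X := max x0 ((U x0 - W * μ ^ 3 * Ψ x0 + δ * x0 + W * μ ^ 3 * h) / δ + 1) with hX
    have h1 := hanti (self_mem_Ici) (mem_Ici.2 (le_max_left _ _) : X ∈ Ici x0) (le_max_left _ _)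
    simp only at h1
    have h2 : (U x0 - W * μ ^ 3 * Ψ x0 + δ * x0 + W * μ ^ 3 * h) / δ + 1 ≤ X := le_max_right _ _
    have h3 : (U x0 - W * μ ^ 3 * Ψ x0 + δ * x0 + W * μ ^ 3 * h) / δ < X := by linarith
    rw [div_lt_iff₀ hδ0] at h3
    have h4 := hU0 X
    have h5 : W * μ ^ 3 * Ψ X ≤ W * μ ^ 3 * h := mul_le_mul_of_nonneg_left (hΨ1 X) (by positivity)
    linarith
  · exact hk0
  · exfalso
    obtain ⟨x0, hx0⟩ := eventually_atTop.1 (hr.eventually_const_lt (show -k / 2 < 0 by linarith))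
    set δ := k / (2 * μ ^ 2) with hδ
    have hδ0 : 0 < δ := by positivity
    have hUx : ∀ x ≥ x0, δ ≤ Ux x := by
      intro x hx
      have h1 := hx0 x hx
      have h2 := hk x
      have p := mul_pos (hνp x) (hap x)
      have h3 : k / 2 ≤ ν x * a x * Ux x := by
        have := mul_nonneg hW (hU0 x)
        linarith
      have h5 : 0 < Ux x := by
        by_contra hcon
        push Not at hcon
        have := mul_nonpos_of_nonneg_of_nonpos p.le hcon
        linarith
      have h4 : k / 2 ≤ μ ^ 2 * Ux x := h3.trans (by gcongr; exact hprod x)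
      rw [hδ, div_le_iff₀ (by positivity)]
      linarith
    have hm1 : MonotoneOn (fun x => U x - δ * x) (Ici x0) := by
      have hd : ∀ x, HasDerivAt (fun x => U x - δ * x) (Ux x - δ * 1) x := fun x =>
        (hU x).sub ((hasDerivAt_id x).const_mul δ)
      apply monotoneOn_of_deriv_nonneg (convex_Ici x0)
      · exact fun x _ => (hd x).continuousAt.continuousWithinAt
      · exact fun x _ => (hd x).differentiableAt.differentiableWithinAt
      · intro x hx
        rw [interior_Ici] at hx
        rw [(hd x).deriv]
        have := hUx x (le_of_lt hx)
        linarith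
    have hU2 : ∀ x ≥ x0 + 1, δ ≤ U x := by
      intro x hx
      have h1 := hm1 (self_mem_Ici) (show x ∈ Ici x0 from by show x0 ≤ x; linarith) (by linarith)
      simp only at h1
      have := hU0 x0
      nlinarith
    have hm2 : MonotoneOn (fun x => Ψ x - δ / μ * x) (Ici (x0 + 1)) := by
      have hd : ∀ x, HasDerivAt (fun x => Ψ x - δ / μ * x) (ν x * U x - δ / μ * 1) x := fun x =>
        (hΨ x).sub ((hasDerivAt_id x).const_mul (δ / μ))
      apply monotoneOn_of_deriv_nonneg (convex_Ici (x0 + 1))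
      · exact fun x _ => (hd x).continuousAt.continuousWithinAt
      · exact fun x _ => (hd x).differentiableAt.differentiableWithinAt
      · intro x hx
        rw [interior_Ici] at hx
        rw [(hd x).deriv]
        have h2 := hU2 x (le_of_lt hx)
        have h3 := mul_le_mul (hν1 x) h2 hδ0.le (hνp x).le
        have : 1 / μ * δ = δ / μ := by ring
        linarith
    have hδμ : 0 < δ / μ := by positivity
    have hX0 : x0 + 1 ≤ x0 + 1 + (h + 1) / (δ / μ) := by
      have : 0 ≤ h := (hΨ0 0).trans (hΨ1 0)
      have : 0 ≤ (h + 1) / (δ / μ) := by positivity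
      linarith
    have h1 := hm2 (self_mem_Ici) (show x0 + 1 + (h + 1) / (δ / μ) ∈ Ici (x0 + 1) from hX0) hX0
    simp only at h1
    have h2 := hΨ1 (x0 + 1 + (h + 1) / (δ / μ))
    have h3 := hΨ0 (x0 + 1)
    have h4 : δ / μ * (x0 + 1 + (h + 1) / (δ / μ)) = δ / μ * (x0 + 1) + (h + 1) := by
      rw [mul_add (δ / μ) (x0 + 1), mul_div_cancel₀ _ hδμ.ne']
    linarith

end


section
variable {ν a : ℝ → ℝ} {W : ℝ} {u ut ux q : ℝ → ℝ → ℝ}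

theorem adm_of {μ : ℝ} {X : ℝ → ℝ} (hμ : 1 ≤ μ) (hν : Continuous ν) (ha : Continuous a)
    (hνe : Elliptic μ ν) (hae : Elliptic μ a) (hW : 0 ≤ W)
    (hsol : ∀ t > 0, ∀ x : ℝ, HasDerivAt (fun τ => u τ x) (ut t x) t ∧
      HasDerivAt (fun ξ => u t ξ) (ux t x) x ∧
      HasDerivAt (fun ξ => ν ξ * a ξ * ux t ξ) (q t x) x ∧
      ν x * ut t x - q t x + W * ux t x = 0)
    (hu0 : ∀ t > 0, ∀ x, 0 ≤ u t x) (h1 : ∀ t > 0, ∫ x, ν x * u t x = 1)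
    (hX : ∀ s, HasDerivAt X (1 / ν (X s)) s) :
    Adm (fun n => a (X n) * ν (X n) ^ 2) W (fun t n => cdfF ν u t (X n)) := by
  have hμ0 : 0 < μ := by linarith
  have hi : 0 < 1 / μ := by positivity
  have hν0 : ∀ x, 0 < ν x := fun x => hi.trans_le (hνe x).1
  have ha0 : ∀ x, 0 < a x := fun x => hi.trans_le (hae x).1
  have hut : ∀ t > 0, ∀ x, ContinuousAt (fun τ => u τ x) t := fun t ht x => (hsol t ht x).1.continuousAt
  have huc : ∀ t > 0, Continuous (u t) := fun t ht =>
    continuous_iff_continuousAt.2 fun x => (hsol t ht x).2.1.continuousAt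
  have hXc : Continuous X := continuous_iff_continuousAt.2 fun x => (hX x).continuousAt
  obtain ⟨hj, hU⟩ := core_x hν ha hν0 ha0 hsol hu0 h1
  refine ⟨?_, ?_, ?_, ?_⟩
  · intro t ht n
    exact ContinuousAt.comp (f := fun p : ℝ × ℝ => (p.1, X p.2)) (g := fun p : ℝ × ℝ => cdfF ν u p.1 p.2)
      (x := (t, n)) (cdf_cont hν hν0 huc hut hu0 h1 ht (X n)) (by fun_prop)
  · exact fun t ht n => cdf_nn hν0 hu0 ht _
  · exact fun t ht n => cdf_le1 hν0 hu0 h1 ht _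
  · intro h hh
    have hU' : ∀ t : ℝ, ∃ Ux : ℝ → ℝ, 0 < t → ∀ x,
        HasDerivAt (fun ξ => ∫ τ in t..t + h, u τ ξ) (Ux x) x ∧
        HasDerivAt (fun ξ => ν ξ * a ξ * Ux ξ) (W * Ux x + ν x * (u (t + h) x - u t x)) x := by
      intro t
      by_cases ht : 0 < t
      · obtain ⟨Ux, hUx⟩ := hU t (t + h) ht (by linarith)
        exact ⟨Ux, fun _ => hUx⟩
      · exact ⟨0, fun h => absurd h ht⟩
    choose Ux hUx using hU'
    refine ⟨fun t n => h⁻¹ * ∫ τ in t..t + h, u τ (X n), fun t n => h⁻¹ * (Ux t (X n) / ν (X n)),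
      fun t ht n => ?_⟩
    have hth : 0 < t + h := by linarith
    have hflux : ∀ x, ν x * a x * Ux t x - W * (∫ τ in t..t + h, u τ x) =
        cdfF ν u (t + h) x - cdfF ν u t x := by
      set Φ : ℝ → ℝ := fun x => (ν x * a x * Ux t x - W * (∫ τ in t..t + h, u τ x)) -
        (cdfF ν u (t + h) x - cdfF ν u t x) with hΦ
      have hd : ∀ x, HasDerivAt Φ 0 x := by
        intro x
        obtain ⟨d1, d2⟩ := hUx t ht x
        refine ((d2.sub (d1.const_mul W)).sub ((cdf_deriv hν huc h1 hth x).sub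
          (cdf_deriv hν huc h1 ht x))).congr_deriv ?_
        ring
      have hconst : ∀ x, Φ x = Φ 0 := fun x =>
        is_const_of_deriv_eq_zero (fun x => (hd x).differentiableAt) (fun x => (hd x).deriv) x 0
      have hz : Φ 0 = 0 := by
        refine flux_zero (ν := ν) (a := a) (U := fun ξ => ∫ τ in t..t + h, u τ ξ) (Ux := Ux t)
          (Ψ := fun ξ => ∫ τ in t..t + h, cdfF ν u τ ξ) (h := h) (W := W)
          (r := fun x => cdfF ν u (t + h) x - cdfF ν u t x) hμ hW (fun x => (hνe x).1)
          (fun x => (hνe x).2) (fun x => (hae x).1) (fun x => (hae x).2)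
          (fun x => (hUx t ht x).1) ?_
          (fun x => cdf_avg_deriv hν hν0 huc hut hu0 h1 hj ht hh x) ?_ ?_ ?_ ?_
        · intro x
          exact intervalIntegral.integral_nonneg (by linarith) fun τ hτ => hu0 τ (ht.trans_le hτ.1) x
        · intro x
          exact intervalIntegral.integral_nonneg (by linarith) fun τ hτ =>
            cdf_nn hν0 hu0 (ht.trans_le hτ.1) x
        · intro x
          have hc := (cdf_tcont hν hν0 huc hut hu0 h1 x).mono
            (show uIcc t (t + h) ⊆ Ioi 0 by
              rw [uIcc_of_le (by linarith)]; exact fun y hy => ht.trans_le hy.1)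
          have := intervalIntegral.integral_mono_on (a := t) (b := t + h) (μ := volume) (by linarith)
            hc.intervalIntegrable (intervalIntegrable_const (c := (1 : ℝ)))
            (fun τ hτ => cdf_le1 hν0 hu0 h1 (ht.trans_le hτ.1) x)
          simpa using this
        · have := (cdf_top h1 hth).sub (cdf_top h1 ht)
          simpa using this
        · intro x
          have := hconst x
          simp only [hΦ] at this ⊢
          linarith
      intro x
      have := hconst x
      rw [hz] at this
      simp only [hΦ] at this
      linarith
    have p1 := hν0 (X n)
    have p2 := ha0 (X n)
    refine ⟨?_, ?_, ?_⟩
    · have := (avg_time_deriv (cdf_tcont hν hν0 huc hut hu0 h1 (X n)) ht hh).const_mul h⁻¹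
      refine this.congr_deriv ?_
      rw [← hflux (X n)]
      field_simp
    · have := ((cdf_avg_deriv hν hν0 huc hut hu0 h1 hj ht hh (X n)).comp n (hX n)).const_mul h⁻¹
      refine this.congr_deriv ?_
      field_simp
    · have := (((hUx t ht (X n)).1).comp n (hX n)).const_mul h⁻¹
      refine this.congr_deriv ?_
      ring

theorem cdf_init_right {P : ℝ → ℝ → ℝ → ℝ} (hP : IsFundSol ν a W P) (hν0 : ∀ x, 0 < ν x) {y z : ℝ}
    (hz : y < z) : Tendsto (fun t => cdfF ν (fun t x => P t x y) t z) (𝓝[>] 0) (𝓝 1) := by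
  obtain ⟨-, hpos, hmass, hlim, -⟩ := hP
  have hzy : 0 < z - y := by linarith
  set φ : ℝ → ℝ := fun x => max 0 (min 1 ((z - x) / (z - y))) with hφ
  have hφc : Continuous φ := by fun_prop
  have h0 : ∀ x, 0 ≤ φ x := fun x => le_max_left _ _
  have h1 : ∀ x, φ x ≤ 1 := fun x => max_le zero_le_one (min_le_left _ _)
  have hl := hlim y φ hφc ⟨1, fun x => by rw [abs_of_nonneg (h0 x)]; exact h1 x⟩
  have hφy : φ y = 1 := by simp [hφ, div_self hzy.ne']
  rw [hφy] at hl
  refine tendsto_of_tendsto_of_tendsto_of_le_of_le' hl tendsto_const_nhds ?_ ?_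
  · filter_upwards [self_mem_nhdsWithin] with t ht
    have ht0 : 0 < t := ht
    have hi : Integrable (fun x => ν x * P t x y) := integrable_of_integral_eq_one (hmass y t ht0)
    unfold cdfF
    rw [← integral_indicator measurableSet_Iic]
    refine integral_mono_of_nonneg (Eventually.of_forall fun x =>
      mul_nonneg (mul_nonneg (hν0 x).le (hpos y t ht0 x)) (h0 x)) (hi.indicator measurableSet_Iic)
      (Eventually.of_forall fun x => ?_)
    have hnn : 0 ≤ ν x * P t x y := mul_nonneg (hν0 x).le (hpos y t ht0 x)
    by_cases hx : x ∈ Iic z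
    · simp only [indicator_of_mem hx]
      exact mul_le_of_le_one_right hnn (h1 x)
    · simp only [indicator_of_notMem hx]
      have hx' : z < x := not_le.1 hx
      have : φ x = 0 := by
        simp only [hφ]
        exact max_eq_left ((min_le_right _ _).trans (div_nonpos_of_nonpos_of_nonneg (by linarith) hzy.le))
      rw [this, mul_zero]
  · filter_upwards [self_mem_nhdsWithin] with t ht
    exact cdf_le1 hν0 (hpos y) (hmass y) ht z

theorem cdf_init_left {P : ℝ → ℝ → ℝ → ℝ} (hP : IsFundSol ν a W P) (hν0 : ∀ x, 0 < ν x) {y z : ℝ}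
    (hz : z < y) : Tendsto (fun t => cdfF ν (fun t x => P t x y) t z) (𝓝[>] 0) (𝓝 0) := by
  obtain ⟨-, hpos, hmass, hlim, -⟩ := hP
  have hzy : 0 < y - z := by linarith
  set φ : ℝ → ℝ := fun x => max 0 (min 1 ((y - x) / (y - z))) with hφ
  have hφc : Continuous φ := by fun_prop
  have h0 : ∀ x, 0 ≤ φ x := fun x => le_max_left _ _
  have h1 : ∀ x, φ x ≤ 1 := fun x => max_le zero_le_one (min_le_left _ _)
  have hl := hlim y φ hφc ⟨1, fun x => by rw [abs_of_nonneg (h0 x)]; exact h1 x⟩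
  have hφy : φ y = 0 := by simp [hφ]
  rw [hφy] at hl
  refine tendsto_of_tendsto_of_tendsto_of_le_of_le' tendsto_const_nhds hl ?_ ?_
  · filter_upwards [self_mem_nhdsWithin] with t ht
    exact cdf_nn hν0 (hpos y) ht z
  · filter_upwards [self_mem_nhdsWithin] with t ht
    have ht0 : 0 < t := ht
    have hi : Integrable (fun x => ν x * P t x y) := integrable_of_integral_eq_one (hmass y t ht0)
    unfold cdfF
    rw [← integral_indicator measurableSet_Iic]
    refine integral_mono_of_nonneg (Eventually.of_forall fun x =>
      indicator_nonneg (fun x _ => mul_nonneg (hν0 x).le (hpos y t ht0 x)) x) ?_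
      (Eventually.of_forall fun x => ?_)
    · refine hi.mul_bdd (c := 1) hφc.aestronglyMeasurable (Eventually.of_forall fun x => ?_)
      rw [Real.norm_eq_abs, abs_of_nonneg (h0 x)]; exact h1 x
    · have hnn : 0 ≤ ν x * P t x y := mul_nonneg (hν0 x).le (hpos y t ht0 x)
      by_cases hx : x ∈ Iic z
      · simp only [indicator_of_mem hx]
        have : φ x = 1 := by
          simp only [hφ]
          have hx' : x ≤ z := hx
          have : 1 ≤ (y - x) / (y - z) := by rw [le_div_iff₀ hzy]; linarith
          rw [min_eq_left this]
          exact max_eq_right zero_le_one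
        rw [this, mul_one]
      · simp only [indicator_of_notMem hx]
        exact mul_nonneg hnn (h0 x)

theorem lip_of_deriv {f f' : ℝ → ℝ} {K : ℝ} (hf : ∀ x, HasDerivAt f (f' x) x) (hb : ∀ x, |f' x| ≤ K)
    (x y : ℝ) : |f x - f y| ≤ K * |x - y| := by
  have := Convex.norm_image_sub_le_of_norm_hasDerivWithin_le (f := f) (f' := f') (s := univ) (C := K)
    (x := y) (y := x) (fun z _ => (hf z).hasDerivWithinAt) (fun z _ => hb z) convex_univ
    (mem_univ _) (mem_univ _)
  simpa [Real.norm_eq_abs] using this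

/-- Comparison of the corrector with the mass coordinate. -/
theorem corr_cmp {μ W t x y : ℝ} {T S X : ℝ → ℝ} (hμ : 1 ≤ μ) (hνe : Elliptic μ ν)
    (hae : Elliptic μ a) (hW : 0 ≤ W) (hT : IsCorrector μ ν a W T)
    (hS : ∀ x, HasDerivAt S (ν x) x) (hX : ∀ s, HasDerivAt X (1 / ν (X s)) s)
    (hXS : ∀ x, X (S x) = x) (ht : 0 < t) :
    |T x - T y - W * t| ≤ 2 * μ ^ 7 * (|S x - S y - W * t| + Real.sqrt t) := by
  obtain ⟨-, T', hT1, hT2, hT3⟩ := hT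
  have hμ0 : 0 < μ := by linarith
  have hi : 0 < 1 / μ := by positivity
  have hν0 : ∀ x, 0 < ν x := fun x => hi.trans_le (hνe x).1
  have ha0 : ∀ x, 0 < a x := fun x => hi.trans_le (hae x).1
  have hT'0 : ∀ x, 0 ≤ T' x := fun x => le_trans (by positivity) (hT3 x).1
  set r := Real.sqrt t with hr
  have hr0 : 0 < r := Real.sqrt_pos.2 ht
  have hr2 : r ^ 2 = t := Real.sq_sqrt ht.le
  have hμ7 : 1 ≤ μ ^ 7 := one_le_pow₀ hμ
  have hμ67 : μ ^ 6 ≤ μ ^ 7 := pow_le_pow_right₀ hμ (by norm_num)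
  have hμ6 : 1 ≤ μ ^ 6 := one_le_pow₀ hμ
  have hD := abs_nonneg (S x - S y - W * t)
  rcases le_or_gt 1 (W * r) with h | h
  · set Φ : ℝ → ℝ := fun x => a x * ν x * T' x - W * (T x - S x) with hΦ
    have hd : ∀ x, HasDerivAt Φ 0 x := by
      intro x
      refine ((hT2 x).sub (((hT1 x).sub (hS x)).const_mul W)).congr_deriv ?_
      ring
    have hc : Φ x = Φ y :=
      is_const_of_deriv_eq_zero (fun x => (hd x).differentiableAt) (fun x => (hd x).deriv) x y
    have hb : ∀ x, 0 ≤ a x * ν x * T' x ∧ a x * ν x * T' x ≤ μ ^ 7 := by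
      intro x
      have h1 := hν0 x
      have h2 := ha0 x
      have h3 := hT'0 x
      refine ⟨by positivity, ?_⟩
      calc a x * ν x * T' x ≤ μ * μ * μ ^ 5 :=
            mul_le_mul (mul_le_mul (hae x).2 (hνe x).2 h1.le hμ0.le) (hT3 x).2 h3 (by positivity)
        _ = μ ^ 7 := by ring
    have hw : W * |(T x - T y) - (S x - S y)| ≤ μ ^ 7 := by
      rw [← abs_of_nonneg hW, ← abs_mul]
      have e : W * ((T x - T y) - (S x - S y)) = a x * ν x * T' x - a y * ν y * T' y := by
        simp only [hΦ] at hc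
        linarith
      rw [e, abs_le]
      have := hb x
      have := hb y
      constructor <;> linarith
    have h2 : |(T x - T y) - (S x - S y)| ≤ μ ^ 7 * r := by
      have := abs_nonneg ((T x - T y) - (S x - S y))
      calc _ ≤ (W * r) * |(T x - T y) - (S x - S y)| := le_mul_of_one_le_left this h
        _ = (W * |(T x - T y) - (S x - S y)|) * r := by ring
        _ ≤ _ := by gcongr
    have h3 : |T x - T y - W * t| ≤ |(T x - T y) - (S x - S y)| + |S x - S y - W * t| := by
      have e : T x - T y - W * t = ((T x - T y) - (S x - S y)) + (S x - S y - W * t) := by ring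
      rw [e]
      exact abs_add_le _ _
    nlinarith
  · have hWt : W * t ≤ r := by
      rw [← hr2]
      nlinarith
    have hWt0 : 0 ≤ W * t := by positivity
    have l1 := lip_of_deriv (K := μ ^ 5) hT1 (fun x => by rw [abs_of_nonneg (hT'0 x)]; exact (hT3 x).2) x y
    have l2 := lip_of_deriv (K := μ) hX (fun s => by
      have := hν0 (X s)
      rw [abs_of_pos (by positivity)]
      have := (hνe (X s)).1
      rw [div_le_iff₀ (hν0 _)]
      rw [div_le_iff₀ hμ0] at this
      linarith) (S x) (S y)
    rw [hXS, hXS] at l2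
    have l3 : |S x - S y| ≤ |S x - S y - W * t| + r := by
      have := abs_add_le (S x - S y - W * t) (W * t)
      rw [sub_add_cancel, abs_of_nonneg hWt0] at this
      linarith
    have l4 : |T x - T y - W * t| ≤ |T x - T y| + r := by
      have := abs_sub (T x - T y) (W * t)
      rw [abs_of_nonneg hWt0] at this
      linarith
    have l5 : |T x - T y| ≤ μ ^ 6 * (|S x - S y - W * t| + r) := by
      calc |T x - T y| ≤ μ ^ 5 * |x - y| := l1
        _ ≤ μ ^ 5 * (μ * (|S x - S y - W * t| + r)) := by
          refine mul_le_mul_of_nonneg_left (l2.trans ?_) (by positivity)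
          exact mul_le_mul_of_nonneg_left l3 hμ0.le
        _ = _ := by ring
    have l6 : μ ^ 6 * (|S x - S y - W * t| + r) ≤ μ ^ 7 * (|S x - S y - W * t| + r) := by gcongr
    have l7 : r ≤ μ ^ 7 * (|S x - S y - W * t| + r) := by nlinarith
    linarith

theorem mass_bound {μ : ℝ} {P : ℝ → ℝ → ℝ → ℝ} {S X : ℝ → ℝ} (hμ : 1 ≤ μ) (hν : Continuous ν)
    (ha : Continuous a) (hνe : Elliptic μ ν) (hae : Elliptic μ a) (hW : 0 ≤ W)
    (hP : IsFundSol ν a W P)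
    (hX : ∀ s, HasDerivAt X (1 / ν (X s)) s)
    (hXS : ∀ x, X (S x) = x) (hXm : StrictMono X) {t : ℝ} (ht : 0 < t) (x y : ℝ) :
    P t x y ≤ 4 * (2 + 1 / (1 / μ ^ 3)) / Real.sqrt t * (Real.exp (1 / (2 * μ ^ 3)) *
      Real.exp (-(S x - S y - W * t) ^ 2 / (8 * μ ^ 3 * t))) := by
  have hμ0 : 0 < μ := by linarith
  have hi : 0 < 1 / μ := by positivity
  have hν0 : ∀ x, 0 < ν x := fun x => hi.trans_le (hνe x).1
  have ha0 : ∀ x, 0 < a x := fun x => hi.trans_le (hae x).1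
  obtain ⟨ut, ux, q, hsol⟩ := hP.1 y
  have hsol' : ∀ t > 0, ∀ x : ℝ, HasDerivAt (fun τ => P τ x y) (ut t x) t ∧
      HasDerivAt (fun ξ => P t ξ y) (ux t x) x ∧
      HasDerivAt (fun ξ => ν ξ * a ξ * ux t ξ) (q t x) x ∧
      ν x * ut t x - q t x + W * ux t x = 0 := fun t ht x => hsol t ht x
  have hu0 := hP.2.1 y
  have h1 := hP.2.2.1 y
  have H := adm_of (u := fun t x => P t x y) hμ hν ha hνe hae hW hsol' hu0 h1 hX
  have huc : ∀ t > 0, Continuous (fun x => P t x y) := fun t ht =>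
    continuous_iff_continuousAt.2 fun x => (hsol t ht x).2.1.continuousAt
  have hd : HasDerivAt (fun n => cdfF ν (fun t x => P t x y) t (X n)) (P t x y) (S x) := by
    have h2 := cdf_deriv (u := fun t x => P t x y) hν huc h1 ht (X (S x))
    have := h2.comp (S x) (hX (S x))
    refine this.congr_deriv ?_
    rw [hXS]
    have := hν0 x
    field_simp
  refine point_bound H (by positivity) ?_ ?_ ht
    (fun t ht x y hxy => cdf_mono hν0 hu0 h1 ht (hXm.monotone hxy)) ?_ ?_ hd
  · intro n
    calc 1 / μ ^ 3 = 1 / μ * (1 / μ) ^ 2 := by field_simp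
      _ ≤ _ := mul_le_mul (hae _).1 (pow_le_pow_left₀ hi.le (hνe _).1 2) (by positivity) (ha0 _).le
  · intro n
    calc a (X n) * ν (X n) ^ 2 ≤ μ * μ ^ 2 :=
        mul_le_mul (hae _).2 (pow_le_pow_left₀ (hν0 _).le (hνe _).2 2) (by positivity) hμ0.le
      _ = μ ^ 3 := by ring
  · intro κ hκ
    refine cdf_init_right hP hν0 ?_
    conv_lhs => rw [← hXS y]
    exact hXm (by linarith)
  · intro κ hκ
    refine cdf_init_left hP hν0 ?_
    conv_rhs => rw [← hXS y]
    exact hXm (by linarith)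

end

theorem main_aux (μ : ℝ) (hμ : 1 ≤ μ) :
    ∃ C : ℝ, 0 < C ∧ ∀ ν a : ℝ → ℝ, Continuous ν → Continuous a →
      Elliptic μ ν → Elliptic μ a →
      ∀ W : ℝ, 0 ≤ W →
      ∀ T : ℝ → ℝ, IsCorrector μ ν a W T →
      ∀ P : ℝ → ℝ → ℝ → ℝ, IsFundSol ν a W P →
      ∀ t : ℝ, 0 < t → ∀ x y : ℝ,
        P t x y ≤ C / Real.sqrt t *
          Real.exp (-|T x - T y - W * t| ^ 2 / (C * t)) := by
  have hμ0 : 0 < μ := by linarith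
  set Λ := μ ^ 3 with hΛ
  have hΛ0 : 0 < Λ := by positivity
  set c := 2 * μ ^ 7 with hc
  have hc0 : 0 < c := by positivity
  set K := 4 * (2 + 1 / (1 / Λ)) * Real.exp (1 / (2 * Λ)) * Real.exp (1 / (8 * Λ)) with hK
  have hK0 : 0 < K := by positivity
  set C := K + 16 * Λ * c ^ 2 with hC
  have hC0 : 0 < C := by positivity
  refine ⟨C, hC0, ?_⟩
  intro ν a hν ha hνe hae W hW T hT P hP t ht x y
  have hi : 0 < 1 / μ := by positivity
  obtain ⟨S, X, hS, hX, hXS, -, -, hXm⟩ := coord hν hi (fun x => (hνe x).1)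
  have hb := mass_bound hμ hν ha hνe hae hW hP hX hXS hXm ht x y
  have hcmp := corr_cmp (x := x) (y := y) hμ hνe hae hW hT hS hX hXS ht
  set D := S x - S y - W * t with hD
  set E := |T x - T y - W * t| with hE
  set r := Real.sqrt t with hr
  have hr0 : 0 < r := Real.sqrt_pos.2 ht
  have hr2 : r ^ 2 = t := Real.sq_sqrt ht.le
  have hE0 : 0 ≤ E := abs_nonneg _
  have hE2 : E ^ 2 ≤ 2 * c ^ 2 * (D ^ 2 + t) := by
    calc E ^ 2 ≤ (c * (|D| + r)) ^ 2 := pow_le_pow_left₀ hE0 hcmp 2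
      _ = c ^ 2 * (|D| + r) ^ 2 := by ring
      _ ≤ c ^ 2 * (2 * (|D| ^ 2 + r ^ 2)) := by
        gcongr
        nlinarith [sq_nonneg (|D| - r)]
      _ = _ := by rw [sq_abs, hr2]; ring
  have hexp : Real.exp (-D ^ 2 / (8 * Λ * t)) ≤ Real.exp (1 / (8 * Λ)) * Real.exp (-E ^ 2 / (C * t)) := by
    rw [← Real.exp_add]
    apply Real.exp_le_exp.2
    have h1 : E ^ 2 / (C * t) ≤ E ^ 2 / (16 * Λ * c ^ 2 * t) := by
      apply div_le_div_of_nonneg_left (by positivity) (by positivity)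
      gcongr
      linarith
    have h2 : E ^ 2 / (16 * Λ * c ^ 2 * t) ≤ (D ^ 2 + t) / (8 * Λ * t) := by
      rw [div_le_div_iff₀ (by positivity) (by positivity)]
      have := mul_le_mul_of_nonneg_right hE2 (show 0 ≤ 8 * Λ * t by positivity)
      refine this.trans (le_of_eq ?_)
      ring
    have h3 : (D ^ 2 + t) / (8 * Λ * t) = D ^ 2 / (8 * Λ * t) + 1 / (8 * Λ) := by
      field_simp
    rw [neg_div, neg_div]
    linarith
  calc P t x y ≤ _ := hb
    _ ≤ 4 * (2 + 1 / (1 / Λ)) / r * (Real.exp (1 / (2 * Λ)) *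
        (Real.exp (1 / (8 * Λ)) * Real.exp (-E ^ 2 / (C * t)))) := by gcongr
    _ = K / r * Real.exp (-E ^ 2 / (C * t)) := by rw [hK]; ring
    _ ≤ C / r * Real.exp (-E ^ 2 / (C * t)) := by
      gcongr
      have : 0 < 16 * Λ * c ^ 2 := by positivity
      linarith

end helpers

/-- Theorem 1.1 (upper Gaussian bound): for every `μ ≥ 1` there is `C > 0` such that any
fundamental solution `P` of the canonical equation satisfies
`P(t,x,y) ≤ (C/√t)·exp(−|T(x) − T(y) − Wt|²/(Ct))` for all `t > 0`, `x, y ∈ ℝ`. -/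
theorem upper_gaussian_bound (μ : ℝ) (hμ : 1 ≤ μ) :
    ∃ C : ℝ, 0 < C ∧ ∀ ν a : ℝ → ℝ, Continuous ν → Continuous a →
      Elliptic μ ν → Elliptic μ a →
      ∀ W : ℝ, 0 ≤ W →
      ∀ T : ℝ → ℝ, IsCorrector μ ν a W T →
      ∀ P : ℝ → ℝ → ℝ → ℝ, IsFundSol ν a W P →
      ∀ t : ℝ, 0 < t → ∀ x y : ℝ,
        P t x y ≤ C / Real.sqrt t *
          Real.exp (-|T x - T y - W * t| ^ 2 / (C * t)) := by
  exact main_aux μ hμ
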